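/- arXiv:0906.3881 — 8 statements merged into one kernel-verified Lean document; each statement's English description precedes it below -/
import Mathlib

section
/- Property (L) in type AIII: let s and u be semisimple elements of p. Then the centralizers g^s and g^u are conjugate under GL(V) if and only if they are conjugate under K; that is, there exists g ∈ GL(V) with g·g^s·g⁻¹ = g^u if and only if there exists k ∈ K with k·g^s·k⁻¹ = g^u. -/
/-! Property (L) in type AIII: for semisimple `s, u ∈ p`, the centralizers `g^s` and `g^u`
are conjugate under `GL(V)` iff they are conjugate under `K`. -/

namespace SymmetricPairAIII

variable {𝕂 : Type*} [Field 𝕂] {N : ℕ}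

/-- `gl(V)` for `V = 𝕂^N`. -/
abbrev EndV (𝕂 : Type*) [Field 𝕂] (N : ℕ) := Module.End 𝕂 (Fin N → 𝕂)

/-- Semisimple = diagonalizable: the eigenspaces span `V`. -/
def IsSemisimpleE (x : EndV 𝕂 N) : Prop :=
  (⨆ c : 𝕂, LinearMap.ker (x - c • (1 : EndV 𝕂 N))) = ⊤

/-- The centralizer `g^x` of `x` in `gl(V)`. -/
def cent (x : EndV 𝕂 N) : Set (EndV 𝕂 N) := {z | z * x = x * z}

/-- `p = Hom(V_a, V_b) ⊕ Hom(V_b, V_a)`, the `(-1)`-eigenspace of the type AIII involution. -/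
def pAIII (Va Vb : Submodule 𝕂 (Fin N → 𝕂)) : Set (EndV 𝕂 N) :=
  {x | Submodule.map x Va ≤ Vb ∧ Submodule.map x Vb ≤ Va}

/-- `K = {g ∈ GL(V) : g V_a = V_a, g V_b = V_b}`. -/
def KAIII (Va Vb : Submodule 𝕂 (Fin N → 𝕂)) : Set (EndV 𝕂 N)ˣ :=
  {g | Submodule.map (g : EndV 𝕂 N) Va = Va ∧ Submodule.map (g : EndV 𝕂 N) Vb = Vb}

/-- The conjugation action `g.z = g z g⁻¹` of `GL(V)` on `gl(V)`. -/
def conjAct (g : (EndV 𝕂 N)ˣ) (z : EndV 𝕂 N) : EndV 𝕂 N :=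
  (g : EndV 𝕂 N) * z * ((g⁻¹ : (EndV 𝕂 N)ˣ) : EndV 𝕂 N)

end SymmetricPairAIII

open SymmetricPairAIII


namespace SymmetricPairAIII

section Helpers

variable {𝕂 : Type*} [Field 𝕂] {N : ℕ}

/-- The eigenspace. -/
def Eg (x : EndV 𝕂 N) (c : 𝕂) : Submodule 𝕂 (Fin N → 𝕂) := Module.End.eigenspace x c

lemma mem_Eg {x : EndV 𝕂 N} {c : 𝕂} {v : Fin N → 𝕂} : v ∈ Eg x c ↔ x v = c • v :=
  Module.End.mem_eigenspace_iff

lemma iSup_Eg {x : EndV 𝕂 N} (hx : IsSemisimpleE x) : (⨆ c : 𝕂, Eg x c) = ⊤ := by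
  rw [← hx]
  refine iSup_congr fun c => ?_
  exact Module.End.eigenspace_def

/-- Gluing of linear maps along the eigenspaces. -/
lemma glue {x : EndV 𝕂 N} (hx : IsSemisimpleE x) (φ : 𝕂 → EndV 𝕂 N) :
    ∃ g : EndV 𝕂 N, ∀ c, ∀ v ∈ Eg x c, g v = φ c v := by
  classical
  have hI : DirectSum.IsInternal (Eg x) :=
    DirectSum.isInternal_submodule_of_iSupIndep_of_iSup_eq_top
      (Module.End.eigenspaces_iSupIndep x) (iSup_Eg hx)
  let e := LinearEquiv.ofBijective (DirectSum.coeLinearMap (Eg x)) hI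
  refine ⟨(DirectSum.toModule 𝕂 𝕂 (Fin N → 𝕂) fun c => (φ c).comp (Eg x c).subtype).comp
    e.symm.toLinearMap, fun c v hv => ?_⟩
  have : e.symm v = DirectSum.lof 𝕂 𝕂 (fun c => Eg x c) c ⟨v, hv⟩ := by
    rw [LinearEquiv.symm_apply_eq]
    change v = DirectSum.coeLinearMap (Eg x) _
    erw [DirectSum.coeLinearMap_lof]
  change (DirectSum.toModule 𝕂 𝕂 (Fin N → 𝕂) fun c => (φ c).comp (Eg x c).subtype) (e.symm v) = _
  rw [this]
  erw [DirectSum.toModule_lof]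
  rfl

lemma ext_Eg {x : EndV 𝕂 N} (hx : IsSemisimpleE x) {a b : EndV 𝕂 N}
    (h : ∀ c, ∀ v ∈ Eg x c, a v = b v) : a = b := by
  have : (⊤ : Submodule 𝕂 (Fin N → 𝕂)) ≤ LinearMap.eqLocus a b := by
    rw [← iSup_Eg hx]
    exact iSup_le fun c v hv => h c v hv
  exact LinearMap.ext fun v => this (Submodule.mem_top (x := v))

lemma Eg_unique {x : EndV 𝕂 N} {c d : 𝕂} {v : Fin N → 𝕂} (hv : v ≠ 0) (hc : v ∈ Eg x c)
    (hd : v ∈ Eg x d) : c = d := by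
  rw [mem_Eg] at hc hd
  exact smul_left_injective 𝕂 hv (hc.symm.trans hd)

lemma mem_cent_iff {x : EndV 𝕂 N} (hx : IsSemisimpleE x) {z : EndV 𝕂 N} :
    z ∈ cent x ↔ ∀ c, Eg x c ≠ ⊥ → ∀ v ∈ Eg x c, z v ∈ Eg x c := by
  constructor
  · intro h c _ v hv
    rw [mem_Eg] at hv ⊢
    have := congrArg (fun f : EndV 𝕂 N => f v) h
    simp only [Module.End.mul_apply] at this
    rw [← this, hv, map_smul]
  · intro h
    refine ext_Eg hx fun c v hv => ?_
    have h0 : Eg x c ≠ ⊥ ∨ v = 0 := by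
      by_cases hb : Eg x c = ⊥
      · right; rw [hb] at hv; simpa using hv
      · left; exact hb
    rcases h0 with h0 | h0
    · have := mem_Eg.1 (h c h0 v hv)
      simp only [Module.End.mul_apply]
      rw [this, mem_Eg.1 hv, map_smul]
    · simp [h0]

/-- Equal centralizers: eigenspaces are contained in eigenspaces. -/
lemma Eg_le_of_cent {a b : EndV 𝕂 N} (ha : IsSemisimpleE a) (h : cent a = cent b)
    (c : 𝕂) (hc : Eg a c ≠ ⊥) : ∃ d, Eg a c ≤ Eg b d := by
  classical
  obtain ⟨v, hv, hv0⟩ := Submodule.exists_mem_ne_zero_of_ne_bot hc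
  obtain ⟨f, hf⟩ := Module.Projective.exists_dual_eq_one 𝕂 hv0
  obtain ⟨p, hp⟩ := glue ha (fun c' => if c' = c then 1 else 0)
  have hpv : ∀ w ∈ Eg a c, p w = w := fun w hw => by simp [hp c w hw]
  refine ⟨f (p (b v)), fun w hw => ?_⟩
  have hz : (f.comp p).smulRight w ∈ cent a := by
    rw [mem_cent_iff ha]
    intro c' _ v' hv'
    by_cases h' : c' = c
    · subst h'
      exact Submodule.smul_mem _ _ hw
    · have : p v' = 0 := by simp [hp c' v' hv', h']
      simp [this]
  rw [h] at hz
  have := congrArg (fun f : EndV 𝕂 N => f v) hz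
  simp only [Module.End.mul_apply, LinearMap.smulRight_apply, LinearMap.comp_apply, hpv v hv, hf,
    one_smul] at this
  rw [mem_Eg, this]

lemma Eg_eq_of_cent {a b : EndV 𝕂 N} (ha : IsSemisimpleE a) (hb : IsSemisimpleE b)
    (h : cent a = cent b) (c : 𝕂) (hc : Eg a c ≠ ⊥) : ∃ d, Eg a c = Eg b d := by
  obtain ⟨d, hd⟩ := Eg_le_of_cent ha h c hc
  obtain ⟨v, hv, hv0⟩ := Submodule.exists_mem_ne_zero_of_ne_bot hc
  obtain ⟨c', hc'⟩ := Eg_le_of_cent hb h.symm d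
    (fun hbot => hv0 (by simpa [hbot] using hd hv))
  have : c' = c := Eg_unique hv0 (hc' (hd hv)) hv
  subst this
  exact ⟨d, le_antisymm hd hc'⟩

lemma inv_apply' (g : (EndV 𝕂 N)ˣ) (v : Fin N → 𝕂) :
    (g⁻¹ : (EndV 𝕂 N)ˣ).1 (g.1 v) = v := by
  rw [← Module.End.mul_apply, Units.inv_mul]; rfl

lemma apply_inv' (g : (EndV 𝕂 N)ˣ) (v : Fin N → 𝕂) :
    g.1 ((g⁻¹ : (EndV 𝕂 N)ˣ).1 v) = v := by
  rw [← Module.End.mul_apply, Units.mul_inv]; rfl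

lemma conjAct_apply (g : (EndV 𝕂 N)ˣ) (z : EndV 𝕂 N) (v : Fin N → 𝕂) :
    conjAct g z v = g.1 (z ((g⁻¹ : (EndV 𝕂 N)ˣ).1 v)) := rfl

lemma conjAct_conjAct (g h : (EndV 𝕂 N)ˣ) (z : EndV 𝕂 N) :
    conjAct g (conjAct h z) = conjAct (g * h) z := by
  simp [conjAct, mul_assoc]

lemma conjAct_one (z : EndV 𝕂 N) : conjAct 1 z = z := by
  simp [conjAct]

lemma conjAct_mul (g : (EndV 𝕂 N)ˣ) (y z : EndV 𝕂 N) :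
    conjAct g (y * z) = conjAct g y * conjAct g z := by
  simp [conjAct, mul_assoc]

lemma Eg_conj (g : (EndV 𝕂 N)ˣ) (s : EndV 𝕂 N) (c : 𝕂) :
    Eg (conjAct g s) c = Submodule.map g.1 (Eg s c) := by
  ext v
  simp only [Submodule.mem_map, mem_Eg, conjAct_apply]
  constructor
  · intro h
    refine ⟨(g⁻¹ : (EndV 𝕂 N)ˣ).1 v, ?_, apply_inv' g v⟩
    rw [← map_smul, ← h, inv_apply']
  · rintro ⟨w, hw, rfl⟩
    rw [inv_apply', hw, map_smul]

lemma semisimple_of_iSup {x : EndV 𝕂 N} (h : (⨆ c : 𝕂, Eg x c) = ⊤) : IsSemisimpleE x := by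
  rw [IsSemisimpleE, ← h]
  refine iSup_congr fun c => ?_
  exact Module.End.eigenspace_def.symm

lemma semisimple_conj (g : (EndV 𝕂 N)ˣ) {s : EndV 𝕂 N} (hs : IsSemisimpleE s) :
    IsSemisimpleE (conjAct g s) := by
  apply semisimple_of_iSup
  simp_rw [Eg_conj]
  rw [← Submodule.map_iSup, iSup_Eg hs, eq_top_iff]
  intro v _
  exact ⟨_, trivial, apply_inv' g v⟩

lemma conj_cent (g : (EndV 𝕂 N)ˣ) (s : EndV 𝕂 N) :
    conjAct g '' cent s = cent (conjAct g s) := by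
  ext z
  constructor
  · rintro ⟨y, hy, rfl⟩
    change _ * _ = _ * _
    rw [← conjAct_mul, ← conjAct_mul]
    exact congrArg _ hy
  · intro hz
    refine ⟨conjAct g⁻¹ z, ?_, ?_⟩
    · have : s = conjAct g⁻¹ (conjAct g s) := by
        rw [conjAct_conjAct, inv_mul_cancel, conjAct_one]
      rw [this]
      change _ * _ = _ * _
      rw [← conjAct_mul, ← conjAct_mul]
      exact congrArg _ hz
    · rw [conjAct_conjAct, mul_inv_cancel, conjAct_one]

lemma conj_symm {g : (EndV 𝕂 N)ˣ} {s u : EndV 𝕂 N} (h : conjAct g '' cent s = cent u) :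
    conjAct g⁻¹ '' cent u = cent s := by
  rw [← h, Set.image_image]
  simp [conjAct_conjAct, conjAct_one]

lemma map_Eg {g : (EndV 𝕂 N)ˣ} {s u : EndV 𝕂 N} (hs : IsSemisimpleE s) (hu : IsSemisimpleE u)
    (h : conjAct g '' cent s = cent u) (c : 𝕂) (hc : Eg s c ≠ ⊥) :
    ∃ d, Submodule.map g.1 (Eg s c) = Eg u d := by
  rw [conj_cent] at h
  rw [← Eg_conj]
  refine Eg_eq_of_cent (semisimple_conj g hs) hu h c ?_
  rw [Eg_conj]
  obtain ⟨v, hv, hv0⟩ := Submodule.exists_mem_ne_zero_of_ne_bot hc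
  intro hbot
  have : g.1 v ∈ Submodule.map g.1 (Eg s c) := Submodule.mem_map_of_mem hv
  rw [hbot, Submodule.mem_bot] at this
  apply hv0
  rw [← inv_apply' g v, this, map_zero]

lemma conj_of_map {g : (EndV 𝕂 N)ˣ} {s u : EndV 𝕂 N} (hs : IsSemisimpleE s)
    (hu : IsSemisimpleE u)
    (h1 : ∀ c, Eg s c ≠ ⊥ → ∃ d, Submodule.map g.1 (Eg s c) = Eg u d)
    (h2 : ∀ d, Eg u d ≠ ⊥ → ∃ c, Submodule.map g.1 (Eg s c) = Eg u d) :
    conjAct g '' cent s = cent u := by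
  rw [conj_cent]
  ext z
  rw [mem_cent_iff (semisimple_conj g hs), mem_cent_iff hu]
  simp_rw [Eg_conj]
  constructor
  · intro h d hd
    obtain ⟨c, hc⟩ := h2 d hd
    rw [← hc] at hd ⊢
    exact h c hd
  · intro h c hc
    obtain ⟨d, hd⟩ := h1 c (fun hb => hc (by rw [hb, Submodule.map_bot]))
    rw [hd] at hc ⊢
    exact h d hc

/-- Dimension of eigenspaces. -/
noncomputable def dm (x : EndV 𝕂 N) (c : 𝕂) : ℕ := Module.finrank 𝕂 (Eg x c)

lemma dm_pos {x : EndV 𝕂 N} {c : 𝕂} : Eg x c ≠ ⊥ ↔ dm x c ≠ 0 := by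
  rw [dm, Ne, Ne, Submodule.finrank_eq_zero]

lemma finite_dm (x : EndV 𝕂 N) {n : ℕ} (hn : n ≠ 0) : {c | dm x c = n}.Finite := by
  refine (Module.End.finite_hasEigenvalue x).subset fun c hc => ?_
  have : Eg x c ≠ ⊥ := dm_pos.2 (by rw [hc]; exact hn)
  exact this

lemma finrank_map_unit (g : (EndV 𝕂 N)ˣ) (W : Submodule 𝕂 (Fin N → 𝕂)) :
    Module.finrank 𝕂 (Submodule.map g.1 W) = Module.finrank 𝕂 W :=
  (LinearEquiv.finrank_eq (Submodule.equivMapOfInjective g.1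
    (Function.LeftInverse.injective (inv_apply' g)) W)).symm

lemma ncard_le {g : (EndV 𝕂 N)ˣ} {s u : EndV 𝕂 N} (hs : IsSemisimpleE s) (hu : IsSemisimpleE u)
    (h : conjAct g '' cent s = cent u) {n : ℕ} (hn : n ≠ 0) :
    {c | dm s c = n}.ncard ≤ {c | dm u c = n}.ncard := by
  have hb : ∀ c, dm s c = n → Eg s c ≠ ⊥ := fun c hc => dm_pos.2 (by rw [hc]; exact hn)
  have : ∀ c, ∃ d, Eg s c ≠ ⊥ → Submodule.map g.1 (Eg s c) = Eg u d := fun c => by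
    by_cases hc : Eg s c = ⊥
    · exact ⟨0, fun h => absurd hc h⟩
    · obtain ⟨d, hd⟩ := map_Eg hs hu h c hc
      exact ⟨d, fun _ => hd⟩
  choose f hf using this
  refine Set.ncard_le_ncard_of_injOn f ?_ ?_ (finite_dm u hn)
  · intro c hc
    change dm u (f c) = n
    rw [dm, ← hf c (hb c hc), finrank_map_unit]
    exact hc
  · intro c hc d hd hcd
    obtain ⟨v, hv, hv0⟩ := Submodule.exists_mem_ne_zero_of_ne_bot (hb c hc)
    refine Eg_unique hv0 hv ?_
    have : g.1 v ∈ Submodule.map g.1 (Eg s d) := by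
      rw [hf d (hb d hd), ← hcd, ← hf c (hb c hc)]
      exact Submodule.mem_map_of_mem hv
    obtain ⟨w, hw, hwv⟩ := this
    have hi := (Function.LeftInverse.injective (inv_apply' g)) hwv
    rwa [← hi]

lemma ncard_eq {g : (EndV 𝕂 N)ˣ} {s u : EndV 𝕂 N} (hs : IsSemisimpleE s) (hu : IsSemisimpleE u)
    (h : conjAct g '' cent s = cent u) {n : ℕ} (hn : n ≠ 0) :
    {c | dm s c = n}.ncard = {c | dm u c = n}.ncard :=
  le_antisymm (ncard_le hs hu h hn) (ncard_le hu hs (conj_symm h) hn)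

lemma exists_half (𝕂 : Type*) [Field 𝕂] [CharZero 𝕂] :
    ∃ H : Set 𝕂, (0 ∉ H) ∧ (∀ x ∈ H, -x ∉ H) ∧ ∀ x, x ≠ 0 → x ∉ H → -x ∈ H := by
  refine ⟨{x | WellOrderingRel x (-x)}, ?_, ?_, ?_⟩
  · simp only [Set.mem_ofPred_eq, neg_zero]
    exact irrefl (r := WellOrderingRel) (0 : 𝕂)
  · intro x hx hx'
    simp only [Set.mem_ofPred_eq, neg_neg] at hx hx'
    exact asymm (r := WellOrderingRel) hx hx'
  · intro x hx hx'
    simp only [Set.mem_ofPred_eq, neg_neg] at hx' ⊢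
    rcases trichotomous_of WellOrderingRel x (-x) with h | h | h
    · exact absurd h hx'
    · exact absurd (self_eq_neg.1 h) hx
    · exact h

open Classical in
lemma count_half [CharZero 𝕂] {H : Set 𝕂} (h0 : (0 : 𝕂) ∉ H) (h1 : ∀ x ∈ H, -x ∉ H)
    (h2 : ∀ x, x ≠ 0 → x ∉ H → -x ∈ H) {A : Set 𝕂} (hA : A.Finite) (hn : ∀ x ∈ A, -x ∈ A) :
    A.ncard = 2 * (A ∩ H).ncard + if (0 : 𝕂) ∈ A then 1 else 0 := by
  have e : A = ((A ∩ H) ∪ (fun x => -x) '' (A ∩ H)) ∪ (A ∩ {0}) := by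
    ext x
    simp only [Set.mem_union, Set.mem_inter_iff, Set.mem_image, Set.mem_singleton_iff]
    constructor
    · intro hx
      by_cases hx0 : x = 0
      · exact Or.inr ⟨hx, hx0⟩
      · by_cases hxH : x ∈ H
        · exact Or.inl (Or.inl ⟨hx, hxH⟩)
        · exact Or.inl (Or.inr ⟨-x, ⟨hn x hx, h2 x hx0 hxH⟩, neg_neg x⟩)
    · rintro ((h | ⟨y, hy, rfl⟩) | h)
      · exact h.1
      · exact hn y hy.1
      · exact h.1
  have hF : (A ∩ H).Finite := hA.inter_of_left H
  have d1 : Disjoint (A ∩ H) ((fun x => -x) '' (A ∩ H)) := by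
    rw [Set.disjoint_left]
    rintro x hx ⟨y, hy, rfl⟩
    exact h1 y hy.2 hx.2
  have d2 : Disjoint ((A ∩ H) ∪ (fun x => -x) '' (A ∩ H)) (A ∩ {0}) := by
    rw [Set.disjoint_left]
    rintro x (hx | ⟨y, hy, hyx⟩) ⟨_, hx0⟩
    · rw [Set.mem_singleton_iff] at hx0
      exact h0 (hx0 ▸ hx.2)
    · rw [Set.mem_singleton_iff] at hx0
      have : y = 0 := by
        have h3 : -y = x := hyx
        rw [hx0] at h3
        exact neg_eq_zero.1 h3
      exact h0 (this ▸ hy.2)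
  have e3 : (A ∩ {0}).ncard = if (0 : 𝕂) ∈ A then 1 else 0 := by
    split_ifs with h
    · rw [Set.inter_eq_right.2 (by simpa using h), Set.ncard_singleton]
    · have : A ∩ {0} = ∅ := by
        ext x
        simp only [Set.mem_inter_iff, Set.mem_singleton_iff, Set.mem_empty_iff_false, iff_false]
        rintro ⟨hx, rfl⟩
        exact h hx
      rw [this, Set.ncard_empty]
  conv_lhs => rw [e]
  rw [Set.ncard_union_eq d2 (hF.union (hF.image _)) (hA.inter_of_left _),
    Set.ncard_union_eq d1 hF (hF.image _), Set.ncard_image_of_injective _ neg_injective, e3]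
  ring

lemma exists_add {Va Vb : Submodule 𝕂 (Fin N → 𝕂)} (h : IsCompl Va Vb) (v : Fin N → 𝕂) :
    ∃ a ∈ Va, ∃ b ∈ Vb, a + b = v := by
  have : v ∈ Va ⊔ Vb := by rw [h.sup_eq_top]; trivial
  exact Submodule.mem_sup.1 this

lemma exists_eps {Va Vb : Submodule 𝕂 (Fin N → 𝕂)} (h : IsCompl Va Vb)
    (α β : EndV 𝕂 N) : ∃ ε : EndV 𝕂 N, (∀ v ∈ Va, ε v = α v) ∧ (∀ v ∈ Vb, ε v = β v) := by
  refine ⟨LinearMap.ofIsCompl h (α.comp Va.subtype) (β.comp Vb.subtype), ?_, ?_⟩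
  · intro v hv
    exact LinearMap.ofIsCompl_apply_left h ⟨v, hv⟩
  · intro v hv
    exact LinearMap.ofIsCompl_apply_right h ⟨v, hv⟩

lemma exists_map {W W' : Submodule 𝕂 (Fin N → 𝕂)}
    (h : Module.finrank 𝕂 W = Module.finrank 𝕂 W') :
    ∃ φ : EndV 𝕂 N, Submodule.map φ W = W' := by
  let e := LinearEquiv.ofFinrankEq W W' h
  obtain ⟨φ, hφ⟩ := LinearMap.exists_extend (W'.subtype.comp e.toLinearMap)
  have hv : ∀ w : W, φ w = e w := fun w => congrArg (fun f => f w) hφ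
  refine ⟨φ, le_antisymm ?_ ?_⟩
  · rintro _ ⟨w, hw, rfl⟩
    rw [hv ⟨w, hw⟩]
    exact (e ⟨w, hw⟩).2
  · intro w hw
    refine ⟨e.symm ⟨w, hw⟩, (e.symm ⟨w, hw⟩).2, ?_⟩
    rw [hv]
    simp

lemma sq_zero {s : EndV 𝕂 N} (hs : IsSemisimpleE s) {v : Fin N → 𝕂} (h : s (s v) = 0) :
    s v = 0 := by
  obtain ⟨t, ht⟩ := glue hs (fun c => c⁻¹ • 1)
  have : t * (s * s) = s := by
    refine ext_Eg hs fun c v hv => ?_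
    have h1 := mem_Eg.1 hv
    have h2 := ht c v hv
    simp only [Module.End.mul_apply, h1, map_smul, h2, LinearMap.smul_apply, Module.End.one_apply,
      smul_smul]
    by_cases hc : c = 0
    · simp [hc]
    · field_simp
  rw [← this]
  simp [h]

lemma rank_null (s : EndV 𝕂 N) (W : Submodule 𝕂 (Fin N → 𝕂)) :
    Module.finrank 𝕂 (Submodule.map s W) +
      Module.finrank 𝕂 (Eg s 0 ⊓ W : Submodule 𝕂 (Fin N → 𝕂)) = Module.finrank 𝕂 W := by
  have := LinearMap.finrank_range_add_finrank_ker (s.comp W.subtype)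
  rw [LinearMap.range_comp, Submodule.range_subtype, LinearMap.ker_comp,
    ← Submodule.finrank_map_subtype_eq, Submodule.map_comap_subtype] at this
  rw [← this, inf_comm, Eg, Module.End.eigenspace_zero]

lemma map_le_map {s : EndV 𝕂 N} (hs : IsSemisimpleE s) {A B : Submodule 𝕂 (Fin N → 𝕂)}
    (h : Submodule.map s A ≤ B) :
    Module.finrank 𝕂 (Submodule.map s A) ≤ Module.finrank 𝕂 (Submodule.map s B) := by
  have h1 := rank_null s (Submodule.map s A)
  have h2 : (Eg s 0 ⊓ Submodule.map s A : Submodule 𝕂 (Fin N → 𝕂)) = ⊥ := by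
    rw [eq_bot_iff]
    rintro _ ⟨hv, ⟨w, _, rfl⟩⟩
    have h3 := mem_Eg.1 hv
    rw [zero_smul] at h3
    exact (Submodule.mem_bot 𝕂).2 (sq_zero hs h3)
  rw [h2, finrank_bot, add_zero] at h1
  rw [← h1]
  exact Submodule.finrank_mono (Submodule.map_mono h)

section Pair

variable {Va Vb : Submodule 𝕂 (Fin N → 𝕂)}

lemma ker_sup (h : IsCompl Va Vb) {s : EndV 𝕂 N} (hs : s ∈ pAIII Va Vb) :
    (Eg s 0 ⊓ Va) ⊔ (Eg s 0 ⊓ Vb) = Eg s 0 := by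
  refine le_antisymm (sup_le inf_le_left inf_le_left) fun v hv => ?_
  obtain ⟨a, ha, b, hb, rfl⟩ := exists_add h v
  rw [mem_Eg, zero_smul, map_add] at hv
  have h1 : s a ∈ Vb := hs.1 (Submodule.mem_map_of_mem ha)
  have h2 : s b ∈ Va := hs.2 (Submodule.mem_map_of_mem hb)
  have h3 : s a ∈ Va := by
    rw [eq_neg_of_add_eq_zero_left hv]
    exact Va.neg_mem h2
  have h4 : s a = 0 := Submodule.disjoint_def.1 h.disjoint _ h3 h1
  have h5 : s b = 0 := by simpa [h4] using hv
  exact Submodule.add_mem_sup ⟨mem_Eg.2 (by simp [h4]), ha⟩ ⟨mem_Eg.2 (by simp [h5]), hb⟩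

lemma ker_dims (h : IsCompl Va Vb) {s : EndV 𝕂 N} (hs : s ∈ pAIII Va Vb)
    (hss : IsSemisimpleE s) :
    Module.finrank 𝕂 (Eg s 0 ⊓ Va : Submodule 𝕂 (Fin N → 𝕂)) +
      Module.finrank 𝕂 (Eg s 0 ⊓ Vb : Submodule 𝕂 (Fin N → 𝕂)) = dm s 0 ∧
    Module.finrank 𝕂 (Eg s 0 ⊓ Va : Submodule 𝕂 (Fin N → 𝕂)) + Module.finrank 𝕂 Vb =
      Module.finrank 𝕂 (Eg s 0 ⊓ Vb : Submodule 𝕂 (Fin N → 𝕂)) + Module.finrank 𝕂 Va := by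
  constructor
  · have := Submodule.finrank_sup_add_finrank_inf_eq (Eg s 0 ⊓ Va) (Eg s 0 ⊓ Vb)
    rw [ker_sup h hs] at this
    have h2 : (Eg s 0 ⊓ Va) ⊓ (Eg s 0 ⊓ Vb) = ⊥ := by
      rw [eq_bot_iff, ← h.inf_eq_bot]
      exact inf_le_inf inf_le_right inf_le_right
    rw [h2, finrank_bot, add_zero] at this
    exact this.symm
  · have h1 := rank_null s Va
    have h2 := rank_null s Vb
    have h3 := map_le_map hss hs.1
    have h4 := map_le_map hss hs.2
    omega

lemma exists_phi0 (h : IsCompl Va Vb) {s u : EndV 𝕂 N} (hs : s ∈ pAIII Va Vb)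
    (hss : IsSemisimpleE s) (hu : u ∈ pAIII Va Vb) (hus : IsSemisimpleE u)
    (hd : dm s 0 = dm u 0) {ε : EndV 𝕂 N} (ha : ∀ v ∈ Va, ε v = v) (hb : ∀ v ∈ Vb, ε v = -v) :
    ∃ φ : EndV 𝕂 N, Submodule.map φ (Eg s 0) = Eg u 0 ∧
      ∀ v ∈ Eg s 0, φ (ε v) = ε (φ v) := by
  have h1 := ker_dims h hs hss
  have h2 := ker_dims h hu hus
  obtain ⟨α, hα⟩ := exists_map (W := Eg s 0 ⊓ Va) (W' := Eg u 0 ⊓ Va) (by omega)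
  obtain ⟨β, hβ⟩ := exists_map (W := Eg s 0 ⊓ Vb) (W' := Eg u 0 ⊓ Vb) (by omega)
  obtain ⟨φ, hφa, hφb⟩ := exists_eps h α β
  have e1 : Submodule.map φ (Eg s 0 ⊓ Va) = Eg u 0 ⊓ Va := by
    rw [← hα]
    ext v
    simp only [Submodule.mem_map]
    refine exists_congr fun w => and_congr_right fun hw => ?_
    rw [hφa w hw.2]
  have e2 : Submodule.map φ (Eg s 0 ⊓ Vb) = Eg u 0 ⊓ Vb := by
    rw [← hβ]
    ext v
    simp only [Submodule.mem_map]
    refine exists_congr fun w => and_congr_right fun hw => ?_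
    rw [hφb w hw.2]
  refine ⟨φ, ?_, ?_⟩
  · rw [← ker_sup h hs, Submodule.map_sup, e1, e2, ker_sup h hu]
  · intro v hv
    rw [← ker_sup h hs] at hv
    obtain ⟨a, hav, b, hbv, rfl⟩ := Submodule.mem_sup.1 hv
    have h3 : φ a ∈ Eg u 0 ⊓ Va := e1 ▸ Submodule.mem_map_of_mem hav
    have h4 : φ b ∈ Eg u 0 ⊓ Vb := e2 ▸ Submodule.mem_map_of_mem hbv
    simp only [map_add, ha a hav.2, hb b hbv.2, map_neg, ha _ h3.2, hb _ h4.2]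

lemma eps_anti (h : IsCompl Va Vb) {s : EndV 𝕂 N} (hs : s ∈ pAIII Va Vb)
    {ε : EndV 𝕂 N} (ha : ∀ v ∈ Va, ε v = v) (hb : ∀ v ∈ Vb, ε v = -v) (v : Fin N → 𝕂) :
    ε (s v) = - s (ε v) := by
  obtain ⟨a, hav, b, hbv, rfl⟩ := exists_add h v
  simp only [map_add, ha a hav, hb b hbv, hb _ (hs.1 (Submodule.mem_map_of_mem hav)),
    ha _ (hs.2 (Submodule.mem_map_of_mem hbv)), map_neg]
  abel

lemma eps_sq (h : IsCompl Va Vb)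
    {ε : EndV 𝕂 N} (ha : ∀ v ∈ Va, ε v = v) (hb : ∀ v ∈ Vb, ε v = -v) (v : Fin N → 𝕂) :
    ε (ε v) = v := by
  obtain ⟨a, hav, b, hbv, rfl⟩ := exists_add h v
  simp only [map_add, ha a hav, hb b hbv, map_neg, neg_neg]

lemma map_eps (h : IsCompl Va Vb) {s : EndV 𝕂 N} (hs : s ∈ pAIII Va Vb)
    {ε : EndV 𝕂 N} (ha : ∀ v ∈ Va, ε v = v) (hb : ∀ v ∈ Vb, ε v = -v) (c : 𝕂) :
    Submodule.map ε (Eg s c) = Eg s (-c) := by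
  have key : ∀ c, ∀ v ∈ Eg s c, ε v ∈ Eg s (-c) := by
    intro c v hv
    rw [mem_Eg] at hv ⊢
    have := eps_anti h hs ha hb v
    rw [hv, map_smul] at this
    rw [neg_smul, this, neg_neg]
  refine le_antisymm ?_ ?_
  · rintro _ ⟨v, hv, rfl⟩
    exact key c v hv
  · intro v hv
    refine ⟨ε v, ?_, eps_sq h ha hb v⟩
    have := key _ v hv
    rwa [neg_neg] at this

lemma dm_neg (h : IsCompl Va Vb) {s : EndV 𝕂 N} (hs : s ∈ pAIII Va Vb)
    {ε : EndV 𝕂 N} (ha : ∀ v ∈ Va, ε v = v) (hb : ∀ v ∈ Vb, ε v = -v) (c : 𝕂) :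
    dm s (-c) = dm s c := by
  rw [dm, ← map_eps h hs ha hb c, dm]
  exact (LinearEquiv.finrank_eq (Submodule.equivMapOfInjective ε
    (Function.LeftInverse.injective (eps_sq h ha hb)) (Eg s c))).symm

lemma main_aux [CharZero 𝕂] (hV : IsCompl Va Vb) {s u : EndV 𝕂 N} (hs : s ∈ pAIII Va Vb)
    (hss : IsSemisimpleE s) (hu : u ∈ pAIII Va Vb) (hus : IsSemisimpleE u)
    {g : (EndV 𝕂 N)ˣ} (hg : conjAct g '' cent s = cent u) :
    ∃ k ∈ KAIII Va Vb, conjAct k '' cent s = cent u := by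
  classical
  obtain ⟨ε, ha, hb⟩ := exists_eps hV 1 (-1)
  replace ha : ∀ v ∈ Va, ε v = v := ha
  replace hb : ∀ v ∈ Vb, ε v = -v := hb
  obtain ⟨H, h0, h1, h2⟩ := exists_half 𝕂
  -- combinatorics
  have hcount : ∀ n, n ≠ 0 → ({c | dm s c = n} ∩ H).ncard = ({c | dm u c = n} ∩ H).ncard ∧
      (dm s 0 = n ↔ dm u 0 = n) := by
    intro n hn
    have e := ncard_eq hss hus hg hn
    rw [count_half h0 h1 h2 (finite_dm s hn) (fun x hx => (dm_neg hV hs ha hb x).trans hx),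
      count_half h0 h1 h2 (finite_dm u hn) (fun x hx => (dm_neg hV hu ha hb x).trans hx)] at e
    simp only [Set.mem_ofPred_eq] at e
    split_ifs at e with p q q
    · exact ⟨by omega, by simp [p, q]⟩
    · omega
    · omega
    · exact ⟨by omega, by simp [p, q]⟩
  have hd0 : dm s 0 = dm u 0 := by
    by_cases hz : dm s 0 = 0
    · by_contra hne
      have hz' : dm u 0 ≠ 0 := by omega
      exact hne ((hcount _ hz').2.2 rfl)
    · exact ((hcount _ hz).2.1 rfl).symm
  have hbij : ∀ n, ∃ f : 𝕂 → 𝕂, n ≠ 0 →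
      Set.BijOn f ({c | dm s c = n} ∩ H) ({c | dm u c = n} ∩ H) := by
    intro n
    by_cases hn : n = 0
    · exact ⟨id, fun h => absurd hn h⟩
    · have f1 := (finite_dm s hn).inter_of_left H
      have f2 := (finite_dm u hn).inter_of_left H
      obtain ⟨f, hf⟩ := f1.exists_bijOn_of_encard_eq (t := {c | dm u c = n} ∩ H)
        (by rw [← f1.cast_ncard_eq, ← f2.cast_ncard_eq, (hcount n hn).1])
      exact ⟨f, fun _ => hf⟩
  choose F hF using hbij
  let f : 𝕂 → 𝕂 := fun c => F (dm s c) c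
  have hf1 : ∀ c ∈ H, dm s c ≠ 0 → dm u (f c) = dm s c ∧ f c ∈ H := fun c hc hn =>
    (hF (dm s c) hn).mapsTo ⟨rfl, hc⟩
  have hf2 : ∀ d ∈ H, dm u d ≠ 0 → ∃ c ∈ H, dm s c ≠ 0 ∧ f c = d := fun d hd hn => by
    obtain ⟨c, hc, hcd⟩ := (hF (dm u d) hn).surjOn ⟨rfl, hd⟩
    have hc1 : dm s c = dm u d := hc.1
    refine ⟨c, hc.2, by rw [hc1]; exact hn, ?_⟩
    change F (dm s c) c = d
    rw [hc1, hcd]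
  -- local maps
  obtain ⟨φ0, hφ0, hφε⟩ := exists_phi0 hV hs hss hu hus hd0 ha hb
  have hpsi : ∀ c, ∃ ψ : EndV 𝕂 N, c ∈ H → dm s c ≠ 0 →
      Submodule.map ψ (Eg s c) = Eg u (f c) := by
    intro c
    by_cases hc : c ∈ H ∧ dm s c ≠ 0
    · obtain ⟨ψ, hψ⟩ := exists_map (W := Eg s c) (W' := Eg u (f c)) (hf1 c hc.1 hc.2).1.symm
      exact ⟨ψ, fun _ _ => hψ⟩
    · exact ⟨0, fun x y => absurd ⟨x, y⟩ hc⟩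
  choose ψ hψ using hpsi
  obtain ⟨k, hk⟩ := glue hss
    (fun c => if c = 0 then φ0 else if c ∈ H then ψ c else ε * ψ (-c) * ε)
  have hεmem : ∀ c, ∀ v ∈ Eg s c, ε v ∈ Eg s (-c) := fun c v hv => by
    rw [← map_eps hV hs ha hb c]
    exact Submodule.mem_map_of_mem hv
  have hk0 : ∀ v ∈ Eg s 0, k v = φ0 v := fun v hv => by
    rw [hk 0 v hv, if_pos rfl]
  have hkH : ∀ c ∈ H, ∀ v ∈ Eg s c, k v = ψ c v := fun c hc v hv => by
    rw [hk c v hv, if_neg (fun h : c = 0 => h0 (h ▸ hc)), if_pos hc]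
  have hkN : ∀ c ∈ H, ∀ v ∈ Eg s (-c), k v = ε (ψ c (ε v)) := fun c hc v hv => by
    rw [hk (-c) v hv, if_neg (fun h : -c = 0 => h0 (neg_eq_zero.1 h ▸ hc)), if_neg (h1 c hc), neg_neg]
    rfl
  have hcomm : k * ε = ε * k := by
    refine ext_Eg hss fun c v hv => ?_
    change k (ε v) = ε (k v)
    have hv' := hεmem c v hv
    by_cases hc0 : c = 0
    · subst hc0
      rw [neg_zero] at hv'
      rw [hk0 _ hv', hk0 _ hv, hφε v hv]
    · by_cases hc : c ∈ H
      · rw [hkH c hc v hv, hkN c hc _ hv', eps_sq hV ha hb]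
      · have hc' := h2 c hc0 hc
        rw [hkH _ hc' _ hv', hkN (-c) hc' v (by rwa [neg_neg]), eps_sq hV ha hb]
  have hcomm' : ∀ v, k (ε v) = ε (k v) := fun v => congrArg (fun f : EndV 𝕂 N => f v) hcomm
  have m0 : Submodule.map k (Eg s 0) = Eg u 0 := by
    rw [← hφ0]
    ext v
    simp only [Submodule.mem_map]
    refine exists_congr fun w => and_congr_right fun hw => ?_
    rw [hk0 w hw]
  have mH : ∀ c ∈ H, dm s c ≠ 0 → Submodule.map k (Eg s c) = Eg u (f c) := by
    intro c hc hn
    rw [← hψ c hc hn]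
    ext v
    simp only [Submodule.mem_map]
    refine exists_congr fun w => and_congr_right fun hw => ?_
    rw [hkH c hc w hw]
  have mN : ∀ c ∈ H, dm s c ≠ 0 → Submodule.map k (Eg s (-c)) = Eg u (-f c) := by
    intro c hc hn
    rw [← map_eps hV hs ha hb, ← map_eps hV hu ha hb, ← mH c hc hn]
    change Submodule.map k (Submodule.map ε (Eg s c)) = Submodule.map ε (Submodule.map k (Eg s c))
    rw [← Submodule.map_comp, ← Submodule.map_comp]
    exact congrArg (fun f : EndV 𝕂 N => Submodule.map f (Eg s c)) hcomm
  have r1 : ∀ c, Eg s c ≠ ⊥ → ∃ d, Submodule.map k (Eg s c) = Eg u d := by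
    intro c hn
    rw [dm_pos] at hn
    by_cases hc0 : c = 0
    · subst hc0; exact ⟨0, m0⟩
    · by_cases hc : c ∈ H
      · exact ⟨_, mH c hc hn⟩
      · have := mN (-c) (h2 c hc0 hc) (by rwa [dm_neg hV hs ha hb])
        rw [neg_neg] at this
        exact ⟨_, this⟩
  have r2 : ∀ d, Eg u d ≠ ⊥ → ∃ c, Submodule.map k (Eg s c) = Eg u d := by
    intro d hn
    rw [dm_pos] at hn
    by_cases hd0 : d = 0
    · subst hd0; exact ⟨0, m0⟩
    · by_cases hd : d ∈ H
      · obtain ⟨c, hc, hcn, rfl⟩ := hf2 d hd hn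
        exact ⟨_, mH c hc hcn⟩
      · obtain ⟨c, hc, hcn, hcd⟩ := hf2 (-d) (h2 d hd0 hd) (by rwa [dm_neg hV hu ha hb])
        have := mN c hc hcn
        rw [hcd, neg_neg] at this
        exact ⟨_, this⟩
  have hsurj : Function.Surjective k := by
    rw [← LinearMap.range_eq_top, eq_top_iff, ← iSup_Eg hus]
    refine iSup_le fun d => ?_
    by_cases hd : Eg u d = ⊥
    · rw [hd]; exact bot_le
    · obtain ⟨c, hc⟩ := r2 d hd
      rw [← hc]
      exact LinearMap.map_le_range
  have hinj : Function.Injective k := LinearMap.injective_iff_surjective.2 hsurj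
  have hunit : IsUnit k := (Module.End.isUnit_iff k).2 ⟨hinj, hsurj⟩
  obtain ⟨k', rfl⟩ := hunit
  refine ⟨k', ⟨?_, ?_⟩, conj_of_map hss hus r1 r2⟩
  · refine Submodule.eq_of_le_of_finrank_eq ?_ (finrank_map_unit k' Va)
    rintro _ ⟨v, hv, rfl⟩
    obtain ⟨a, hav, b, hbv, hab⟩ := exists_add hV (k'.1 v)
    have e1 := hcomm' v
    rw [ha v hv, ← hab, map_add, ha a hav, hb b hbv, add_right_inj, self_eq_neg] at e1
    rw [← hab, e1, add_zero]
    exact hav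
  · refine Submodule.eq_of_le_of_finrank_eq ?_ (finrank_map_unit k' Vb)
    rintro _ ⟨v, hv, rfl⟩
    obtain ⟨a, hav, b, hbv, hab⟩ := exists_add hV (k'.1 v)
    have e1 := hcomm' v
    rw [hb v hv, map_neg, ← hab, map_add, ha a hav, hb b hbv, neg_add, add_left_inj,
      neg_eq_self] at e1
    rw [← hab, e1, zero_add]
    exact hbv

end Pair

end Helpers

end SymmetricPairAIII

theorem property_L_typeAIII {𝕂 : Type*} [Field 𝕂] [IsAlgClosed 𝕂] [CharZero 𝕂] {N : ℕ}
    (Va Vb : Submodule 𝕂 (Fin N → 𝕂)) (hVab : IsCompl Va Vb)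
    (s u : EndV 𝕂 N)
    (hs : s ∈ pAIII Va Vb) (hu : u ∈ pAIII Va Vb)
    (hss : IsSemisimpleE s) (hus : IsSemisimpleE u) :
    (∃ g : (EndV 𝕂 N)ˣ, conjAct g '' cent s = cent u) ↔
    (∃ k ∈ KAIII Va Vb, conjAct k '' cent s = cent u) := by
  constructor
  · rintro ⟨g, hg⟩
    exact main_aux hVab hs hss hu hus hg
  · rintro ⟨k, _, hk⟩
    exact ⟨k, hk⟩
end

section
/- In type AIII, the intersection of the GL(V)-orbit of a semisimple element of p with p is a single K-orbit: if s, s′ ∈ p are semisimple and s′ = g s g⁻¹ for some g ∈ GL(V), then there exists k ∈ K with s′ = k s k⁻¹. -/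
open SymmetricPairAIII

namespace SymmetricPairAIII

/-- Polynomials in intertwined endomorphisms are intertwined. -/
lemma aeval_intertwine {𝕂 A : Type*} [Field 𝕂] [Ring A] [Algebra 𝕂 A] (k s s' : A)
    (h : k * s = s' * k) (f : Polynomial 𝕂) :
    k * Polynomial.aeval s f = Polynomial.aeval s' f * k := by
  induction f using Polynomial.induction_on' with
  | add p q hp hq => simp only [map_add, mul_add, add_mul, hp, hq]
  | monomial n a =>
    have hn : k * s ^ n = s' ^ n * k := SemiconjBy.pow_right (show SemiconjBy k s s' from h) n
    rw [Polynomial.aeval_monomial, Polynomial.aeval_monomial, ← mul_assoc,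
      ← Algebra.commutes, mul_assoc, hn, mul_assoc]

/-- A square root of the projection to the image of `s`, of the form `s r(s²)`. -/
lemma exists_poly {𝕂 : Type*} [Field 𝕂] [IsAlgClosed 𝕂] {N : ℕ} (s : EndV 𝕂 N)
    (hss : IsSemisimpleE s) :
    ∃ r : Polynomial 𝕂, s * (s * Polynomial.aeval (s * s) r) * (s * Polynomial.aeval (s * s) r)
      = s := by
  classical
  choose c hc using fun l : 𝕂 => IsAlgClosed.exists_pow_nat_eq l (n := 2) (by norm_num)
  have hfin : Set.Finite {l : 𝕂 | Module.End.HasEigenvalue (s * s) l} :=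
    Module.End.finite_hasEigenvalue (s * s)
  let S := hfin.toFinset
  let r := Lagrange.interpolate S id (fun l => (c l)⁻¹)
  have hr : ∀ l ∈ S, r.eval l = (c l)⁻¹ := fun l hl =>
    Lagrange.eval_interpolate_at_node (v := id) (fun l => (c l)⁻¹) (Function.injective_id.injOn) hl
  refine ⟨r, ?_⟩
  have key : (⊤ : Submodule 𝕂 (Fin N → 𝕂)) ≤
      LinearMap.ker (s * (s * Polynomial.aeval (s * s) r) * (s * Polynomial.aeval (s * s) r) - s) := by
    rw [← hss]
    refine iSup_le fun m v hv => ?_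
    have hv1 : s v = m • v := by
      simpa [sub_eq_zero] using hv
    have hv2 : (s * s) v = (m * m) • v := by
      simp [Module.End.mul_apply, hv1, smul_smul]
    by_cases hv0 : v = 0
    · simp [hv0]
    have hev : Module.End.HasEigenvector (s * s) (m * m) v :=
      ⟨Module.End.mem_eigenspace_iff.mpr hv2, hv0⟩
    have hmem : m * m ∈ S := by
      simp only [S, Set.Finite.mem_toFinset, Set.mem_ofPred_eq]
      exact Module.End.hasEigenvalue_of_hasEigenvector hev
    have hA : Polynomial.aeval (s * s) r v = (c (m * m))⁻¹ • v := by
      rw [Module.End.aeval_apply_of_hasEigenvector hev, hr _ hmem]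
    simp only [LinearMap.mem_ker, LinearMap.sub_apply, Module.End.mul_apply, hA, map_smul, hv1,
      smul_smul, sub_eq_zero]
    congr 1
    have h2 := hc (m * m)
    by_cases hm : m = 0
    · simp [hm]
    have hc0 : c (m * m) ≠ 0 := by
      intro h0
      rw [h0] at h2
      simp at h2
      exact hm h2
    generalize c (m * m) = d at h2 hc0
    have h3 : m * m * (d⁻¹ * d⁻¹) = 1 := by
      rw [← h2]; field_simp
    linear_combination m * h3
  have := LinearMap.ker_eq_top.mp (top_le_iff.mp key)
  exact sub_eq_zero.mp this

lemma finrank_ker_add {𝕂 : Type*} [Field 𝕂] {N : ℕ} (s : EndV 𝕂 N)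
    (W : Submodule 𝕂 (Fin N → 𝕂)) :
    Module.finrank 𝕂 (W.map s) + Module.finrank 𝕂 (W ⊓ LinearMap.ker s : Submodule 𝕂 (Fin N → 𝕂))
      = Module.finrank 𝕂 W := by
  have h := LinearMap.finrank_range_add_finrank_ker (s.domRestrict W)
  rw [LinearMap.range_domRestrict, LinearMap.ker_domRestrict] at h
  rw [← h, ← Submodule.map_comap_subtype, Submodule.finrank_map_subtype_eq]

lemma finrank_map_le {𝕂 : Type*} [Field 𝕂] {N : ℕ} (s : EndV 𝕂 N)
    (hk : ∀ x, s (s x) = 0 → s x = 0)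
    (W U : Submodule 𝕂 (Fin N → 𝕂)) (h : W.map s ≤ U) :
    Module.finrank 𝕂 (W.map s) ≤ Module.finrank 𝕂 (U.map s) := by
  have h1 := finrank_ker_add s (W.map s)
  have h2 : (W.map s ⊓ LinearMap.ker s : Submodule 𝕂 (Fin N → 𝕂)) = ⊥ := by
    rw [eq_bot_iff]
    rintro x ⟨⟨y, _, rfl⟩, hx⟩
    exact hk y hx
  rw [h2, finrank_bot, add_zero] at h1
  rw [← h1]
  exact Submodule.finrank_mono (Submodule.map_mono h)

lemma two_mul_finrank_map {𝕂 : Type*} [Field 𝕂] {N : ℕ} (s : EndV 𝕂 N)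
    (hk : ∀ x, s (s x) = 0 → s x = 0)
    (Va Vb : Submodule 𝕂 (Fin N → 𝕂)) (hVab : IsCompl Va Vb) (hs : s ∈ pAIII Va Vb) :
    Module.finrank 𝕂 (LinearMap.range s) = 2 * Module.finrank 𝕂 (Va.map s) ∧
    Module.finrank 𝕂 (LinearMap.range s) = 2 * Module.finrank 𝕂 (Vb.map s) := by
  have h1 := finrank_map_le s hk Va Vb hs.1
  have h2 := finrank_map_le s hk Vb Va hs.2
  have h3 := Submodule.finrank_sup_add_finrank_inf_eq (Va.map s) (Vb.map s)
  have h4 : (Va.map s ⊓ Vb.map s : Submodule 𝕂 (Fin N → 𝕂)) = ⊥ :=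
    (hVab.disjoint.symm.mono hs.1 hs.2).eq_bot
  rw [h4, finrank_bot, ← Submodule.map_sup, hVab.sup_eq_top, Submodule.map_top] at h3
  omega

/-- The algebraic identities for the even intertwiner. -/
lemma ring_part {𝕂 A : Type*} [Field 𝕂] [Ring A] [Algebra 𝕂 A] (ε s s' g h R : A)
    (r : Polynomial 𝕂) (hR : R = Polynomial.aeval (s * s) r)
    (hεε : ε * ε = 1) (hεs : ε * s = -(s * ε)) (hεs' : ε * s' = -(s' * ε))
    (hgs : g * s = s' * g) (hs'h : s' * h = 0) (hεh : ε * h = h * ε)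
    (hr : s * (s * R) * (s * R) = s) :
    ∃ P G k Q : A, s * P * P = s ∧ G = ε * g * ε ∧
      k = (g + G) * (P * P) + (g - G) * P + h * (1 - P * P) ∧
      ε * k = k * ε ∧ k * s = s' * k ∧ k * P = Q * k ∧
      k * P = (g + G) * P + (g - G) * (P * P) ∧
      k * P * P = (g + G) * (P * P) + (g - G) * P := by
  have hsR : s * R = R * s := by
    rw [hR]; exact aeval_intertwine s (s * s) (s * s) (by simp [mul_assoc]) r
  have hεR : ε * R = R * ε := by
    rw [hR]
    refine aeval_intertwine ε (s * s) (s * s) ?_ r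
    rw [← mul_assoc, hεs, neg_mul, mul_assoc, hεs, mul_neg, neg_neg, mul_assoc]
  let R' := Polynomial.aeval (s' * s') r
  obtain ⟨P, hP⟩ : ∃ P, P = s * R := ⟨_, rfl⟩
  rw [← hP] at hr
  have hsP : P * s = s * P := by rw [hP, mul_assoc, ← hsR]
  have hεP : ε * P = -(P * ε) := by
    rw [hP, ← mul_assoc, hεs, neg_mul, mul_assoc, hεR, mul_assoc]
  have hPPP : P * P * P = P := by
    have e : P = R * s := by rw [hP, hsR]
    calc P * P * P = R * s * (P * P) := by rw [← e, mul_assoc]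
      _ = R * (s * P * P) := by simp only [mul_assoc]
      _ = P := by rw [hr, e]
  obtain ⟨G, hG⟩ : ∃ G : A, G = ε * g * ε := ⟨_, rfl⟩
  have hGs : G * s = s' * G := by
    calc G * s = -(ε * (g * s) * ε) := by
          rw [hG, mul_assoc, hεs]; noncomm_ring
      _ = -(ε * s') * g * ε := by rw [hgs]; noncomm_ring
      _ = s' * G := by rw [hεs', hG]; noncomm_ring
  have hεg : ε * g = G * ε := by rw [hG, mul_assoc, hεε, mul_one]
  have hεG : ε * G = g * ε := by rw [hG, ← mul_assoc, ← mul_assoc, hεε, one_mul]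
  -- twice the even intertwiner
  obtain ⟨k, hk⟩ : ∃ k : A, k = (g + G) * (P * P) + (g - G) * P + h * (1 - P * P) :=
    ⟨_, rfl⟩
  have hεPP : ε * (P * P) = (P * P) * ε := by
    rw [← mul_assoc, hεP, neg_mul, mul_assoc, hεP, mul_neg, neg_neg, mul_assoc]
  have hsPP : (P * P) * s = s * (P * P) := by rw [mul_assoc, hsP, ← mul_assoc, hsP, mul_assoc]
  have hεk : ε * k = k * ε := by
    calc ε * k = (ε * g + ε * G) * (P * P) + (ε * g - ε * G) * P + (ε * h) * (1 - P * P) := by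
          rw [hk]; noncomm_ring
      _ = (g + G) * (ε * (P * P)) - (g - G) * (ε * P) + h * (ε - ε * (P * P)) := by
          rw [hεg, hεG, hεh]; noncomm_ring
      _ = k * ε := by rw [hεPP, hεP, hk]; noncomm_ring
  have hks : k * s = s' * k := by
    calc k * s = (g + G) * (P * P * s) + (g - G) * (P * s) + h * (s - P * P * s) := by
          rw [hk]; noncomm_ring
      _ = (g * s + G * s) * (P * P) + (g * s - G * s) * P + h * (s - s * P * P) := by
          rw [hsPP, hsP]; noncomm_ring
      _ = s' * (g + G) * (P * P) + s' * (g - G) * P + (s' * h) * (1 - P * P) := by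
          rw [hr, hgs, hGs, hs'h]; noncomm_ring
      _ = s' * k := by rw [hk]; noncomm_ring
  have hkP : k * P = s' * R' * k := by
    have : k * R = R' * k := hR ▸ aeval_intertwine k (s * s) (s' * s')
      (by rw [← mul_assoc, hks, mul_assoc, hks, mul_assoc]) r
    rw [hP, ← mul_assoc, hks, mul_assoc, this, mul_assoc]
  have e1 : k * P = (g + G) * P + (g - G) * (P * P) := by
    calc k * P = (g + G) * (P * P * P) + (g - G) * (P * P) + h * (P - P * P * P) := by
          rw [hk]; noncomm_ring
      _ = _ := by rw [hPPP]; simp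
  have e2 : k * P * P = (g + G) * (P * P) + (g - G) * P := by
    calc k * P * P = (g + G) * (P * P) + (g - G) * (P * P * P) := by
          rw [e1]; noncomm_ring
      _ = _ := by rw [hPPP]
  exact ⟨P, G, k, s' * R', hr, hG, hk, hεk, hks, hkP, e1, e2⟩

end SymmetricPairAIII

theorem semisimple_orbit_inter_p_typeAIII {𝕂 : Type*} [Field 𝕂] [IsAlgClosed 𝕂] [CharZero 𝕂]
    {N : ℕ} (Va Vb : Submodule 𝕂 (Fin N → 𝕂)) (hVab : IsCompl Va Vb)
    (s s' : EndV 𝕂 N)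
    (hs : s ∈ pAIII Va Vb) (hs' : s' ∈ pAIII Va Vb)
    (hss : IsSemisimpleE s) (hss' : IsSemisimpleE s')
    (g : (EndV 𝕂 N)ˣ) (hg : s' = conjAct g s) :
    ∃ k ∈ KAIII Va Vb, s' = conjAct k s := by
  have hgs : (g : EndV 𝕂 N) * s = s' * g := by
    rw [hg, conjAct, mul_assoc, Units.inv_mul, mul_one]
  have hginj : ∀ x, (g : EndV 𝕂 N) x = 0 → x = 0 := by
    intro x hx
    have : ((g⁻¹ : (EndV 𝕂 N)ˣ) * g : EndV 𝕂 N) x = 0 := by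
      rw [Module.End.mul_apply, hx, map_zero]
    simpa using this
  -- kernels and images meet trivially
  have hkk : ∀ t : EndV 𝕂 N, IsSemisimpleE t → ∀ x, t (t x) = 0 → t x = 0 := by
    intro t ht x hx
    obtain ⟨r, hr⟩ := exists_poly t ht
    have hc : t * Polynomial.aeval (t * t) r = Polynomial.aeval (t * t) r * t :=
      (aeval_intertwine t (t * t) (t * t) (by simp [mul_assoc]) r)
    generalize Polynomial.aeval (t * t) r = R at hr hc
    have e : (t * R) * R * (t * t) = t := by
      conv_rhs => rw [← hr]
      have hc' : ∀ y, R * (t * y) = t * (R * y) := fun y => by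
        rw [← mul_assoc, ← hc, mul_assoc]
      simp only [mul_assoc, hc', hc]
    have h2 := LinearMap.congr_fun e x
    rw [← h2, Module.End.mul_apply, Module.End.mul_apply t t, hx, map_zero]
  -- dimensions
  have hrange : Module.finrank 𝕂 (LinearMap.range s) = Module.finrank 𝕂 (LinearMap.range s') := by
    have h1 : LinearMap.range s' = (LinearMap.range s).map (g : EndV 𝕂 N) := by
      ext y
      constructor
      · rintro ⟨x, rfl⟩
        refine ⟨s (((g⁻¹ : (EndV 𝕂 N)ˣ) : EndV 𝕂 N) x), ⟨_, rfl⟩, ?_⟩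
        rw [hg]; rfl
      · rintro ⟨_, ⟨x, rfl⟩, rfl⟩
        exact ⟨(g : EndV 𝕂 N) x, (LinearMap.congr_fun hgs x).symm⟩
    rw [h1]
    exact (LinearEquiv.finrank_eq (Submodule.equivMapOfInjective (g : EndV 𝕂 N)
      ((injective_iff_map_eq_zero _).mpr hginj) _))
  obtain ⟨d1, d2⟩ := two_mul_finrank_map s (hkk s hss) Va Vb hVab hs
  obtain ⟨d1', d2'⟩ := two_mul_finrank_map s' (hkk s' hss') Va Vb hVab hs'
  have da : Module.finrank 𝕂 (Va ⊓ LinearMap.ker s : Submodule 𝕂 (Fin N → 𝕂)) =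
      Module.finrank 𝕂 (Va ⊓ LinearMap.ker s' : Submodule 𝕂 (Fin N → 𝕂)) := by
    have := finrank_ker_add s Va
    have := finrank_ker_add s' Va
    omega
  have db : Module.finrank 𝕂 (Vb ⊓ LinearMap.ker s : Submodule 𝕂 (Fin N → 𝕂)) =
      Module.finrank 𝕂 (Vb ⊓ LinearMap.ker s' : Submodule 𝕂 (Fin N → 𝕂)) := by
    have := finrank_ker_add s Vb
    have := finrank_ker_add s' Vb
    omega
  -- projections
  obtain ⟨pa, pb, hpa, hpb, hsum⟩ : ∃ pa pb : EndV 𝕂 N, (∀ x, pa x ∈ Va) ∧ (∀ x, pb x ∈ Vb) ∧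
      (∀ x, pa x + pb x = x) := by
    refine ⟨Va.subtype ∘ₗ Va.projectionOnto Vb hVab,
      Vb.subtype ∘ₗ Vb.projectionOnto Va hVab.symm, fun x => Subtype.coe_prop _,
      fun x => Subtype.coe_prop _, fun x => ?_⟩
    exact Submodule.projection_add_projection_eq_self hVab x
  have huniq : ∀ a ∈ Va, ∀ b ∈ Vb, a + b = 0 → a = 0 ∧ b = 0 := by
    intro a ha b hb hab
    have h0 : a = 0 := by
      refine Submodule.disjoint_def.mp hVab.disjoint a ha ?_
      rw [eq_neg_of_add_eq_zero_left hab]; exact Vb.neg_mem hb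
    subst h0
    simpa using hab
  have hpaa : ∀ a ∈ Va, pa a = a ∧ pb a = 0 := by
    intro a ha
    have := huniq (pa a - a) (Va.sub_mem (hpa a) ha) (pb a) (hpb a)
      (by rw [sub_add_eq_add_sub, hsum, sub_self])
    exact ⟨sub_eq_zero.mp this.1, this.2⟩
  have hpbb : ∀ b ∈ Vb, pa b = 0 ∧ pb b = b := by
    intro b hb
    have := huniq (pa b) (hpa b) (pb b - b) (Vb.sub_mem (hpb b) hb)
      (by rw [← add_sub_assoc, hsum, sub_self])
    exact ⟨this.1, sub_eq_zero.mp this.2⟩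
  -- the grading element
  let ε : EndV 𝕂 N := pa - pb
  have hεa : ∀ a ∈ Va, ε a = a := fun a ha => by simp [ε, hpaa a ha]
  have hεb : ∀ a ∈ Vb, ε a = -a := fun a ha => by simp [ε, hpbb a ha]
  have hext : ∀ u v : EndV 𝕂 N, (∀ a ∈ Va, u a = v a) → (∀ b ∈ Vb, u b = v b) → u = v := by
    intro u v h1 h2
    refine LinearMap.ext fun x => ?_
    rw [← hsum x, map_add, map_add, h1 _ (hpa x), h2 _ (hpb x)]
  have hεε : ε * ε = 1 := by
    apply hext
    · intro a ha; simp [Module.End.mul_apply, hεa a ha]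
    · intro a ha; simp [Module.End.mul_apply, hεb a ha]
  have hodd : ∀ t ∈ pAIII Va Vb, ε * t = - (t * ε) := by
    intro t ht
    apply hext
    · intro a ha
      simp [Module.End.mul_apply, hεa a ha, hεb _ (ht.1 ⟨a, ha, rfl⟩)]
    · intro a ha
      simp [Module.End.mul_apply, hεb a ha, hεa _ (ht.2 ⟨a, ha, rfl⟩)]
  have two : (2 : 𝕂) ≠ 0 := two_ne_zero
  have hεs := hodd s hs
  have hεs' := hodd s' hs'
  obtain ⟨h, hs'h, hεh, hhinj⟩ : ∃ h : EndV 𝕂 N, s' * h = 0 ∧ ε * h = h * ε ∧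
      ∀ x, s x = 0 → h x = 0 → x = 0 := by
    let ea := LinearEquiv.ofFinrankEq _ _ da
    let eb := LinearEquiv.ofFinrankEq _ _ db
    obtain ⟨ha, hha⟩ := LinearMap.exists_extend ea.toLinearMap
    obtain ⟨hb, hhb⟩ := LinearMap.exists_extend eb.toLinearMap
    have mema : ∀ x, (ha x : Fin N → 𝕂) ∈ Va := fun x => (ha x).2.1
    have memb : ∀ x, (hb x : Fin N → 𝕂) ∈ Vb := fun x => (hb x).2.1
    refine ⟨Submodule.subtype _ ∘ₗ ha ∘ₗ pa + Submodule.subtype _ ∘ₗ hb ∘ₗ pb, ?_, ?_, ?_⟩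
    · refine LinearMap.ext fun x => ?_
      have h1 : s' (ha (pa x) : Fin N → 𝕂) = 0 := (ha (pa x)).2.2
      have h2 : s' (hb (pb x) : Fin N → 𝕂) = 0 := (hb (pb x)).2.2
      simp [Module.End.mul_apply, h1, h2]
    · apply hext
      · intro a h1
        simp [Module.End.mul_apply, hpaa a h1, hεa a h1, hεa _ (mema _)]
      · intro a h1
        simp [Module.End.mul_apply, hpbb a h1, hεb a h1, hεb _ (memb _)]
    · intro x hx h0
      have h1 := huniq _ (mema (pa x)) _ (memb (pb x)) (by simpa using h0)
      have h2 : s (pb x) + s (pa x) = 0 := by rw [← map_add, add_comm, hsum, hx]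
      rw [add_comm] at h2
      rw [add_comm] at h2
      have h3 := huniq _ (hs.2 ⟨_, hpb x, rfl⟩) _ (hs.1 ⟨_, hpa x, rfl⟩) h2
      have h4 : ea ⟨pa x, hpa x, h3.2⟩ = 0 := by
        have := LinearMap.congr_fun hha ⟨pa x, hpa x, h3.2⟩
        simp only [LinearMap.comp_apply, Submodule.subtype_apply] at this
        apply Subtype.ext
        rw [← LinearEquiv.coe_coe, ← this]
        exact h1.1
      have h5 : eb ⟨pb x, hpb x, h3.1⟩ = 0 := by
        have := LinearMap.congr_fun hhb ⟨pb x, hpb x, h3.1⟩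
        simp only [LinearMap.comp_apply, Submodule.subtype_apply] at this
        apply Subtype.ext
        rw [← LinearEquiv.coe_coe, ← this]
        exact h1.2
      have h6 := congrArg Subtype.val ((LinearEquiv.map_eq_zero_iff _).mp h4)
      have h7 := congrArg Subtype.val ((LinearEquiv.map_eq_zero_iff _).mp h5)
      simp only [ZeroMemClass.coe_zero] at h6 h7
      rw [← hsum x, h6, h7, add_zero]
  -- the square root `P` of the projection onto the image
  obtain ⟨r, hr⟩ := exists_poly s hss
  set R := Polynomial.aeval (s * s) r with hR
  obtain ⟨P, G, k, Q, hr, hG, hk, hεk, hks, hkP, e1, e2⟩ :=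
    ring_part ε s s' g h R r hR hεε hεs hεs' hgs hs'h hεh hr
  have hGinj : ∀ x, G x = 0 → x = 0 := by
    intro x hx
    have e : ∀ y, ε (ε y) = y := fun y => LinearMap.congr_fun hεε y
    rw [hG] at hx
    simp only [Module.End.mul_apply] at hx
    have h1 := congrArg ε hx
    rw [e, map_zero] at h1
    have h2 := congrArg ε (hginj _ h1)
    rwa [e, map_zero] at h2
  have hkinj : ∀ x, k x = 0 → x = 0 := by
    intro x hx
    have z1 : (k * P) x = 0 := by
      rw [hkP, Module.End.mul_apply, hx, map_zero]
    have z2 : (k * P * P) x = 0 := by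
      rw [hkP, mul_assoc, hkP, Module.End.mul_apply, Module.End.mul_apply, hx, map_zero, map_zero]
    have y1 : (g : EndV 𝕂 N) ((2 : 𝕂) • (P x + P (P x))) = 0 := by
      have : (k * P + k * P * P) x = 0 := by rw [LinearMap.add_apply, z1, z2, add_zero]
      rw [e2, e1] at this
      rw [← this]
      simp only [LinearMap.add_apply, LinearMap.sub_apply, Module.End.mul_apply, map_add, two_smul]
      abel
    have y2 : G ((2 : 𝕂) • (P x - P (P x))) = 0 := by
      have : (k * P - k * P * P) x = 0 := by rw [LinearMap.sub_apply, z1, z2, sub_zero]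
      rw [e2, e1] at this
      rw [← this]
      simp only [LinearMap.add_apply, LinearMap.sub_apply, Module.End.mul_apply, map_add, map_sub,
        two_smul]
      abel
    have w1 := (smul_eq_zero.mp (hginj _ y1)).resolve_left two
    have w2 := (smul_eq_zero.mp (hGinj _ y2)).resolve_left two
    have w3 : P x = 0 := by
      have : (2 : 𝕂) • P x = 0 := by
        calc (2 : 𝕂) • P x = (P x + P (P x)) + (P x - P (P x)) := by rw [two_smul]; abel
          _ = 0 := by rw [w1, w2, add_zero]
      exact (smul_eq_zero.mp this).resolve_left two
    have w4 : s x = 0 := by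
      rw [← hr, Module.End.mul_apply, w3, map_zero]
    refine hhinj x w4 ?_
    rw [hk] at hx
    simpa [Module.End.mul_apply, w3] using hx
  -- conclude
  have hku : IsUnit k := by
    rw [LinearMap.isUnit_iff_ker_eq_bot, LinearMap.ker_eq_bot']
    exact hkinj
  obtain ⟨u, rfl⟩ := hku
  have hmaple : ∀ W : Submodule 𝕂 (Fin N → 𝕂), W.map (u : EndV 𝕂 N) ≤ W →
      W.map (u : EndV 𝕂 N) = W := by
    intro W hW
    refine Submodule.eq_of_le_of_finrank_eq hW ?_
    exact (LinearEquiv.finrank_eq (Submodule.equivMapOfInjective (u : EndV 𝕂 N)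
      ((injective_iff_map_eq_zero _).mpr hkinj) _)).symm
  refine ⟨u, ⟨hmaple _ ?_, hmaple _ ?_⟩, ?_⟩
  · rintro _ ⟨a, ha, rfl⟩
    have h1 : ε ((u : EndV 𝕂 N) a) = (u : EndV 𝕂 N) a := by
      have := LinearMap.congr_fun hεk a
      rwa [Module.End.mul_apply, Module.End.mul_apply, hεa a ha] at this
    set y := (u : EndV 𝕂 N) a
    have h2 : pb y = 0 := by
      have h3 : pa y - pb y = pa y + pb y := by rw [hsum]; exact h1
      have h4 : (2 : 𝕂) • pb y = 0 := by
        calc (2 : 𝕂) • pb y = (pa y + pb y) - (pa y - pb y) := by rw [two_smul]; abel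
          _ = 0 := by rw [h3, sub_self]
      exact (smul_eq_zero.mp h4).resolve_left two
    have h5 := hsum y
    rw [h2, add_zero] at h5
    rw [← h5]; exact hpa y
  · rintro _ ⟨a, ha, rfl⟩
    have h1 : ε ((u : EndV 𝕂 N) a) = -(u : EndV 𝕂 N) a := by
      have := LinearMap.congr_fun hεk a
      rwa [Module.End.mul_apply, Module.End.mul_apply, hεb a ha, map_neg] at this
    set y := (u : EndV 𝕂 N) a
    have h2 : pa y = 0 := by
      have h3 : pa y - pb y = -(pa y + pb y) := by rw [hsum]; exact h1
      have h4 : (2 : 𝕂) • pa y = 0 := by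
        calc (2 : 𝕂) • pa y = (pa y + pb y) + (pa y - pb y) := by rw [two_smul]; abel
          _ = 0 := by rw [h3, add_neg_cancel]
      exact (smul_eq_zero.mp h4).resolve_left two
    have h5 := hsum y
    rw [h2, zero_add] at h5
    rw [← h5]; exact hpb y
  · rw [conjAct, hks, mul_assoc, Units.mul_inv, mul_one]
end

section
/- In type AI, the intersection of the GL(V)-orbit of a semisimple χ-self-adjoint element with p is a single SO(χ)-orbit: if χ is a nondegenerate symmetric bilinear form on V and s, s′ ∈ p are semisimple with s′ = g s g⁻¹ for some g ∈ GL(V), then there exists k ∈ Isom(χ) with det k = 1 such that s′ = k s k⁻¹. -/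
/-! In type AI, the intersection of the `GL(V)`-orbit of a semisimple `χ`-self-adjoint
element with `p` is a single `SO(χ)`-orbit. -/

namespace SymmetricPairAI

variable {𝕂 : Type*} [Field 𝕂] {N : ℕ}

/-- `gl(V)` for `V = 𝕂^N`. -/
abbrev EndV (𝕂 : Type*) [Field 𝕂] (N : ℕ) := Module.End 𝕂 (Fin N → 𝕂)

/-- Semisimple = diagonalizable: the eigenspaces span `V`. -/
def IsSemisimpleE (x : EndV 𝕂 N) : Prop :=
  (⨆ c : 𝕂, LinearMap.ker (x - c • (1 : EndV 𝕂 N))) = ⊤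

/-- `x` is self-adjoint for the bilinear form `χ`:  `χ(xu, v) = χ(u, xv)`. -/
def IsSelfAdjointB (χ : (Fin N → 𝕂) →ₗ[𝕂] (Fin N → 𝕂) →ₗ[𝕂] 𝕂) (x : EndV 𝕂 N) : Prop :=
  ∀ u v : Fin N → 𝕂, χ (x u) v = χ u (x v)

/-- `g ∈ GL(V)` is an isometry of `χ`. -/
def IsIsometryB (χ : (Fin N → 𝕂) →ₗ[𝕂] (Fin N → 𝕂) →ₗ[𝕂] 𝕂) (g : (EndV 𝕂 N)ˣ) : Prop :=
  ∀ u v : Fin N → 𝕂, χ ((g : EndV 𝕂 N) u) ((g : EndV 𝕂 N) v) = χ u v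

/-- The conjugation action `g.z = g z g⁻¹` of `GL(V)` on `gl(V)`. -/
def conjAct (g : (EndV 𝕂 N)ˣ) (z : EndV 𝕂 N) : EndV 𝕂 N :=
  (g : EndV 𝕂 N) * z * ((g⁻¹ : (EndV 𝕂 N)ˣ) : EndV 𝕂 N)

end SymmetricPairAI

open SymmetricPairAI

namespace SymmetricPairAI

open Polynomial

/-- An invertible endomorphism has a square root which is a polynomial in it. -/
theorem exists_sqrt_poly {K : Type*} [Field K] [IsAlgClosed K] [CharZero K] {A : Type*}
    [Ring A] [Algebra K A] [FiniteDimensional K A] (h : A) (hu : IsUnit h) :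
    ∃ p : K[X], aeval h p * aeval h p = h := by
  classical
  let S := Algebra.adjoin K {h}
  let _ : CommRing S := Algebra.adjoinCommRingOfComm K (by
    intro a ha b hb
    rw [Set.mem_singleton_iff.1 ha, Set.mem_singleton_iff.1 hb])
  let x : S := ⟨h, Algebra.subset_adjoin rfl⟩
  have haev : ∀ p : K[X], ((aeval x p : S) : A) = aeval h p := fun p =>
    (Polynomial.aeval_algHom_apply S.val x p).symm
  have : FiniteDimensional K S := inferInstance
  have : IsArtinianRing S := IsArtinianRing.of_finite K S
  have hx : IsUnit x := by
    apply IsArtinianRing.isUnit_of_mem_nonZeroDivisors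
    rw [mem_nonZeroDivisors_iff_right]
    intro z hz
    have hz' : (z : A) * h = 0 := congrArg Subtype.val hz
    apply Subtype.ext
    exact hu.mul_left_eq_zero.1 hz'
  choose r hr using fun c : K => IsAlgClosed.exists_pow_nat_eq c (n := 2) (by norm_num)
  set m := minpoly K h with hm
  have hint : IsIntegral K h := IsIntegral.of_finite K h
  let L : K[X] := Lagrange.interpolate m.roots.toFinset id r
  let q : K[X] := L ^ 2 - X
  have hq : ∀ c ∈ m.roots, (X - C c) ∣ q := by
    intro c hc
    rw [dvd_iff_isRoot, IsRoot.def]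
    have : eval c L = r c :=
      Lagrange.eval_interpolate_at_node (v := id) (s := m.roots.toFinset) r
        (Set.injOn_id _) (Multiset.mem_toFinset.2 hc)
    simp [q, this, hr]
  have hdvd : ∀ M : Multiset K, (∀ c ∈ M, (X - C c) ∣ q) →
      (M.map (X - C ·)).prod ∣ q ^ Multiset.card M := by
    intro M
    induction M using Multiset.induction with
    | empty => simp
    | cons a M ih =>
      intro hM
      simp only [Multiset.map_cons, Multiset.prod_cons, Multiset.card_cons, pow_succ']
      exact mul_dvd_mul (hM a (by simp)) (ih fun c hc => hM c (by simp [hc]))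
  have hmq : m ∣ q ^ Multiset.card m.roots := by
    have h1 := hdvd m.roots hq
    rwa [← (IsAlgClosed.splits m).eq_prod_roots_of_monic (minpoly.monic hint)] at h1
  have hnil : IsNilpotent ((aeval x L) ^ 2 - x) := by
    refine ⟨Multiset.card m.roots, ?_⟩
    apply Subtype.ext
    obtain ⟨w, hw⟩ := hmq
    have : ((aeval x L) ^ 2 - x) ^ Multiset.card m.roots
        = aeval x (q ^ Multiset.card m.roots) := by simp [q]
    rw [this, haev, hw, map_mul, hm, minpoly.aeval, zero_mul]
    rfl
  have hL : IsUnit (aeval x L) := by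
    have : IsUnit ((aeval x L) ^ 2) := by
      have h2 := IsNilpotent.isUnit_add_left_of_commute hnil hx (Commute.all _ _)
      simpa using h2
    exact (isUnit_pow_iff (by norm_num)).1 this
  have h2 : IsUnit (2 : S) := by
    have : (2 : S) = algebraMap K S 2 := (map_ofNat (algebraMap K S) 2).symm
    rw [this]
    exact (IsUnit.mk0 (2 : K) (by norm_num)).map _
  obtain ⟨y, ⟨_, hy⟩, _⟩ := Polynomial.existsUnique_nilpotent_sub_and_aeval_eq_zero
    (R := S) (S := S) (P := X ^ 2 - C x) (x := aeval x L) (by simpa using hnil)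
    (by simpa [one_add_one_eq_two] using h2.mul hL)
  have hyy : y * y = x := by
    have : y ^ 2 - x = 0 := by simpa using hy
    rw [← sq]; exact sub_eq_zero.1 this
  have hyA : (y : A) * y = h := congrArg Subtype.val hyy
  have : (y : A) ∈ Algebra.adjoin K {h} := y.2
  rw [Algebra.adjoin_singleton_eq_range_aeval] at this
  obtain ⟨p, hp⟩ := this
  refine ⟨p, ?_⟩
  have hp' : aeval h p = (y : A) := hp
  rw [hp', hyA]

section

variable {𝕂 : Type*} [Field 𝕂] {N : ℕ}

theorem selfAdjoint_aeval (χ : (Fin N → 𝕂) →ₗ[𝕂] (Fin N → 𝕂) →ₗ[𝕂] 𝕂) (h : EndV 𝕂 N)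
    (hh : IsSelfAdjointB χ h) (p : 𝕂[X]) : IsSelfAdjointB χ (aeval h p) := by
  induction p using Polynomial.induction_on' with
  | add p q hp hq =>
    intro u v
    simp [hp u v, hq u v]
  | monomial n a =>
    have key : ∀ n : ℕ, ∀ u v, χ ((h ^ n) u) v = χ u ((h ^ n) v) := by
      intro n
      induction n with
      | zero => simp
      | succ n ih =>
        intro u v
        rw [pow_succ, Module.End.mul_apply, ih, hh, ← Module.End.mul_apply,
          ← pow_succ', ← pow_succ]
    intro u v
    simp [aeval_monomial, key n u v]

theorem commute_aeval (h s : EndV 𝕂 N) (hc : h * s = s * h) (p : 𝕂[X]) :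
    aeval h p * s = s * aeval h p := by
  have : aeval h p ∈ Subalgebra.centralizer 𝕂 {s} := by
    refine Algebra.adjoin_le (S := Subalgebra.centralizer 𝕂 {s}) ?_
      (Polynomial.aeval_mem_adjoin_singleton 𝕂 h)
    rw [Set.singleton_subset_iff, SetLike.mem_coe, Subalgebra.mem_centralizer_iff]
    intro g hg
    rw [Set.mem_singleton_iff.1 hg, hc]
  rw [Subalgebra.mem_centralizer_iff] at this
  exact (this s rfl).symm

/-- The isometry part: no semisimplicity is needed. -/
theorem exists_isometry [IsAlgClosed 𝕂] [CharZero 𝕂]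
    (χ : (Fin N → 𝕂) →ₗ[𝕂] (Fin N → 𝕂) →ₗ[𝕂] 𝕂)
    (hχnd : ∀ u : Fin N → 𝕂, (∀ v : Fin N → 𝕂, χ u v = 0) → u = 0)
    (hχsym : ∀ u v : Fin N → 𝕂, χ u v = χ v u)
    (s s' : EndV 𝕂 N)
    (hs : IsSelfAdjointB χ s) (hs' : IsSelfAdjointB χ s')
    (g : (EndV 𝕂 N)ˣ) (hg : s' * g = g * s) :
    ∃ k : (EndV 𝕂 N)ˣ, IsIsometryB χ k ∧ s' * k = k * s := by
  have hinj : Function.Injective χ := by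
    rw [injective_iff_map_eq_zero]
    intro u hu
    exact hχnd u fun v => by rw [hu]; rfl
  have hext : ∀ a b, (∀ v, χ a v = χ b v) → a = b := fun a b hab => hinj (LinearMap.ext hab)
  let e : (Fin N → 𝕂) ≃ₗ[𝕂] Module.Dual 𝕂 (Fin N → 𝕂) :=
    LinearEquiv.ofInjectiveOfFinrankEq χ hinj Subspace.dual_finrank_eq.symm
  have he : ∀ u, e u = χ u := fun u => rfl
  let h : EndV 𝕂 N := e.symm.toLinearMap ∘ₗ (χ.compl₁₂ (g : EndV 𝕂 N) (g : EndV 𝕂 N))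
  have hh : ∀ u v, χ (h u) v = χ ((g : EndV 𝕂 N) u) ((g : EndV 𝕂 N) v) := by
    intro u v
    rw [← he]
    simp [h]
  have hgs : ∀ u, (g : EndV 𝕂 N) (s u) = s' ((g : EndV 𝕂 N) u) := fun u =>
    (LinearMap.congr_fun hg u).symm
  have hginv : ∀ v, (g : EndV 𝕂 N) (((g⁻¹ : (EndV 𝕂 N)ˣ) : EndV 𝕂 N) v) = v := fun v =>
    LinearMap.congr_fun g.mul_inv v
  have hginv' : ∀ v, ((g⁻¹ : (EndV 𝕂 N)ˣ) : EndV 𝕂 N) ((g : EndV 𝕂 N) v) = v := fun v =>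
    LinearMap.congr_fun g.inv_mul v
  have hcomm : h * s = s * h := by
    apply LinearMap.ext
    intro u
    apply hext
    intro v
    simp only [Module.End.mul_apply]
    rw [hh, hgs, hs', ← hgs, hs, hh]
  have hsa : IsSelfAdjointB χ h := by
    intro u v
    rw [hh, hχsym u, hh, hχsym]
  have hu : IsUnit h := by
    rw [Module.End.isUnit_iff]
    have : Function.Injective h := by
      rw [injective_iff_map_eq_zero]
      intro u hu
      have : (g : EndV 𝕂 N) u = 0 := by
        apply hχnd
        intro v
        rw [← hginv v, ← hh, hu]
        simp
      rw [← hginv' u, this, map_zero]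
    exact ⟨this, LinearMap.injective_iff_surjective.1 this⟩
  obtain ⟨p, hp⟩ := exists_sqrt_poly (K := 𝕂) h hu
  have hqu : IsUnit (aeval h p) := by
    have h3 : IsUnit (aeval h p * aeval h p) := by rw [hp]; exact hu
    rw [← sq] at h3
    exact (isUnit_pow_iff (by norm_num)).1 h3
  have hqsa := selfAdjoint_aeval χ h hsa p
  have hqc := commute_aeval h s hcomm p
  obtain ⟨q, hq⟩ := hqu
  rw [← hq] at hp hqsa hqc
  have hqinv : ∀ v, (q : EndV 𝕂 N) (((q⁻¹ : (EndV 𝕂 N)ˣ) : EndV 𝕂 N) v) = v := fun v =>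
    LinearMap.congr_fun q.mul_inv v
  refine ⟨g * q⁻¹, ?_, ?_⟩
  · intro u v
    simp only [Units.val_mul, Module.End.mul_apply]
    rw [← hh, ← hp, Module.End.mul_apply, hqsa, hqinv, hqinv]
  · have : ((q⁻¹ : (EndV 𝕂 N)ˣ) : EndV 𝕂 N) * s = s * ((q⁻¹ : (EndV 𝕂 N)ˣ) : EndV 𝕂 N) := by
      have hc : Commute (q : EndV 𝕂 N) s := hqc
      exact hc.units_inv_left
    rw [Units.val_mul, mul_assoc, this, ← mul_assoc, hg, mul_assoc]

theorem det_isometry (χ : (Fin N → 𝕂) →ₗ[𝕂] (Fin N → 𝕂) →ₗ[𝕂] 𝕂)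
    (hχnd : ∀ u : Fin N → 𝕂, (∀ v : Fin N → 𝕂, χ u v = 0) → u = 0)
    (k : (EndV 𝕂 N)ˣ) (hk : IsIsometryB χ k) :
    LinearMap.det (k : EndV 𝕂 N) = 1 ∨ LinearMap.det (k : EndV 𝕂 N) = -1 := by
  have h1 : χ.compl₁₂ (k : EndV 𝕂 N) (k : EndV 𝕂 N) = χ := by
    apply LinearMap.ext₂
    intro u v
    exact hk u v
  have h2 := congrArg (LinearMap.toMatrix₂' 𝕂) h1
  rw [LinearMap.toMatrix₂'_compl₁₂] at h2
  have h3 := congrArg Matrix.det h2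
  rw [Matrix.det_mul, Matrix.det_mul, Matrix.det_transpose, LinearMap.det_toMatrix'] at h3
  have h4 : (LinearMap.toMatrix₂' 𝕂 χ).det ≠ 0 := by
    exact (LinearMap.separatingLeft_iff_det_ne_zero (Pi.basisFun 𝕂 (Fin N))).1 hχnd
  have h5 : LinearMap.det (k : EndV 𝕂 N) * LinearMap.det (k : EndV 𝕂 N) = 1 := by
    apply mul_right_cancel₀ h4
    linear_combination h3
  exact mul_self_eq_one_iff.1 h5

/-- A semisimple self-adjoint map has a non-isotropic eigenvector, if `V ≠ 0`. -/
theorem exists_eigvec [CharZero 𝕂]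
    (χ : (Fin N → 𝕂) →ₗ[𝕂] (Fin N → 𝕂) →ₗ[𝕂] 𝕂)
    (hχsym : ∀ u v : Fin N → 𝕂, χ u v = χ v u)
    (s : EndV 𝕂 N) (hs : IsSelfAdjointB χ s) (hss : IsSemisimpleE s) (h0 : χ ≠ 0) :
    ∃ (c : 𝕂) (w : Fin N → 𝕂), s w = c • w ∧ χ w w ≠ 0 := by
  by_contra! hcon
  apply h0
  have horth : ∀ (c d : 𝕂) (u v : Fin N → 𝕂), s u = c • u → s v = d • v → χ u v = 0 := by
    intro c d u v hu hv
    by_cases hcd : c = d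
    · subst hcd
      have h1 := hcon c (u + v) (by rw [map_add, hu, hv, smul_add])
      have h2 := hcon c u hu
      have h3 := hcon c v hv
      simp only [map_add, LinearMap.add_apply, h2, h3, hχsym v u] at h1
      have h4 : (2 : 𝕂) * χ u v = 0 := by linear_combination h1
      simpa using h4
    · have h1 := hs u v
      rw [hu, hv] at h1
      simp only [map_smul, LinearMap.smul_apply, smul_eq_mul] at h1
      have h2 : (c - d) * χ u v = 0 := by linear_combination h1
      exact (mul_eq_zero.1 h2).resolve_left (sub_ne_zero.2 hcd)
  have hmem : ∀ (c : 𝕂) (u : Fin N → 𝕂), u ∈ LinearMap.ker (s - c • (1 : EndV 𝕂 N)) →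
      s u = c • u := by
    intro c u hu
    simpa [sub_eq_zero] using hu
  have hstep : ∀ (c : 𝕂) (u : Fin N → 𝕂), s u = c • u → χ u = 0 := by
    intro c u hu
    have : (⨆ c : 𝕂, LinearMap.ker (s - c • (1 : EndV 𝕂 N))) ≤ LinearMap.ker (χ u) :=
      iSup_le fun d v hv => horth c d u v hu (hmem d v hv)
    rw [hss, top_le_iff] at this
    exact LinearMap.ker_eq_top.1 this
  have : (⨆ c : 𝕂, LinearMap.ker (s - c • (1 : EndV 𝕂 N))) ≤ LinearMap.ker χ :=
    iSup_le fun d v hv => hstep d v (hmem d v hv)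
  rw [hss, top_le_iff] at this
  exact LinearMap.ker_eq_top.1 this

/-- The reflection in a non-isotropic eigenvector. -/
theorem exists_reflection
    (χ : (Fin N → 𝕂) →ₗ[𝕂] (Fin N → 𝕂) →ₗ[𝕂] 𝕂)
    (hχsym : ∀ u v : Fin N → 𝕂, χ u v = χ v u)
    (s : EndV 𝕂 N) (hs : IsSelfAdjointB χ s)
    (c : 𝕂) (w : Fin N → 𝕂) (hw : s w = c • w) (hww : χ w w ≠ 0) :
    ∃ r : (EndV 𝕂 N)ˣ, IsIsometryB χ r ∧ LinearMap.det (r : EndV 𝕂 N) = -1 ∧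
      s * r = r * s := by
  let R : EndV 𝕂 N := LinearMap.transvection ((-2 * (χ w w)⁻¹) • χ w) w
  have hR : ∀ v, R v = v + (-2 * (χ w w)⁻¹ * χ w v) • w := by
    intro v
    simp [R, LinearMap.transvection.apply]
  have hdet : LinearMap.det R = -1 := by
    simp only [R, LinearMap.transvection.det, LinearMap.smul_apply, smul_eq_mul]
    field_simp
    ring
  have hu : IsUnit R := by
    rw [LinearMap.isUnit_iff_isUnit_det, hdet]
    exact isUnit_one.neg
  obtain ⟨r, hr⟩ := hu
  refine ⟨r, ?_, by rw [hr, hdet], ?_⟩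
  · intro u v
    rw [hr, hR, hR]
    simp only [map_add, map_smul, LinearMap.add_apply, LinearMap.smul_apply, smul_eq_mul,
      hχsym u w]
    field_simp
    ring
  · rw [hr]
    apply LinearMap.ext
    intro v
    simp only [Module.End.mul_apply]
    rw [hR, hR, map_add, map_smul, hw, ← hs w v, hw]
    simp only [map_smul, LinearMap.smul_apply, smul_eq_mul, smul_smul]
    congr 2
    ring

end

end SymmetricPairAI

theorem semisimple_orbit_inter_p_typeAI {𝕂 : Type*} [Field 𝕂] [IsAlgClosed 𝕂] [CharZero 𝕂]
    {N : ℕ} (χ : (Fin N → 𝕂) →ₗ[𝕂] (Fin N → 𝕂) →ₗ[𝕂] 𝕂)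
    (hχnd : ∀ u : Fin N → 𝕂, (∀ v : Fin N → 𝕂, χ u v = 0) → u = 0)
    (hχsym : ∀ u v : Fin N → 𝕂, χ u v = χ v u)
    (s s' : EndV 𝕂 N)
    (hs : IsSelfAdjointB χ s) (hs' : IsSelfAdjointB χ s')
    (hss : IsSemisimpleE s) (hss' : IsSemisimpleE s')
    (g : (EndV 𝕂 N)ˣ) (hg : s' = conjAct g s) :
    ∃ k : (EndV 𝕂 N)ˣ, IsIsometryB χ k ∧ LinearMap.det (k : EndV 𝕂 N) = 1 ∧
      s' = conjAct k s := by
  have hg' : s' * g = g * s := by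
    rw [hg, conjAct, Units.inv_mul_cancel_right]
  have hconj : ∀ k : (EndV 𝕂 N)ˣ, s' * k = k * s → s' = conjAct k s := by
    intro k hk
    rw [conjAct, ← hk, Units.mul_inv_cancel_right]
  obtain ⟨k, hk, hks⟩ := exists_isometry χ hχnd hχsym s s' hs hs' g hg'
  rcases det_isometry χ hχnd k hk with hd | hd
  · exact ⟨k, hk, hd, hconj k hks⟩
  by_cases h0 : χ = 0
  · have hsub : Subsingleton (Fin N → 𝕂) := by
      refine ⟨fun a b => ?_⟩
      rw [hχnd a (by simp [h0]), hχnd b (by simp [h0])]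
    refine ⟨k, hk, ?_, hconj k hks⟩
    have : (k : EndV 𝕂 N) = 1 := LinearMap.ext fun v => Subsingleton.elim _ _
    rw [this, map_one]
  · obtain ⟨c, w, hw, hww⟩ := exists_eigvec χ hχsym s hs hss h0
    obtain ⟨r, hr, hrd, hrs⟩ := exists_reflection χ hχsym s hs c w hw hww
    refine ⟨k * r, ?_, ?_, ?_⟩
    · intro u v
      simp only [Units.val_mul, Module.End.mul_apply]
      rw [hk, hr]
    · rw [Units.val_mul, map_mul, hd, hrd]
      ring
    · apply hconj
      rw [Units.val_mul, ← mul_assoc, hks, mul_assoc, hrs, mul_assoc]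
end

section
/- In types AI and AII, isometry-conjugacy and GL-conjugacy agree on p: two χ-self-adjoint elements x, y ∈ p are conjugate under Isom(χ) if and only if they are conjugate under GL(V). -/
/-! In types AI and AII, isometry-conjugacy and `GL`-conjugacy agree on the space `p`
of `χ`-self-adjoint endomorphisms. -/

namespace SymmetricPairAIandAII

variable {𝕂 : Type*} [Field 𝕂] {N : ℕ}

/-- `gl(V)` for `V = 𝕂^N`. -/
abbrev EndV (𝕂 : Type*) [Field 𝕂] (N : ℕ) := Module.End 𝕂 (Fin N → 𝕂)

/-- `x` is self-adjoint for the bilinear form `χ`:  `χ(xu, v) = χ(u, xv)`. -/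
def IsSelfAdjointB (χ : (Fin N → 𝕂) →ₗ[𝕂] (Fin N → 𝕂) →ₗ[𝕂] 𝕂) (x : EndV 𝕂 N) : Prop :=
  ∀ u v : Fin N → 𝕂, χ (x u) v = χ u (x v)

/-- `g ∈ GL(V)` is an isometry of `χ`. -/
def IsIsometryB (χ : (Fin N → 𝕂) →ₗ[𝕂] (Fin N → 𝕂) →ₗ[𝕂] 𝕂) (g : (EndV 𝕂 N)ˣ) : Prop :=
  ∀ u v : Fin N → 𝕂, χ ((g : EndV 𝕂 N) u) ((g : EndV 𝕂 N) v) = χ u v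

/-- The conjugation action `g.z = g z g⁻¹` of `GL(V)` on `gl(V)`. -/
def conjAct (g : (EndV 𝕂 N)ˣ) (z : EndV 𝕂 N) : EndV 𝕂 N :=
  (g : EndV 𝕂 N) * z * ((g⁻¹ : (EndV 𝕂 N)ˣ) : EndV 𝕂 N)

end SymmetricPairAIandAII

open SymmetricPairAIandAII

/-- A product of linear factors with nonzero roots divides some `p ^ 2 - X`. -/
lemma exists_sqrt_multiset {𝕂 : Type*} [Field 𝕂] [IsAlgClosed 𝕂] [CharZero 𝕂]
    (s : Multiset 𝕂) (hs : ∀ a ∈ s, a ≠ 0) :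
    ∃ p : Polynomial 𝕂,
      (s.map (fun a => Polynomial.X - Polynomial.C a)).prod ∣ p ^ 2 - Polynomial.X := by
  induction s using Multiset.induction_on with
  | empty => exact ⟨0, by simp⟩
  | cons l s ih =>
    obtain ⟨p, q, hq⟩ := ih (fun a ha => hs a (Multiset.mem_cons_of_mem ha))
    have hl : l ≠ 0 := hs l (Multiset.mem_cons_self l s)
    rw [Multiset.map_cons, Multiset.prod_cons]
    generalize (s.map (fun a => Polynomial.X - Polynomial.C a)).prod = m at hq ⊢
    have key : ∀ c : 𝕂, (p + Polynomial.C c * m) ^ 2 - Polynomial.X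
        = m * (q + 2 * Polynomial.C c * p + Polynomial.C c ^ 2 * m) := by
      intro c
      linear_combination hq
    have hqe := congrArg (Polynomial.eval l) hq
    simp only [Polynomial.eval_sub, Polynomial.eval_pow, Polynomial.eval_X,
      Polynomial.eval_mul] at hqe
    have : ∃ c : 𝕂, Polynomial.IsRoot
        (q + 2 * Polynomial.C c * p + Polynomial.C c ^ 2 * m) l := by
      by_cases hm : m.eval l = 0
      · have hp : p.eval l ≠ 0 := by
          intro hp
          rw [hp, hm] at hqe
          apply hl
          linear_combination -hqe
        refine ⟨-(q.eval l) / (2 * p.eval l), ?_⟩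
        simp only [Polynomial.IsRoot.def, Polynomial.eval_add, Polynomial.eval_mul,
          Polynomial.eval_pow, Polynomial.eval_C, hm, Polynomial.eval_ofNat]
        field_simp
        ring
      · obtain ⟨r, hr⟩ := IsAlgClosed.exists_pow_nat_eq l (n := 2) (by norm_num)
        refine ⟨(r - p.eval l) / m.eval l, ?_⟩
        simp only [Polynomial.IsRoot.def, Polynomial.eval_add, Polynomial.eval_mul,
          Polynomial.eval_pow, Polynomial.eval_C, Polynomial.eval_ofNat]
        field_simp
        linear_combination hr - hqe
    obtain ⟨c, hc⟩ := this
    refine ⟨p + Polynomial.C c * m, ?_⟩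
    rw [key c, mul_comm]
    exact mul_dvd_mul_left m (Polynomial.dvd_iff_isRoot.mpr hc)

/-- An injective endomorphism has a square root which is a polynomial in it. -/
lemma exists_sqrt_aeval {𝕂 : Type*} [Field 𝕂] [IsAlgClosed 𝕂] [CharZero 𝕂]
    {N : ℕ} (s : EndV 𝕂 N) (hs : ∀ u, s u = 0 → u = 0) :
    ∃ p : Polynomial 𝕂, Polynomial.aeval s p * Polynomial.aeval s p = s := by
  obtain ⟨p, hp⟩ := exists_sqrt_multiset s.charpoly.roots (by
    rintro a ha rfl
    have h1 := (Polynomial.mem_roots'.mp ha).2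
    rw [← Module.End.hasEigenvalue_iff_isRoot_charpoly] at h1
    obtain ⟨v, hv⟩ := h1.exists_hasEigenvector
    exact hv.2 (hs v (by simpa using hv.apply_eq_smul)))
  refine ⟨p, ?_⟩
  have hsp := IsAlgClosed.splits s.charpoly
  have hm : s.charpoly.Monic := LinearMap.charpoly_monic s
  rw [← hsp.eq_prod_roots_of_monic hm] at hp
  obtain ⟨q, hq⟩ := hp
  have := congrArg (Polynomial.aeval s) hq
  simp only [map_sub, map_pow, map_mul, Polynomial.aeval_X, LinearMap.aeval_self_charpoly,
    zero_mul] at this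
  rw [← pow_two]
  exact sub_eq_zero.mp this

theorem isometry_conj_iff_GL_conj_on_p {𝕂 : Type*} [Field 𝕂] [IsAlgClosed 𝕂] [CharZero 𝕂]
    {N : ℕ} (χ : (Fin N → 𝕂) →ₗ[𝕂] (Fin N → 𝕂) →ₗ[𝕂] 𝕂)
    (hχnd : ∀ u : Fin N → 𝕂, (∀ v : Fin N → 𝕂, χ u v = 0) → u = 0)
    (hχ : (∀ u v : Fin N → 𝕂, χ u v = χ v u) ∨ (∀ u : Fin N → 𝕂, χ u u = 0))
    (x y : EndV 𝕂 N)
    (hx : IsSelfAdjointB χ x) (hy : IsSelfAdjointB χ y) :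
    (∃ k : (EndV 𝕂 N)ˣ, IsIsometryB χ k ∧ y = conjAct k x) ↔
    (∃ g : (EndV 𝕂 N)ˣ, y = conjAct g x) := by
  refine ⟨fun ⟨k, _, h⟩ => ⟨k, h⟩, ?_⟩
  rintro ⟨g, hg⟩
  obtain ⟨ε, hε⟩ : ∃ ε : 𝕂, ∀ u v, χ u v = ε * χ v u := by
    rcases hχ with h | h
    · exact ⟨1, fun u v => by rw [one_mul, h]⟩
    · refine ⟨-1, fun u v => ?_⟩
      have := h (u + v)
      simp only [map_add, LinearMap.add_apply, h] at this
      linear_combination this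
  have hinj : Function.Injective χ := by
    rw [injective_iff_map_eq_zero]
    intro u hu
    exact hχnd u (fun v => by rw [hu]; rfl)
  have hext : ∀ a b, (∀ v, χ a v = χ b v) → a = b := fun a b h => hinj (LinearMap.ext h)
  let e : (Fin N → 𝕂) ≃ₗ[𝕂] Module.Dual 𝕂 (Fin N → 𝕂) :=
    LinearEquiv.ofInjectiveOfFinrankEq χ hinj (Subspace.dual_finrank_eq).symm
  let s : EndV 𝕂 N := e.symm.toLinearMap ∘ₗ (χ.compl₁₂ (g : EndV 𝕂 N) (g : EndV 𝕂 N))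
  have hs : ∀ u v, χ (s u) v = χ ((g : EndV 𝕂 N) u) ((g : EndV 𝕂 N) v) := by
    intro u v
    have h1 : e (s u) = (χ.compl₁₂ (g : EndV 𝕂 N) (g : EndV 𝕂 N)) u :=
      e.apply_symm_apply _
    exact LinearMap.congr_fun h1 v
  clear_value s
  have hssa : ∀ u v, χ (s u) v = χ u (s v) := by
    intro u v
    rw [hs, hε, ← hs, ← hε]
  have hgu : ∀ u, ((g⁻¹ : (EndV 𝕂 N)ˣ) : EndV 𝕂 N) ((g : EndV 𝕂 N) u) = u := by
    intro u
    rw [← Module.End.mul_apply, Units.inv_mul, Module.End.one_apply]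
  have hyg : ∀ u, y ((g : EndV 𝕂 N) u) = (g : EndV 𝕂 N) (x u) := by
    intro u
    rw [hg, conjAct, Module.End.mul_apply, Module.End.mul_apply, hgu]
  have hcomm : Commute s x := by
    refine LinearMap.ext fun u => hext _ _ fun v => ?_
    rw [Module.End.mul_apply, Module.End.mul_apply, hs, ← hyg, hy, hyg, ← hs, hx]
  have hs0 : ∀ u, s u = 0 → u = 0 := by
    intro u hu
    rw [← hgu u]
    rw [hext ((g : EndV 𝕂 N) u) 0, map_zero]
    intro v
    have h1 := hs u (((g⁻¹ : (EndV 𝕂 N)ˣ) : EndV 𝕂 N) v)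
    rw [← Module.End.mul_apply, Units.mul_inv, Module.End.one_apply, hu] at h1
    rw [← h1, map_zero, LinearMap.zero_apply, LinearMap.zero_apply]
  obtain ⟨p, hp⟩ := exists_sqrt_aeval s hs0
  have hsa : ∀ u v, χ (Polynomial.aeval s p u) v = χ u (Polynomial.aeval s p v) := by
    clear hp
    induction p using Polynomial.induction_on' with
    | add a b ha hb => intro u v; simp [ha, hb]
    | monomial n a =>
      have hn : ∀ u v, χ ((s ^ n) u) v = χ u ((s ^ n) v) := by
        induction n with
        | zero => intro u v; rfl
        | succ n ih =>
          intro u v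
          rw [pow_succ, Module.End.mul_apply, ih, hssa, ← Module.End.mul_apply,
            ← pow_succ', ← pow_succ]
      intro u v
      simp [Polynomial.aeval_monomial, Module.algebraMap_end_eq_smul_id, hn]
  have hcx : Commute (Polynomial.aeval s p) x := by
    have h1 : Polynomial.aeval s p ∈ Algebra.adjoin 𝕂 {s} :=
      Polynomial.aeval_mem_adjoin_singleton 𝕂 s
    exact (Algebra.commute_of_mem_adjoin_singleton_of_commute h1 hcomm.symm).symm
  generalize Polynomial.aeval s p = h at hp hsa hcx
  have hu : IsUnit h := by
    rw [LinearMap.isUnit_iff_ker_eq_bot, LinearMap.ker_eq_bot']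
    intro u hu
    apply hs0
    rw [← hp, Module.End.mul_apply, hu, map_zero]
  obtain ⟨h, rfl⟩ := hu
  have hhu : ∀ u, (h : EndV 𝕂 N) (((h⁻¹ : (EndV 𝕂 N)ˣ) : EndV 𝕂 N) u) = u := by
    intro u
    rw [← Module.End.mul_apply, Units.mul_inv, Module.End.one_apply]
  refine ⟨g * h⁻¹, ?_, ?_⟩
  · intro u v
    rw [Units.val_mul, Module.End.mul_apply, Module.End.mul_apply, ← hs, ← hp,
      Module.End.mul_apply, hhu, hsa, hhu]
  · have h2 : ((h⁻¹ : (EndV 𝕂 N)ˣ) : EndV 𝕂 N) * x * (h : EndV 𝕂 N) = x := by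
      rw [mul_assoc, ← hcx.eq, ← mul_assoc, Units.inv_mul, one_mul]
    rw [hg, conjAct, conjAct, mul_inv_rev, inv_inv, Units.val_mul, Units.val_mul]
    conv_lhs => rw [← h2]
    simp only [mul_assoc]
end

section
/- (Ohta's conjugacy transfer theorem.) Let κ be a 𝕂-algebra automorphism of the associative algebra gl_N(𝕂) with κ∘κ = id, and let x ↦ x* be a 𝕂-linear anti-automorphism of gl_N(𝕂) (so (xy)* = y*x* and (x*)* = x) which commutes with κ. Set G′ := {g ∈ gl_N(𝕂) invertible : κ(g) = g} and G″ := {g ∈ G′ : g* = g⁻¹}, and σ(x) := −x*. Fix η, η′ ∈ {+1, −1}. Then two elements x, y ∈ gl_N(𝕂) satisfying σ(x) = ηx, κ(x) = η′x, σ(y) = ηy, κ(y) = η′y are conjugate under G″ if and only if they are conjugate under G′. -/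
open Polynomial in
theorem exists_sqrt_aeval_s4 {𝕂 : Type*} [Field 𝕂] [IsAlgClosed 𝕂] [CharZero 𝕂] {N : ℕ}
    (h : Matrix (Fin N) (Fin N) 𝕂) (hu : IsUnit h) :
    ∃ p : 𝕂[X], aeval h p * aeval h p = h := by
  classical
  choose r hr using fun a : 𝕂 => IsAlgClosed.exists_pow_nat_eq a (n := 2) (by norm_num)
  let q : 𝕂[X] := Lagrange.interpolate h.charpoly.roots.toFinset id r
  have hq : ∀ a ∈ h.charpoly.roots, (X - C a) ∣ q ^ 2 - X := by
    intro a ha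
    rw [dvd_iff_isRoot, IsRoot.def]
    have := Lagrange.eval_interpolate_at_node (v := id) (s := h.charpoly.roots.toFinset) r
      (Set.injOn_id _) (Multiset.mem_toFinset.2 ha)
    simp only [id] at this
    simp only [eval_sub, eval_pow, eval_X, q]
    erw [this]
    rw [hr, sub_self]
  have hdvd : h.charpoly ∣ (q ^ 2 - X) ^ h.charpoly.roots.card := by
    have h1 := (IsAlgClosed.splits h.charpoly).eq_prod_roots_of_monic h.charpoly_monic
    conv_lhs => rw [h1]
    have := Multiset.prod_dvd_prod_of_dvd (S := h.charpoly.roots) (fun a => X - C a)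
      (fun _ => q ^ 2 - X) hq
    simpa using this
  have hnil : (aeval h (q ^ 2 - X)) ^ h.charpoly.roots.card = 0 := by
    rw [← map_pow]
    obtain ⟨c, hc⟩ := hdvd
    rw [hc, map_mul, Matrix.aeval_self_charpoly, zero_mul]
  let A := Algebra.adjoin 𝕂 {h}
  let h' : A := ⟨h, Algebra.self_mem_adjoin_singleton 𝕂 h⟩
  have hh' : IsUnit h' := by
    have : IsArtinianRing A := IsArtinianRing.of_finite 𝕂 A
    apply IsArtinianRing.isUnit_of_mem_nonZeroDivisors
    rw [mem_nonZeroDivisors_iff_right]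
    intro z hz
    have hz' : (z : Matrix (Fin N) (Fin N) 𝕂) * h = 0 := congrArg Subtype.val hz
    exact Subtype.ext (hu.mul_left_eq_zero.1 hz')
  let x0 : A := aeval h' q
  have hx0 : IsNilpotent (x0 ^ 2 - h') := by
    refine ⟨h.charpoly.roots.card, Subtype.ext ?_⟩
    have e : ((x0 : A) : Matrix (Fin N) (Fin N) 𝕂) = aeval h q := by
      simp [x0, h', coe_aeval_mk_apply]
    simpa [e, h'] using hnil
  have hx0u : IsUnit x0 := by
    have : IsUnit (h' + (x0 ^ 2 - h')) :=
      hx0.isUnit_add_left_of_commute hh' (Commute.all _ _)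
    rw [add_sub_cancel] at this
    exact (isUnit_pow_iff two_ne_zero).1 this
  have h2 : IsUnit (2 : A) := by
    have := (IsUnit.mk0 (2 : 𝕂) two_ne_zero).map (algebraMap 𝕂 A)
    rwa [map_ofNat] at this
  obtain ⟨s, ⟨-, hs⟩, -⟩ := existsUnique_nilpotent_sub_and_aeval_eq_zero
    (P := (X ^ 2 - C h' : A[X])) (x := x0) (by simpa using hx0)
    (by simpa [one_add_one_eq_two] using And.intro h2 hx0u)
  have hs2 : s ^ 2 = h' := by
    simpa [sub_eq_zero] using hs
  have hm : (s : Matrix (Fin N) (Fin N) 𝕂) ∈ Algebra.adjoin 𝕂 {h} := s.2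
  rw [Algebra.adjoin_singleton_eq_range_aeval] at hm
  obtain ⟨p, hp⟩ := hm
  refine ⟨p, ?_⟩
  have hp' : aeval h p = (s : Matrix (Fin N) (Fin N) 𝕂) := hp
  rw [hp', ← pow_two]
  exact congrArg Subtype.val hs2

theorem ohta_conjugacy_transfer {𝕂 : Type*} [Field 𝕂] [IsAlgClosed 𝕂] [CharZero 𝕂] {N : ℕ}
    (κ : Matrix (Fin N) (Fin N) 𝕂 ≃ₐ[𝕂] Matrix (Fin N) (Fin N) 𝕂)
    (hκ : ∀ x : Matrix (Fin N) (Fin N) 𝕂, κ (κ x) = x)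
    (st : Matrix (Fin N) (Fin N) 𝕂 →ₗ[𝕂] Matrix (Fin N) (Fin N) 𝕂)
    (hst_mul : ∀ x y : Matrix (Fin N) (Fin N) 𝕂, st (x * y) = st y * st x)
    (hst_invol : ∀ x : Matrix (Fin N) (Fin N) 𝕂, st (st x) = x)
    (hcomm : ∀ x : Matrix (Fin N) (Fin N) 𝕂, κ (st x) = st (κ x))
    (η η' : 𝕂) (hη : η = 1 ∨ η = -1) (hη' : η' = 1 ∨ η' = -1)
    (x y : Matrix (Fin N) (Fin N) 𝕂)
    (hxσ : -st x = η • x) (hxκ : κ x = η' • x)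
    (hyσ : -st y = η • y) (hyκ : κ y = η' • y) :
    (∃ g : (Matrix (Fin N) (Fin N) 𝕂)ˣ,
        κ (g : Matrix (Fin N) (Fin N) 𝕂) = (g : Matrix (Fin N) (Fin N) 𝕂) ∧
        st (g : Matrix (Fin N) (Fin N) 𝕂) = ((g⁻¹ : (Matrix (Fin N) (Fin N) 𝕂)ˣ) : Matrix (Fin N) (Fin N) 𝕂) ∧
        y = (g : Matrix (Fin N) (Fin N) 𝕂) * x * ((g⁻¹ : (Matrix (Fin N) (Fin N) 𝕂)ˣ) : Matrix (Fin N) (Fin N) 𝕂)) ↔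
    (∃ g : (Matrix (Fin N) (Fin N) 𝕂)ˣ,
        κ (g : Matrix (Fin N) (Fin N) 𝕂) = (g : Matrix (Fin N) (Fin N) 𝕂) ∧
        y = (g : Matrix (Fin N) (Fin N) 𝕂) * x * ((g⁻¹ : (Matrix (Fin N) (Fin N) 𝕂)ˣ) : Matrix (Fin N) (Fin N) 𝕂)) := by
  constructor
  · rintro ⟨g, h1, -, h3⟩
    exact ⟨g, h1, h3⟩
  rintro ⟨g, hg, hy⟩
  have st1 : st 1 = 1 := by
    have := hst_mul 1 (st 1)
    rw [hst_invol, one_mul, hst_invol] at this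
    exact this.symm
  set G : Matrix (Fin N) (Fin N) 𝕂 := (g : Matrix (Fin N) (Fin N) 𝕂) with hG
  set Gi : Matrix (Fin N) (Fin N) 𝕂 := ((g⁻¹ : (Matrix (Fin N) (Fin N) 𝕂)ˣ) : Matrix (Fin N) (Fin N) 𝕂) with hGi
  have gi : G * Gi = 1 := g.mul_inv
  have ig : Gi * G = 1 := g.inv_mul
  have s1 : st Gi * st G = 1 := by rw [← hst_mul, gi, st1]
  have s2 : st G * st Gi = 1 := by rw [← hst_mul, ig, st1]
  have hyg : y * G = G * x := by rw [hy, mul_assoc, ig, mul_one]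
  have hη2 : η * η = 1 := by rcases hη with rfl | rfl <;> simp
  have stx : st x = (-η) • x := by rw [neg_smul, ← hxσ, neg_neg]
  have sty : st y = (-η) • y := by rw [neg_smul, ← hyσ, neg_neg]
  have hgy : st G * y = x * st G := by
    have := congrArg st hyg
    rw [hst_mul, hst_mul, stx, sty, mul_smul_comm, smul_mul_assoc] at this
    have h3 := congrArg (fun z => (-η) • z) this
    simpa [smul_smul, hη2] using h3
  obtain ⟨p, hp⟩ := exists_sqrt_aeval_s4 (st G * G)
    ⟨⟨st G * G, Gi * st Gi, by rw [mul_assoc, ← mul_assoc G, gi, one_mul, s2],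
      by rw [mul_assoc, ← mul_assoc (st Gi), s1, one_mul, ig]⟩, rfl⟩
  have hH1 : st (st G * G) = st G * G := by rw [hst_mul, hst_invol]
  have hH2 : κ (st G * G) = st G * G := by rw [map_mul, hcomm, hg]
  have hH3 : Commute (st G * G) x := by
    show st G * G * x = x * (st G * G)
    rw [mul_assoc, ← hyg, ← mul_assoc, hgy, mul_assoc]
  have hHu : (st G * G) * (Gi * st Gi) = 1 := by
    rw [mul_assoc, ← mul_assoc G, gi, one_mul, s2]
  generalize hHdef : st G * G = H at hp hH1 hH2 hH3 hHu
  have hpow : ∀ n : ℕ, st (H ^ n) = H ^ n := by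
    intro n
    induction n with
    | zero => simpa using st1
    | succ n ih => rw [pow_succ, hst_mul, ih, hH1, ← pow_succ, ← pow_succ']
  have hsst : st (Polynomial.aeval H p) = Polynomial.aeval H p := by
    rw [Polynomial.aeval_eq_sum_range, map_sum]
    simp only [map_smul, hpow]
  have hsκ : κ (Polynomial.aeval H p) = Polynomial.aeval H p := by
    have := Polynomial.aeval_algHom_apply κ.toAlgHom H p
    have e : κ.toAlgHom H = H := hH2
    rw [e] at this
    exact this.symm
  have hsx : Commute (Polynomial.aeval H p) x := by
    rw [Polynomial.aeval_eq_sum_range]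
    exact Commute.sum_left _ _ _ fun i _ => ((hH3.pow_left i).smul_left _)
  generalize Polynomial.aeval H p = S at hp hsst hsκ hsx
  have hSu : S * (S * (Gi * st Gi)) = 1 := by rw [← mul_assoc, hp, hHu]
  have hSu' := mul_eq_one_comm.1 hSu
  let u : (Matrix (Fin N) (Fin N) 𝕂)ˣ := ⟨S, _, hSu, hSu'⟩
  have hu : (u : Matrix (Fin N) (Fin N) 𝕂) = S := rfl
  set T : Matrix (Fin N) (Fin N) 𝕂 := ((u⁻¹ : (Matrix (Fin N) (Fin N) 𝕂)ˣ) : Matrix (Fin N) (Fin N) 𝕂) with hT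
  have hST : S * T = 1 := u.mul_inv
  have hTS : T * S = 1 := u.inv_mul
  have hstT : st T = T := by
    have h1 : S * st T = 1 := by rw [← hsst, ← hst_mul, hTS, st1]
    calc st T = T * S * st T := by rw [hTS, one_mul]
      _ = T := by rw [mul_assoc, h1, mul_one]
  have hκT : κ T = T := by
    have h1 : S * κ T = 1 := by rw [← hsκ, ← map_mul, hST, map_one]
    calc κ T = T * S * κ T := by rw [hTS, one_mul]
      _ = T := by rw [mul_assoc, h1, mul_one]
  have hinv : (((g * u⁻¹)⁻¹ : (Matrix (Fin N) (Fin N) 𝕂)ˣ) : Matrix (Fin N) (Fin N) 𝕂) = S * Gi := by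
    rw [mul_inv_rev, inv_inv, Units.val_mul]
  have hval : ((g * u⁻¹ : (Matrix (Fin N) (Fin N) 𝕂)ˣ) : Matrix (Fin N) (Fin N) 𝕂) = G * T :=
    Units.val_mul _ _
  refine ⟨g * u⁻¹, ?_, ?_, ?_⟩
  · rw [hval, map_mul, hg, hκT]
  · rw [hval, hinv, hst_mul, hstT]
    have : st G = S * S * Gi := by rw [hp, ← hHdef, mul_assoc, gi, mul_one]
    rw [this, mul_assoc, ← mul_assoc, hTS, one_mul]
  · rw [hval, hinv, hy]
    have : T * x * S = x := by rw [mul_assoc, ← hsx.eq, ← mul_assoc, hTS, one_mul]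
    calc G * x * Gi = G * (T * x * S) * Gi := by rw [this]
      _ = _ := by simp only [mul_assoc]
end

section
/- In types AI and AII, the Jordan K-classes contained in the intersection of a Jordan G-class with p are conjugate under the isometry group: if x, y ∈ p are Jordan G-equivalent, i.e. g·g^x·g⁻¹ = g^y for some g ∈ GL(V), then there exists k ∈ Isom(χ) with k·p^x·k⁻¹ = p^y, where p^x := p ∩ g^x and p^y := p ∩ g^y. -/
/-! In types AI and AII, the Jordan `K`-classes contained in the intersection of a Jordan
`G`-class with `p` are conjugate under the isometry group of `χ`. -/

namespace SymmetricPairAIandAII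

variable {𝕂 : Type*} [Field 𝕂] {N : ℕ}

/-- `p`, the space of `χ`-self-adjoint endomorphisms, as a subset of `gl(V)`. -/
def pSet (χ : (Fin N → 𝕂) →ₗ[𝕂] (Fin N → 𝕂) →ₗ[𝕂] 𝕂) : Set (EndV 𝕂 N) :=
  {x | IsSelfAdjointB χ x}

/-- The centralizer `g^x` of `x` in `gl(V)`. -/
def cent (x : EndV 𝕂 N) : Set (EndV 𝕂 N) := {z | z * x = x * z}

end SymmetricPairAIandAII

open SymmetricPairAIandAII

open Polynomial

/-- Double centralizer theorem for a single endomorphism. -/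
theorem bicommutant_mem_adjoin {K V : Type*} [Field K] [AddCommGroup V] [Module K V]
    [FiniteDimensional K V] (y z : Module.End K V)
    (hz : ∀ f : Module.End K V, f * y = y * f → f * z = z * f) :
    z ∈ Algebra.adjoin K {y} := by
  classical
  obtain ⟨v, hv⟩ : ∃ v : V, ∀ p : K[X], aeval y p v = 0 → aeval y p = 0 := by
    have : Module.Finite K[X] (Module.AEval' y) := inferInstance
    obtain ⟨v, hv⟩ := Module.exists_ker_toSpanSingleton_eq_annihilator
      (R := K[X]) (M := Module.AEval' y)
    refine ⟨(Module.AEval'.of y).symm v, fun p hp => ?_⟩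
    have h1 : p ∈ LinearMap.ker (LinearMap.toSpanSingleton K[X] _ v) := by
      rw [LinearMap.mem_ker, LinearMap.toSpanSingleton_apply]
      obtain ⟨w, rfl⟩ := (Module.AEval'.of y).surjective v
      simp only [LinearEquiv.symm_apply_apply] at hp
      have := Module.AEval.of_aeval_smul (R := K) (M := V) y p w
      rw [Module.AEval'.of] at *
      rw [← this]
      simp [hp]
    rw [hv, Module.mem_annihilator] at h1
    ext1 w
    have h2 := h1 (Module.AEval'.of y w)
    have := Module.AEval.of_aeval_smul (R := K) (M := V) y p w
    rw [Module.AEval'.of] at *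
    rw [← this] at h2
    simpa using h2
  set m := minpoly K y with hm
  have hmon : m.Monic := minpoly.monic (Algebra.IsIntegral.isIntegral y)
  set d := m.natDegree with hd
  -- the functional
  obtain ⟨l, hl⟩ : ∃ l : V →ₗ[K] K, ∀ p ∈ degreeLT K d, l (aeval y p v) = p.coeff (d - 1) := by
    let ev : degreeLT K d →ₗ[K] V :=
      (LinearMap.applyₗ v) ∘ₗ (aeval y).toLinearMap ∘ₗ (degreeLT K d).subtype
    have hev : ∀ p, ev p = aeval y (p : K[X]) v := fun p => rfl
    have hinj : LinearMap.ker ev = ⊥ := by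
      rw [LinearMap.ker_eq_bot']
      intro p hp
      rw [hev] at hp
      have h0 := hv _ hp
      have hdvd : m ∣ (p : K[X]) := minpoly.dvd K y h0
      have hlt := p.2
      rw [mem_degreeLT] at hlt
      ext1
      refine Polynomial.eq_zero_of_dvd_of_degree_lt hdvd ?_
      rwa [degree_eq_natDegree hmon.ne_zero]
    obtain ⟨r, hr⟩ := LinearMap.exists_leftInverse_of_injective ev hinj
    refine ⟨(lcoeff K (d-1)) ∘ₗ (degreeLT K d).subtype ∘ₗ r, fun p hp => ?_⟩
    have : r (aeval y p v) = ⟨p, hp⟩ := by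
      have := LinearMap.congr_fun hr ⟨p, hp⟩
      simpa [hev] using this
    simp [this]
  let A := Algebra.adjoin K {y}
  have hcomm : ∀ a b : A, a * b = b * a := fun a b => mul_comm a b
  let T : A →ₗ[K] Module.Dual K A :=
    LinearMap.mk₂ K (fun b a => l ((a : Module.End K V) ((b : Module.End K V) v)))
      (by intros; simp) (by intros; simp) (by intros; simp) (by intros; simp)
  have hT : ∀ b a, T b a = l ((a : Module.End K V) ((b : Module.End K V) v)) := fun _ _ => rfl
  have hTinj : Function.Injective T := by
    rw [← LinearMap.ker_eq_bot, LinearMap.ker_eq_bot']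
    rintro ⟨b, hb⟩ h
    have hb' : b ∈ (aeval (R := K) y).range := by
      rw [← Algebra.adjoin_singleton_eq_range_aeval K y]; exact hb
    obtain ⟨q, hqb⟩ := hb'
    change aeval y q = b at hqb
    subst hqb
    have hq' : aeval y q = aeval y (q %ₘ m) := by
      conv_lhs => rw [← modByMonic_add_div q m]
      simp [hm]
    ext1
    change aeval y q = 0
    by_cases hne : q %ₘ m = 0
    · rw [hq', hne, map_zero]
    exfalso
    set r := q %ₘ m with hr
    have hrdeg : r.degree < m.degree := degree_modByMonic_lt q hmon
    have hrn : r.natDegree < d := natDegree_lt_natDegree hne hrdeg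
    have hy : (aeval y (X ^ (d - 1 - r.natDegree) : K[X])) ∈ A := by
      change _ ∈ Algebra.adjoin K {y}; rw [Algebra.adjoin_singleton_eq_range_aeval]; exact ⟨_, rfl⟩
    have h1 : T ⟨aeval y q, hb⟩ ⟨_, hy⟩ = 0 := by
      have := LinearMap.congr_fun h ⟨_, hy⟩
      exact this
    rw [hT] at h1
    change l ((aeval y (X ^ (d - 1 - r.natDegree) : K[X])) ((aeval y q) v)) = 0 at h1
    rw [hq', ← Module.End.mul_apply, ← map_mul, hl] at h1
    · rw [show d - 1 = r.natDegree + (d - 1 - r.natDegree) by omega] at h1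
      rw [show r.natDegree + (d - 1 - r.natDegree) - r.natDegree = d - 1 - r.natDegree by omega,
        mul_comm, coeff_mul_X_pow] at h1
      exact hne (leadingCoeff_eq_zero.mp h1)
    · rw [mem_degreeLT, mul_comm, degree_mul, degree_X_pow, degree_eq_natDegree hne]
      norm_cast
      omega
  let Te : A ≃ₗ[K] Module.Dual K A :=
    LinearEquiv.ofInjectiveOfFinrankEq T hTinj (Subspace.dual_finrank_eq).symm
  have hTe : ∀ b, Te b = T b := fun b => rfl
  let R : V →ₗ[K] Module.Dual K A :=
    LinearMap.mk₂ K (fun u a => l ((a : Module.End K V) u))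
      (by intros; simp) (by intros; simp) (by intros; simp) (by intros; simp)
  have hR : ∀ u a, R u a = l ((a : Module.End K V) u) := fun _ _ => rfl
  let π : V →ₗ[K] A := Te.symm.toLinearMap ∘ₗ R
  have hπ : ∀ u, T (π u) = R u := fun u => Te.apply_symm_apply (R u)
  have hπv : π v = 1 := by
    apply hTinj
    rw [hπ]
    ext a
    simp [hT, hR]
  let Y : A := ⟨y, Algebra.self_mem_adjoin_singleton K y⟩
  have hπy : ∀ u, π (y u) = Y * π u := by
    intro u
    apply hTinj
    rw [hπ]
    ext a
    have h1 := LinearMap.congr_fun (hπ u) (a * Y)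
    rw [hT, hR] at h1
    rw [hT, hR]
    exact h1.symm
  have hzA : z = (π (z v) : Module.End K V) := by
    ext1 w
    let φ : Module.End K V := (LinearMap.applyₗ w) ∘ₗ A.val.toLinearMap ∘ₗ π
    have hφ : ∀ u, φ u = (π u : Module.End K V) w := fun u => rfl
    have hφy : φ * y = y * φ := by
      ext1 u
      rw [Module.End.mul_apply, Module.End.mul_apply, hφ, hφ, hπy]
      rfl
    have h2 := LinearMap.congr_fun (hz φ hφy) v
    rw [Module.End.mul_apply, Module.End.mul_apply, hφ, hφ, hπv] at h2
    simpa using h2.symm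
  rw [hzA]
  exact (π (z v)).2

/-- A square root of an invertible endomorphism, polynomial in it. -/
theorem exists_sqrt_mem_adjoin {K V : Type*} [Field K] [IsAlgClosed K] [CharZero K]
    [AddCommGroup V] [Module K V]
    [FiniteDimensional K V] (s : Module.End K V) (hs : IsUnit s) :
    ∃ h ∈ Algebra.adjoin K {s}, h * h = s := by
  classical
  have hroot : ∀ μ : K, (minpoly K s).IsRoot μ → μ ≠ 0 := by
    rintro μ hμ rfl
    rw [← Module.End.hasEigenvalue_iff_isRoot] at hμ
    obtain ⟨w, hw⟩ := hμ.exists_hasEigenvector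
    have h1 := hw.apply_eq_smul
    rw [zero_smul] at h1
    have hinj := ((Module.End.isUnit_iff s).mp hs).injective
    exact hw.2 (hinj (by rw [h1, map_zero]))
  have hm0 := minpoly.ne_zero_of_finite K s
  choose sq hsq using fun μ : K => IsAlgClosed.exists_pow_nat_eq μ (n := 2) (by norm_num)
  let q : K[X] := Lagrange.interpolate (minpoly K s).roots.toFinset id sq
  have hq : ∀ μ : K, (minpoly K s).IsRoot μ → q.eval μ = sq μ := by
    intro μ hμ
    have := Lagrange.eval_interpolate_at_node (s := (minpoly K s).roots.toFinset) (v := id)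
      (i := μ) sq (Function.injective_id.injOn) (by simpa [hm0] using hμ)
    exact this
  obtain ⟨g, k, sep, hgm, nil⟩ := exists_squarefree_dvd_pow_of_ne_zero hm0
  have hg0 : g ≠ 0 := sep.ne_zero
  have hgdvd : g ∣ q ^ 2 - X := by
    by_cases h0 : q ^ 2 - X = 0
    · rw [h0]; exact dvd_zero _
    refine (IsAlgClosed.splits g).dvd_of_roots_le_roots hg0 ?_
    have hsep : g.Separable := PerfectField.separable_iff_squarefree.mpr sep
    rw [Multiset.le_iff_subset (nodup_roots hsep)]
    intro μ hμ
    rw [mem_roots hg0] at hμ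
    rw [mem_roots h0, IsRoot, eval_sub, eval_pow, eval_X, hq μ (hμ.dvd hgm), hsq, sub_self]
  have hdvd : minpoly K s ∣ (q ^ 2 - X) ^ k := nil.trans (pow_dvd_pow_of_dvd hgdvd k)
  have hcop : IsCoprime (minpoly K s) q := by
    rw [isCoprime_iff_aeval_ne_zero_of_isAlgClosed K K]
    intro μ
    by_contra! hc
    have h1 : (minpoly K s).IsRoot μ := by simpa [aeval_def] using hc.1
    have h2 : q.eval μ = 0 := by simpa [aeval_def] using hc.2
    rw [hq μ h1] at h2
    have h3 := hsq μ
    rw [h2] at h3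
    exact hroot μ h1 (by rw [← h3]; norm_num)
  let A := Algebra.adjoin K {s}
  let S : A := ⟨s, Algebra.self_mem_adjoin_singleton K s⟩
  let a : A := aeval S q
  have hcoe : ∀ p : K[X], ((aeval S p : A) : Module.End K V) = aeval s p := by
    intro p
    exact (aeval_algHom_apply A.val S p).symm
  have hmS : aeval S (minpoly K s) = 0 := by
    apply Subtype.ext
    rw [hcoe]
    simp
  have ha : IsUnit a := by
    obtain ⟨c, e, h⟩ := hcop
    have h1 := congrArg (aeval S) h
    rw [map_add, map_mul, map_mul, hmS, mul_zero, zero_add, map_one] at h1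
    exact IsUnit.of_mul_eq_one_right _ h1
  have hnil : IsNilpotent (a ^ 2 - S) := by
    refine ⟨k, ?_⟩
    obtain ⟨c, hc⟩ := hdvd
    have h1 := congrArg (aeval S) hc
    rw [map_mul, hmS, zero_mul] at h1
    simpa [a] using h1
  have h2 : IsUnit (2 : A) := by
    have : IsUnit (algebraMap K A 2) := (IsUnit.mk0 (2 : K) two_ne_zero).map _
    rwa [map_ofNat] at this
  obtain ⟨r, ⟨-, hr⟩, -⟩ := existsUnique_nilpotent_sub_and_aeval_eq_zero
    (P := (X ^ 2 - C S : A[X])) (x := a) (by simpa using hnil)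
    (by simpa [one_add_one_eq_two] using h2.mul ha)
  refine ⟨r, r.2, ?_⟩
  have h3 : r * r = S := by
    simp [sub_eq_zero] at hr
    rw [← hr, pow_two]
  exact congrArg Subtype.val h3

theorem selfAdjoint_of_mem_adjoin {𝕂 : Type*} [Field 𝕂] {N : ℕ}
    (χ : (Fin N → 𝕂) →ₗ[𝕂] (Fin N → 𝕂) →ₗ[𝕂] 𝕂) (a b : EndV 𝕂 N)
    (ha : IsSelfAdjointB χ a) (hb : b ∈ Algebra.adjoin 𝕂 {a}) : IsSelfAdjointB χ b := by
  rw [Algebra.adjoin_singleton_eq_range_aeval] at hb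
  obtain ⟨q, rfl⟩ := hb
  change IsSelfAdjointB χ (aeval a q)
  have hpow : ∀ n : ℕ, IsSelfAdjointB χ (a ^ n) := by
    intro n
    induction n with
    | zero => intro u v; simp
    | succ n ih =>
      intro u v
      rw [pow_succ, Module.End.mul_apply, ih, ha, ← Module.End.mul_apply,
        ← pow_succ', ← pow_succ]
  induction q using Polynomial.induction_on' with
  | add p q hp hq => intro u v; simp [hp u v, hq u v]
  | monomial n c =>
    intro u v
    have := hpow n u v
    simp [aeval_monomial, Algebra.algebraMap_eq_smul_one, this]

theorem JordanKclasses_isometry_conjugate_typeAIandAII {𝕂 : Type*} [Field 𝕂] [IsAlgClosed 𝕂]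
    [CharZero 𝕂] {N : ℕ} (χ : (Fin N → 𝕂) →ₗ[𝕂] (Fin N → 𝕂) →ₗ[𝕂] 𝕂)
    (hχnd : ∀ u : Fin N → 𝕂, (∀ v : Fin N → 𝕂, χ u v = 0) → u = 0)
    (hχ : (∀ u v : Fin N → 𝕂, χ u v = χ v u) ∨ (∀ u : Fin N → 𝕂, χ u u = 0))
    (x y : EndV 𝕂 N) (hx : x ∈ pSet χ) (hy : y ∈ pSet χ)
    (hJG : ∃ g : (EndV 𝕂 N)ˣ, conjAct g '' cent x = cent y) :
    ∃ k : (EndV 𝕂 N)ˣ, IsIsometryB χ k ∧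
      conjAct k '' (pSet χ ∩ cent x) = pSet χ ∩ cent y := by
  obtain ⟨g, hg⟩ := hJG
  -- `g` conjugates the centralizers
  have hcent : ∀ (k : (EndV 𝕂 N)ˣ) (a z : EndV 𝕂 N),
      conjAct k z ∈ cent (conjAct k a) ↔ z ∈ cent a := by
    intro k a z
    simp only [cent, conjAct, Set.mem_ofPred_eq]
    have e : ∀ a b : EndV 𝕂 N, (k : EndV 𝕂 N) * a * ((k⁻¹ : (EndV 𝕂 N)ˣ) : EndV 𝕂 N) *
        ((k : EndV 𝕂 N) * b * ((k⁻¹ : (EndV 𝕂 N)ˣ) : EndV 𝕂 N)) =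
        (k : EndV 𝕂 N) * (a * b) * ((k⁻¹ : (EndV 𝕂 N)ˣ) : EndV 𝕂 N) := by
      intro a b
      simp [mul_assoc]
    rw [e, e, Units.mul_left_inj, Units.mul_right_inj]
  have hsurj : ∀ (k : (EndV 𝕂 N)ˣ) (w : EndV 𝕂 N), ∃ z, conjAct k z = w := by
    intro k w
    refine ⟨((k⁻¹ : (EndV 𝕂 N)ˣ) : EndV 𝕂 N) * w * k, ?_⟩
    simp [conjAct, mul_assoc]
  have himg : ∀ k : (EndV 𝕂 N)ˣ, conjAct k '' cent x = cent (conjAct k x) := by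
    intro k
    ext w
    constructor
    · rintro ⟨z, hz, rfl⟩
      exact (hcent k x z).mpr hz
    · intro hw
      obtain ⟨z, rfl⟩ := hsurj k w
      exact ⟨z, (hcent k x z).mp hw, rfl⟩
  set x' := conjAct g x with hx'
  have hcc : cent x' = cent y := by rw [← himg g, hg]
  have hx'p : IsSelfAdjointB χ x' := by
    refine selfAdjoint_of_mem_adjoin χ y x' hy (bicommutant_mem_adjoin y x' fun f hf => ?_)
    have : f ∈ cent y := hf
    rw [← hcc] at this
    exact this
  have hgx : ∀ u, (g : EndV 𝕂 N) (x u) = x' ((g : EndV 𝕂 N) u) := by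
    intro u
    have : (g : EndV 𝕂 N) * x = x' * g := by simp [hx', conjAct, mul_assoc]
    exact LinearMap.congr_fun this u
  have hχinj : Function.Injective χ := by
    rw [← LinearMap.ker_eq_bot, LinearMap.ker_eq_bot']
    intro u hu
    exact hχnd u fun v => by rw [hu]; rfl
  have hχext : ∀ u v, (∀ w, χ u w = χ v w) → u = v := fun u v h => hχinj (LinearMap.ext h)
  let χe : (Fin N → 𝕂) ≃ₗ[𝕂] Module.Dual 𝕂 (Fin N → 𝕂) :=
    LinearEquiv.ofInjectiveOfFinrankEq χ hχinj (Subspace.dual_finrank_eq).symm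
  let s : EndV 𝕂 N := χe.symm.toLinearMap ∘ₗ (χ.compl₁₂ (g : EndV 𝕂 N) (g : EndV 𝕂 N))
  have hs : ∀ u v, χ (s u) v = χ ((g : EndV 𝕂 N) u) ((g : EndV 𝕂 N) v) := by
    intro u v
    have : χ (s u) = χ.compl₁₂ (g : EndV 𝕂 N) (g : EndV 𝕂 N) u := χe.apply_symm_apply _
    rw [this]; rfl
  have hginj : Function.Injective (g : EndV 𝕂 N) :=
    ((Module.End.isUnit_iff _).mp g.isUnit).injective
  have hgsurj : Function.Surjective (g : EndV 𝕂 N) :=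
    ((Module.End.isUnit_iff _).mp g.isUnit).surjective
  have hsunit : IsUnit s := by
    rw [LinearMap.isUnit_iff_ker_eq_bot, LinearMap.ker_eq_bot']
    intro u hu
    apply hginj
    rw [map_zero]
    apply hχnd
    intro v
    obtain ⟨w, rfl⟩ := hgsurj v
    rw [← hs, hu]; simp
  have hssa : IsSelfAdjointB χ s := by
    intro u v
    rcases hχ with h | h
    · rw [hs, h, ← hs, h]
    · have h' : ∀ u v, χ u v = - χ v u := fun u v => by
        have := h (u + v)
        simp only [map_add, LinearMap.add_apply, h, zero_add, add_zero] at this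
        linear_combination this
      rw [hs, h', ← hs, h' u]
  have hsx : s * x = x * s := by
    refine LinearMap.ext fun u => ?_
    apply hχext
    intro w
    rw [Module.End.mul_apply, Module.End.mul_apply, hs, hx (s u) w, hs, hgx, hgx, hx'p]
  obtain ⟨h, hmem, hh⟩ := exists_sqrt_mem_adjoin s hsunit
  have hhsa : IsSelfAdjointB χ h := selfAdjoint_of_mem_adjoin χ s h hssa hmem
  have hhx : Commute x h :=
    Algebra.commute_of_mem_adjoin_singleton_of_commute hmem (show Commute x s from hsx.symm)
  have hhunit : IsUnit h := by
    rw [← hh] at hsunit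
    exact ((Commute.refl h).isUnit_mul_iff.mp hsunit).1
  obtain ⟨hu, rfl⟩ := hhunit
  let k : (EndV 𝕂 N)ˣ := g * hu⁻¹
  have hkiso : IsIsometryB χ k := by
    intro u v
    have e : ∀ w, (hu : EndV 𝕂 N) (((hu⁻¹ : (EndV 𝕂 N)ˣ) : EndV 𝕂 N) w) = w := by
      intro w
      rw [← Module.End.mul_apply, Units.mul_inv]; rfl
    change χ ((g : EndV 𝕂 N) (((hu⁻¹ : (EndV 𝕂 N)ˣ) : EndV 𝕂 N) u))
      ((g : EndV 𝕂 N) (((hu⁻¹ : (EndV 𝕂 N)ˣ) : EndV 𝕂 N) v)) = _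
    rw [← hs, ← hh, Module.End.mul_apply, hhsa, e, e]
  have hkx : conjAct k x = x' := by
    have h1 : ((hu⁻¹ : (EndV 𝕂 N)ˣ) : EndV 𝕂 N) * x * hu = x := by
      rw [mul_assoc, hhx.eq, ← mul_assoc, Units.inv_mul, one_mul]
    rw [hx']
    simp only [conjAct, k, mul_inv_rev, inv_inv, Units.val_mul]
    calc _ = (g : EndV 𝕂 N) * (((hu⁻¹ : (EndV 𝕂 N)ˣ) : EndV 𝕂 N) * x * hu) *
          ((g⁻¹ : (EndV 𝕂 N)ˣ) : EndV 𝕂 N) := by simp only [mul_assoc]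
      _ = _ := by rw [h1]
  have hkinv : ∀ w, (k : EndV 𝕂 N) (((k⁻¹ : (EndV 𝕂 N)ˣ) : EndV 𝕂 N) w) = w := by
    intro w
    rw [← Module.End.mul_apply, Units.mul_inv]; rfl
  have hkinv' : ∀ w, (((k⁻¹ : (EndV 𝕂 N)ˣ) : EndV 𝕂 N) ((k : EndV 𝕂 N) w)) = w := by
    intro w
    rw [← Module.End.mul_apply, Units.inv_mul]; rfl
  have hkp : ∀ z, conjAct k z ∈ pSet χ ↔ z ∈ pSet χ := by
    intro z
    have e : ∀ w, conjAct k z ((k : EndV 𝕂 N) w) = (k : EndV 𝕂 N) (z w) := by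
      intro w
      simp only [conjAct, Module.End.mul_apply, hkinv']
    constructor
    · intro hz u v
      rw [← hkiso, ← e, hz, e, hkiso]
    · intro hz u v
      rw [← hkinv u, ← hkinv v, e, e, hkiso, hkiso, hz]
  refine ⟨k, hkiso, ?_⟩
  ext w
  constructor
  · rintro ⟨z, ⟨hz1, hz2⟩, rfl⟩
    refine ⟨(hkp z).mpr hz1, ?_⟩
    rw [← hcc, ← hkx]
    exact (hcent k x z).mpr hz2
  · rintro ⟨hw1, hw2⟩
    obtain ⟨z, rfl⟩ := hsurj k w
    rw [← hcc, ← hkx] at hw2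
    exact ⟨z, ⟨(hkp z).mp hw1, (hcent k x z).mp hw2⟩, rfl⟩
end

section
/- Let s ∈ gl(V) be semisimple with set of eigenvalues spec(s) and eigenspaces V_{s,c} := ker(s − c·Id). (a) Every g ∈ GL(V) normalizing the centralizer g^s (i.e. g·g^s·g⁻¹ = g^s) induces a permutation γ of spec(s) such that g·V_{s,c} = V_{s,γ(c)} for all c ∈ spec(s). (b) A permutation γ of spec(s) arises from such a g if and only if m(s,γ(c)) = m(s,c) for all c ∈ spec(s). -/
/-! For semisimple `s`, elements of `GL(V)` normalizing the centralizer `g^s` permute the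
eigenspaces of `s`, and a permutation `γ` of `spec(s)` arises this way iff it preserves
the multiplicities. -/

namespace EigenspaceSetup

variable {𝕂 : Type*} [Field 𝕂] {N : ℕ}

/-- `gl(V)` for `V = 𝕂^N`. -/
abbrev EndV (𝕂 : Type*) [Field 𝕂] (N : ℕ) := Module.End 𝕂 (Fin N → 𝕂)

/-- Semisimple = diagonalizable: the eigenspaces span `V`. -/
def IsSemisimpleE (x : EndV 𝕂 N) : Prop :=
  (⨆ c : 𝕂, LinearMap.ker (x - c • (1 : EndV 𝕂 N))) = ⊤

/-- The eigenspace `V_{s,c} = ker (s − c·Id)`. -/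
def eigSp (s : EndV 𝕂 N) (c : 𝕂) : Submodule 𝕂 (Fin N → 𝕂) :=
  LinearMap.ker (s - c • (1 : EndV 𝕂 N))

/-- The multiplicity `m(s,c) = dim ker (s − c·Id)`. -/
noncomputable def multE (s : EndV 𝕂 N) (c : 𝕂) : ℕ := Module.finrank 𝕂 (eigSp s c)

/-- The spectrum `spec(s) = {c : m(s,c) > 0}`. -/
def specE (s : EndV 𝕂 N) : Set 𝕂 := {c | 0 < multE s c}

/-- The centralizer `g^s` of `s` in `gl(V)`. -/
def cent (x : EndV 𝕂 N) : Set (EndV 𝕂 N) := {z | z * x = x * z}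

/-- The conjugation action `g.z = g z g⁻¹` of `GL(V)` on `gl(V)`. -/
def conjAct (g : (EndV 𝕂 N)ˣ) (z : EndV 𝕂 N) : EndV 𝕂 N :=
  (g : EndV 𝕂 N) * z * ((g⁻¹ : (EndV 𝕂 N)ˣ) : EndV 𝕂 N)

end EigenspaceSetup

open EigenspaceSetup

namespace EigProof

variable {𝕂 : Type*} [Field 𝕂] {N : ℕ}

theorem mem_eig (s : EndV 𝕂 N) (c : 𝕂) (x : Fin N → 𝕂) : x ∈ eigSp s c ↔ s x = c • x := by
  simp [eigSp, sub_eq_zero]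

theorem eig_eq (s : EndV 𝕂 N) (c : 𝕂) : eigSp s c = Module.End.eigenspace s c := by
  ext x
  rw [mem_eig, Module.End.mem_eigenspace_iff]

theorem mem_spec (s : EndV 𝕂 N) (c : 𝕂) : c ∈ specE s ↔ eigSp s c ≠ ⊥ := by
  unfold specE multE
  rw [Set.mem_ofPred_eq, Nat.pos_iff_ne_zero, Ne, Submodule.finrank_eq_zero]

open Classical in
theorem internal (s : EndV 𝕂 N) (hss : IsSemisimpleE s) :
    DirectSum.IsInternal (eigSp s) := by
  rw [DirectSum.isInternal_submodule_iff_iSupIndep_and_iSup_eq_top]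
  refine ⟨?_, hss⟩
  have : eigSp s = Module.End.eigenspace s := funext (eig_eq s)
  rw [this]
  exact s.eigenspaces_iSupIndep

theorem exists_basis (s : EndV 𝕂 N) (hss : IsSemisimpleE s) :
    ∃ (v : ∀ c, Module.Basis (Fin (multE s c)) 𝕂 (eigSp s c))
      (b : Module.Basis (Σ c, Fin (multE s c)) 𝕂 (Fin N → 𝕂)),
      ∀ c i, b ⟨c, i⟩ = v c i := by
  classical
  have v : ∀ c, Module.Basis (Fin (multE s c)) 𝕂 (eigSp s c) :=
    fun c => Module.finBasis 𝕂 (eigSp s c)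
  refine ⟨v, (internal s hss).collectedBasis v, ?_⟩
  intro c i
  rw [DirectSum.IsInternal.collectedBasis_coe]

theorem eig_unique (s : EndV 𝕂 N) {c d : 𝕂} (hc : c ∈ specE s) (h : eigSp s c ≤ eigSp s d) :
    c = d := by
  rw [mem_spec, Submodule.ne_bot_iff] at hc
  obtain ⟨x, hx, h0⟩ := hc
  have h2 := h hx
  rw [mem_eig] at hx h2
  exact smul_left_injective 𝕂 h0 (hx.symm.trans h2)

theorem eig_le (s t : EndV 𝕂 N) (hss : IsSemisimpleE s) (h : cent s ⊆ cent t) (c : 𝕂)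
    (hc : c ∈ specE s) : ∃ d, eigSp s c ≤ eigSp t d := by
  obtain ⟨v, b, hb⟩ := exists_basis s hss
  have hsb : ∀ d i, s (b ⟨d, i⟩) = d • b ⟨d, i⟩ := by
    intro d i
    rw [← mem_eig, hb]
    exact (v d i).2
  let k : Σ c, Fin (multE s c) := ⟨c, ⟨0, hc⟩⟩
  have hφ : (b.coord k) ∘ₗ s = c • b.coord k := by
    refine b.ext ?_
    rintro ⟨d, i⟩
    simp only [LinearMap.comp_apply, hsb, map_smul, LinearMap.smul_apply]
    by_cases hk : (⟨d, i⟩ : Σ c, Fin (multE s c)) = k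
    · have : d = c := congrArg Sigma.fst hk
      exact congrArg (· • b.coord k (b ⟨d, i⟩)) this
    · have : b.coord k (b ⟨d, i⟩) = 0 := by
        rw [Module.Basis.coord_apply, Module.Basis.repr_self, Finsupp.single_eq_of_ne (Ne.symm hk)]
      rw [this]; simp
  have hφ' : ∀ x, b.coord k (s x) = c • b.coord k x := fun x => LinearMap.congr_fun hφ x
  refine ⟨b.coord k (t (b k)), fun x hx => ?_⟩
  rw [mem_eig] at hx ⊢
  have hz : (b.coord k).smulRight x ∈ cent s := by
    show _ * _ = _ * _
    refine LinearMap.ext fun y => ?_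
    simp only [Module.End.mul_apply, LinearMap.smulRight_apply, hφ', map_smul, hx, smul_smul,
      smul_eq_mul]
    rw [mul_comm]
  have hz2 := LinearMap.congr_fun (show _ * _ = _ * _ from h hz) (b k)
  simp only [Module.End.mul_apply, LinearMap.smulRight_apply, map_smul] at hz2
  rw [hz2]
  simp

theorem eig_eq_of_cent (s t : EndV 𝕂 N) (hs : IsSemisimpleE s) (ht : IsSemisimpleE t)
    (h : cent s = cent t) (c : 𝕂) (hc : c ∈ specE s) :
    ∃ d ∈ specE t, eigSp s c = eigSp t d := by
  obtain ⟨d, hd⟩ := eig_le s t hs h.le c hc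
  have hdt : d ∈ specE t := by
    rw [mem_spec] at hc ⊢
    exact fun h0 => hc (le_bot_iff.1 (h0 ▸ hd))
  obtain ⟨c', hc'⟩ := eig_le t s ht h.ge d hdt
  have := eig_unique s hc (hd.trans hc')
  subst this
  exact ⟨d, hdt, le_antisymm hd hc'⟩

theorem cent_le (s t : EndV 𝕂 N) (hs : IsSemisimpleE s)
    (h : ∀ c ∈ specE s, ∃ d, eigSp s c = eigSp t d) : cent t ⊆ cent s := by
  intro z hz
  have hz' : ∀ x, z (t x) = t (z x) := fun x => LinearMap.congr_fun (show z * t = t * z from hz) x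
  obtain ⟨v, b, hb⟩ := exists_basis s hs
  show z * s = s * z
  refine b.ext ?_
  rintro ⟨c, i⟩
  have hm : b ⟨c, i⟩ ∈ eigSp s c := by rw [hb]; exact (v c i).2
  obtain ⟨d, hd⟩ := h c i.pos
  have h1 : z (b ⟨c, i⟩) ∈ eigSp s c := by
    have h2 := hm
    rw [hd, mem_eig] at h2 ⊢
    rw [← hz', h2, map_smul]
  rw [mem_eig] at hm h1
  simp only [Module.End.mul_apply, hm, h1, map_smul]

theorem inv_app (g : (EndV 𝕂 N)ˣ) (x : Fin N → 𝕂) :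
    (g⁻¹ : (EndV 𝕂 N)ˣ).val (g.val x) = x := by
  rw [← Module.End.mul_apply, Units.inv_mul]; rfl

theorem app_inv (g : (EndV 𝕂 N)ˣ) (x : Fin N → 𝕂) :
    g.val ((g⁻¹ : (EndV 𝕂 N)ˣ).val x) = x := by
  rw [← Module.End.mul_apply, Units.mul_inv]; rfl

theorem g_inj (g : (EndV 𝕂 N)ˣ) : Function.Injective (g : EndV 𝕂 N) :=
  Function.LeftInverse.injective (inv_app g)

theorem fr_map (g : (EndV 𝕂 N)ˣ) (W : Submodule 𝕂 (Fin N → 𝕂)) :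
    Module.finrank 𝕂 (Submodule.map (g : EndV 𝕂 N) W) = Module.finrank 𝕂 W :=
  (Submodule.equivMapOfInjective (g : EndV 𝕂 N) (g_inj g) W).finrank_eq.symm

theorem eig_conj (g : (EndV 𝕂 N)ˣ) (s : EndV 𝕂 N) (c : 𝕂) :
    eigSp (conjAct g s) c = Submodule.map (g : EndV 𝕂 N) (eigSp s c) := by
  ext x
  rw [mem_eig, Submodule.mem_map]
  simp only [conjAct, Module.End.mul_apply, mem_eig]
  constructor
  · intro h
    refine ⟨(g⁻¹ : (EndV 𝕂 N)ˣ).val x, ?_, app_inv g x⟩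
    apply g_inj g
    rw [h, map_smul, app_inv]
  · rintro ⟨y, hy, rfl⟩
    rw [inv_app, hy, map_smul]

theorem mult_conj (g : (EndV 𝕂 N)ˣ) (s : EndV 𝕂 N) (c : 𝕂) :
    multE (conjAct g s) c = multE s c := by
  unfold multE
  rw [eig_conj]
  exact fr_map g _

theorem spec_conj (g : (EndV 𝕂 N)ˣ) (s : EndV 𝕂 N) : specE (conjAct g s) = specE s := by
  unfold specE
  simp only [mult_conj]

theorem ss_conj (g : (EndV 𝕂 N)ˣ) (s : EndV 𝕂 N) (hs : IsSemisimpleE s) :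
    IsSemisimpleE (conjAct g s) := by
  show (⨆ c, eigSp (conjAct g s) c) = ⊤
  simp only [eig_conj]
  rw [← Submodule.map_iSup, show (⨆ c, eigSp s c) = ⊤ from hs, Submodule.map_top,
    LinearMap.range_eq_top]
  exact Function.RightInverse.surjective (app_inv g)

theorem cent_conj (g : (EndV 𝕂 N)ˣ) (s : EndV 𝕂 N) :
    conjAct g '' cent s = cent (conjAct g s) := by
  ext z
  simp only [Set.mem_image, cent, Set.mem_ofPred_eq, conjAct]
  constructor
  · rintro ⟨y, hy, rfl⟩
    simp only [mul_assoc, Units.inv_mul_cancel_left]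
    rw [← mul_assoc y, hy, mul_assoc]
  · intro h
    refine ⟨(g⁻¹ : (EndV 𝕂 N)ˣ).val * z * g.val, ?_, ?_⟩
    · have := congrArg (fun w => (g⁻¹ : (EndV 𝕂 N)ˣ).val * w * g.val) h
      simpa [mul_assoc] using this
    · simp [mul_assoc]

theorem part_b (s : EndV 𝕂 N) (hs : IsSemisimpleE s) (γ : 𝕂 → 𝕂)
    (hγ : Set.BijOn γ (specE s) (specE s)) (h : ∀ c ∈ specE s, multE s (γ c) = multE s c) :
    ∃ g : (EndV 𝕂 N)ˣ,
      ∀ c ∈ specE s, Submodule.map (g : EndV 𝕂 N) (eigSp s c) = eigSp s (γ c) := by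
  obtain ⟨v, b, hb⟩ := exists_basis s hs
  let f : (Σ c, Fin (multE s c)) → (Σ c, Fin (multE s c)) :=
    fun k => ⟨γ k.1, Fin.cast (h k.1 k.2.pos).symm k.2⟩
  have hf : Function.Bijective f := by
    constructor
    · rintro ⟨c, i⟩ ⟨d, j⟩ hij
      have h1 : γ c = γ d := congrArg Sigma.fst hij
      have h2 : (i : ℕ) = j := congrArg (fun k : (Σ c, Fin (multE s c)) => (k.2 : ℕ)) hij
      have h3 : c = d := hγ.injOn i.pos j.pos h1
      subst h3
      rw [Fin.ext h2]
    · rintro ⟨d, j⟩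
      obtain ⟨c, hc, rfl⟩ := hγ.surjOn j.pos
      exact ⟨⟨c, Fin.cast (h c hc) j⟩, rfl⟩
  let e : (Fin N → 𝕂) ≃ₗ[𝕂] (Fin N → 𝕂) := b.equiv b (Equiv.ofBijective f hf)
  refine ⟨LinearMap.GeneralLinearGroup.ofLinearEquiv e, fun c hc => ?_⟩
  have key : (s ∘ₗ e.toLinearMap) ∘ₗ (eigSp s c).subtype =
      (γ c • e.toLinearMap) ∘ₗ (eigSp s c).subtype := by
    refine (v c).ext fun i => ?_
    have he : e (v c i) = b ⟨γ c, Fin.cast (h c i.pos).symm i⟩ := by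
      rw [← hb, Module.Basis.equiv_apply]
      rfl
    simp only [LinearMap.comp_apply, Submodule.subtype_apply, LinearEquiv.coe_coe,
      LinearMap.smul_apply, he]
    rw [← mem_eig, hb]
    exact (v (γ c) _).2
  apply Submodule.eq_of_le_of_finrank_eq
  · rintro _ ⟨x, hx, rfl⟩
    rw [mem_eig]
    exact LinearMap.congr_fun key ⟨x, hx⟩
  · rw [fr_map]
    exact (h c hc).symm

end EigProof

open EigProof in
theorem normalizer_of_centralizer_permutes_eigenspaces {𝕂 : Type*} [Field 𝕂]
    [IsAlgClosed 𝕂] [CharZero 𝕂] {N : ℕ}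
    (s : EndV 𝕂 N) (hss : IsSemisimpleE s) :
    (∀ g : (EndV 𝕂 N)ˣ, conjAct g '' cent s = cent s →
      ∃ γ : 𝕂 → 𝕂, Set.BijOn γ (specE s) (specE s) ∧
        ∀ c ∈ specE s, Submodule.map (g : EndV 𝕂 N) (eigSp s c) = eigSp s (γ c)) ∧
    (∀ γ : 𝕂 → 𝕂, Set.BijOn γ (specE s) (specE s) →
      ((∃ g : (EndV 𝕂 N)ˣ, conjAct g '' cent s = cent s ∧
          ∀ c ∈ specE s, Submodule.map (g : EndV 𝕂 N) (eigSp s c) = eigSp s (γ c)) ↔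
        ∀ c ∈ specE s, multE s (γ c) = multE s c)) := by
  refine ⟨fun g hg => ?_, fun γ hγ => ⟨?_, fun h => ?_⟩⟩
  · rw [cent_conj] at hg
    have hts := ss_conj g s hss
    have H : ∀ c ∈ specE s, ∃ d ∈ specE s, eigSp (conjAct g s) c = eigSp s d := by
      intro c hc
      exact eig_eq_of_cent _ s hts hss hg c ((spec_conj g s).symm ▸ hc)
    choose! γ hγ hγ2 using H
    refine ⟨γ, ⟨hγ, ?_, ?_⟩, fun c hc => ?_⟩
    · intro c hc d hd hcd
      refine eig_unique (conjAct g s) ((spec_conj g s).symm ▸ hc) ?_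
      rw [hγ2 c hc, hγ2 d hd, show γ c = γ d from hcd]
    · intro d hd
      obtain ⟨c, hc, hcd⟩ := eig_eq_of_cent s _ hss hts hg.symm d hd
      rw [spec_conj] at hc
      refine ⟨c, hc, (eig_unique s hd ?_).symm⟩
      rw [hcd, hγ2 c hc]
    · rw [← eig_conj, hγ2 c hc]
  · rintro ⟨g, -, hg⟩ c hc
    unfold multE
    rw [← hg c hc]
    exact fr_map g _
  · obtain ⟨g, hg⟩ := part_b s hss γ hγ h
    refine ⟨g, ?_, hg⟩
    rw [cent_conj]
    apply Set.Subset.antisymm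
    · refine cent_le _ _ hss fun d hd => ?_
      obtain ⟨c, hc, rfl⟩ := hγ.surjOn hd
      exact ⟨c, by rw [eig_conj, hg c hc]⟩
    · refine cent_le _ _ (ss_conj g s hss) fun c hc => ?_
      rw [spec_conj] at hc
      exact ⟨γ c, by rw [eig_conj, hg c hc]⟩
end

section
/- Existence of the Katsylo-type contraction map: let (e,h,f) be an sl2-triple in gl(V) (so [h,e] = 2e, [h,f] = −2f, [e,f] = h; then ad h is diagonalizable with integer eigenvalues) and let g(i,h) := {z ∈ gl(V) : [h,z] = iz}. There exists a polynomial map ε : e + ⊕_{i≤0} g(2i,h) → e + (g^f ∩ ⊕_{i≤0} g(2i,h)) such that: (i) for every z ∈ ⊕_{i≤0} g(2i,h), ε(e+z) is GL(V)-conjugate to e+z; (ii) for every j ≤ 0, the composition P_j of the restriction of ε to e + g(0,h) with the projection of ⊕_{i≤0} g(2i,h) onto g(2j,h) is either zero or a homogeneous polynomial map of degree −j+1. -/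
/-! Existence of the Katsylo-type contraction map `ε` attached to an sl2-triple
`(e, h, f)` in `gl(V)`. -/

namespace KatsyloSetup

variable {𝕂 : Type*} [Field 𝕂] {N : ℕ}

/-- The eigenspace `g(c, h) = {z : [h, z] = c·z}` of `ad h` on `gl_N`. -/
def gSpace (h : Matrix (Fin N) (Fin N) 𝕂) (c : 𝕂) :
    Submodule 𝕂 (Matrix (Fin N) (Fin N) 𝕂) :=
  LinearMap.ker
    ((LinearMap.mulLeft 𝕂 h - LinearMap.mulRight 𝕂 h) - c • LinearMap.id)

/-- `⊕_{i ≤ 0} g(2i, h)`, the sum of the nonpositive even eigenspaces of `ad h`. -/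
def negEvenPart (h : Matrix (Fin N) (Fin N) 𝕂) :
    Submodule 𝕂 (Matrix (Fin N) (Fin N) 𝕂) :=
  ⨆ i : {i : ℤ // i ≤ 0}, gSpace h ((2 * i.1 : ℤ) : 𝕂)

/-- A polynomial map `gl_N → gl_N`: each entry of the output is a polynomial function of
the entries of the input. -/
def IsPolyMap (φ : Matrix (Fin N) (Fin N) 𝕂 → Matrix (Fin N) (Fin N) 𝕂) : Prop :=
  ∃ P : (Fin N × Fin N) → MvPolynomial (Fin N × Fin N) 𝕂,
    ∀ (x : Matrix (Fin N) (Fin N) 𝕂) (r c : Fin N),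
      φ x r c = MvPolynomial.eval (fun rc : Fin N × Fin N => x rc.1 rc.2) (P (r, c))

end KatsyloSetup

open KatsyloSetup

namespace KatsyloProof

open Module

section Abstract
variable {𝕂 : Type*} [Field 𝕂] [CharZero 𝕂] {W : Type*} [AddCommGroup W] [Module 𝕂 W]

/-- The basic `sl2` commutation: `F` lowers weights. -/
lemma weight_pow (F H : End 𝕂 W) (hHF : H * F - F * H = (-2 : 𝕂) • F) (μ : 𝕂) (v : W)
    (hv : H v = μ • v) (n : ℕ) : H ((F ^ n) v) = (μ - 2 * n) • (F ^ n) v := by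
  induction n with
  | zero => simpa using hv
  | succ n ih =>
    have h1 := LinearMap.congr_fun hHF ((F ^ n) v)
    simp only [LinearMap.sub_apply, Module.End.mul_apply, LinearMap.smul_apply, ih, map_smul] at h1
    rw [pow_succ', Module.End.mul_apply, sub_eq_iff_eq_add.mp h1, ← add_smul]
    congr 1
    push_cast; ring

lemma comm_pow (E F H : End 𝕂 W) (hHF : H * F - F * H = (-2 : 𝕂) • F)
    (hEF : E * F - F * E = H) (μ : 𝕂) (v : W)
    (hv : H v = μ • v) (n : ℕ) :
    E ((F ^ (n + 1)) v) = (F ^ (n + 1)) (E v) + ((n + 1) * (μ - n)) • (F ^ n) v := by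
  have key : ∀ w, E (F w) = F (E w) + H w := fun w => by
    rw [← hEF]; simp
  induction n with
  | zero => simp [key, hv]
  | succ n ih =>
    rw [pow_succ' F (n + 1), Module.End.mul_apply, key, ih, map_add, map_smul,
      weight_pow F H hHF μ v hv, Module.End.mul_apply, add_assoc, ← Module.End.mul_apply F (F ^ n),
      ← pow_succ', ← add_smul]
    congr 2
    push_cast; ring

lemma exists_last (F : End 𝕂 W) (m : ℕ) (hF : F ^ m = 0) (v : W) (hv : v ≠ 0) :
    ∃ k, k < m ∧ (F ^ k) v ≠ 0 ∧ (F ^ (k + 1)) v = 0 := by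
  classical
  have hex : ∃ k, (F ^ k) v = 0 := ⟨m, by simp [hF]⟩
  have h0 : Nat.find hex ≠ 0 := by
    intro h
    have := Nat.find_spec hex
    rw [h] at this
    exact hv (by simpa using this)
  obtain ⟨k, hk⟩ := Nat.exists_eq_succ_of_ne_zero h0
  refine ⟨k, ?_, ?_, ?_⟩
  · have : Nat.find hex ≤ m := Nat.find_min' hex (by simp [hF])
    omega
  · exact Nat.find_min hex (by omega)
  · have := Nat.find_spec hex
    rwa [hk] at this

lemma inj_FE (E F H : End 𝕂 W) (hHF : H * F - F * H = (-2 : 𝕂) • F)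
    (hEF : E * F - F * E = H) (m : ℕ) (hF : F ^ m = 0) (a : ℕ) (ha : 0 < a) (v : W)
    (hv : H v = (-(a : 𝕂)) • v) (h0 : F (E v) = 0) : v = 0 := by
  by_contra hne
  obtain ⟨k, -, hk, hk1⟩ := exists_last F m hF v hne
  have h := comm_pow E F H hHF hEF _ v hv k
  rw [hk1, map_zero, pow_succ, Module.End.mul_apply, h0, map_zero, zero_add] at h
  rcases smul_eq_zero.mp h.symm with h | h
  · rcases mul_eq_zero.mp h with h | h
    · exact (Nat.cast_add_one_ne_zero k) h
    · have : ((a + k : ℕ) : 𝕂) = 0 := by push_cast; linear_combination -h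
      rw [Nat.cast_eq_zero] at this
      omega
  · exact hk h

lemma weight_vanish (E F H : End 𝕂 W) (hHE : H * E - E * H = (2 : 𝕂) • E)
    (hHF : H * F - F * H = (-2 : 𝕂) • F)
    (hEF : E * F - F * E = H) (m : ℕ) (hE : E ^ m = 0) (hF : F ^ m = 0) (a : ℕ) (ha : m ≤ a) (v : W)
    (hv : H v = (-(a : 𝕂)) • v) : v = 0 := by
  by_contra hne
  obtain ⟨k, -, hk, hk1⟩ := exists_last F m hF v hne
  have hw := weight_pow F H hHF _ v hv k
  obtain ⟨n, hnm, hn, hn1⟩ := exists_last E m hE _ hk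
  have h := comm_pow F E (-H) (by rw [← neg_neg (E : End 𝕂 W)]; simp only [neg_mul, mul_neg, neg_neg, neg_smul, ← hHE]; abel)
    (by rw [← hEF]; abel) (a + 2 * k) ((F ^ k) v)
    (by rw [LinearMap.neg_apply, hw, ← neg_smul]; congr 1; ring) n
  rw [hn1, map_zero, ← Module.End.mul_apply F, ← pow_succ', hk1, map_zero, zero_add] at h
  rcases smul_eq_zero.mp h.symm with h | h
  · rcases mul_eq_zero.mp h with h | h
    · exact (Nat.cast_add_one_ne_zero n) h
    · have : ((a + 2 * k : ℕ) : 𝕂) = (n : ℕ) := by push_cast; linear_combination h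
      rw [Nat.cast_inj] at this
      omega
  · exact hn h

end Abstract

section Mat
variable {𝕂 : Type*} [Field 𝕂] {N : ℕ}

/-- The adjoint action on matrices. -/
def adL (a : Matrix (Fin N) (Fin N) 𝕂) : End 𝕂 (Matrix (Fin N) (Fin N) 𝕂) :=
  LinearMap.mulLeft 𝕂 a - LinearMap.mulRight 𝕂 a

@[simp] lemma adL_apply (a z : Matrix (Fin N) (Fin N) 𝕂) : adL a z = a * z - z * a := by simp [adL]

lemma mem_g {h : Matrix (Fin N) (Fin N) 𝕂} {c : 𝕂} {z : Matrix (Fin N) (Fin N) 𝕂} : z ∈ gSpace h c ↔ h * z - z * h = c • z := by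
  simp [gSpace, sub_eq_zero]

lemma mem_g' {h : Matrix (Fin N) (Fin N) 𝕂} {c : 𝕂} {z : Matrix (Fin N) (Fin N) 𝕂} : z ∈ gSpace h c ↔ adL h z = c • z := by
  rw [mem_g, adL_apply]

lemma adL_comm (a b c : Matrix (Fin N) (Fin N) 𝕂) (k : 𝕂) (hab : a * b - b * a = k • c) :
    adL a * adL b - adL b * adL a = k • adL c := by
  ext1 z
  simp only [LinearMap.sub_apply, Module.End.mul_apply, LinearMap.smul_apply, adL_apply]
  rw [smul_sub, ← smul_mul_assoc, ← mul_smul_comm, ← hab]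
  noncomm_ring

lemma mul_g {h : Matrix (Fin N) (Fin N) 𝕂} {c d : 𝕂} {x y : Matrix (Fin N) (Fin N) 𝕂} (hx : x ∈ gSpace h c) (hy : y ∈ gSpace h d) :
    x * y ∈ gSpace h (c + d) := by
  rw [mem_g] at *
  have : h * (x * y) - x * y * h = (h * x - x * h) * y + x * (h * y - y * h) := by noncomm_ring
  rw [this, hx, hy, add_smul]; simp

lemma one_g {h : Matrix (Fin N) (Fin N) 𝕂} : (1 : Matrix (Fin N) (Fin N) 𝕂) ∈ gSpace h (0 : 𝕂) := by
  rw [mem_g]; simp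

lemma pow_g {h : Matrix (Fin N) (Fin N) 𝕂} {c : 𝕂} {x : Matrix (Fin N) (Fin N) 𝕂} (hx : x ∈ gSpace h c) (n : ℕ) :
    x ^ n ∈ gSpace h (n * c) := by
  induction n with
  | zero => simpa using one_g
  | succ n ih =>
    rw [pow_succ]
    convert mul_g ih hx using 1
    push_cast; ring

lemma nilp [CharZero 𝕂] {h e : Matrix (Fin N) (Fin N) 𝕂} {c : 𝕂} (hc : c ≠ 0) (he : h * e - e * h = c • e) : e ^ N = 0 := by
  have hn : IsNilpotent e := by
    by_contra hcon
    have hne : ∀ k : ℕ, e ^ k ≠ 0 := fun k hk => hcon ⟨k, hk⟩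
    have hev : ∀ k : ℕ, (adL h).HasEigenvalue ((k : 𝕂) * c) := fun k =>
      Module.End.hasEigenvalue_of_hasEigenvector (x := e ^ k)
        ⟨Module.End.mem_eigenspace_iff.mpr (mem_g'.mp (pow_g (mem_g.mpr he) k)), hne k⟩
    have hfin := Module.End.finite_hasEigenvalue (adL h)
    refine Set.infinite_of_injective_forall_mem (f := fun k : ℕ => (k : 𝕂) * c) ?_ hev hfin
    intro a b hab
    simpa [hc] using hab
  have h1 := (Matrix.isNilpotent_charpoly_sub_pow_of_isNilpotent hn).eq_zero
  have h2 := Matrix.aeval_self_charpoly e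
  rw [sub_eq_zero.mp h1] at h2
  simpa using h2

lemma ad_nilp {e : Matrix (Fin N) (Fin N) 𝕂} (he : e ^ N = 0) : (adL e) ^ (2 * N) = 0 := by
  have h1 : (LinearMap.mulLeft 𝕂 e : End 𝕂 (Matrix (Fin N) (Fin N) 𝕂)) ^ N = 0 := by
    rw [LinearMap.pow_mulLeft, he]; simp
  have h2 : (-LinearMap.mulRight 𝕂 e : End 𝕂 (Matrix (Fin N) (Fin N) 𝕂)) ^ N = 0 := by
    rw [show (-LinearMap.mulRight 𝕂 e : End 𝕂 (Matrix (Fin N) (Fin N) 𝕂)) =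
      LinearMap.mulRight 𝕂 (-e) by ext1 z; simp, LinearMap.pow_mulRight, neg_pow, he]; simp
  have h3 : Commute (LinearMap.mulLeft 𝕂 e : End 𝕂 (Matrix (Fin N) (Fin N) 𝕂))
      (-LinearMap.mulRight 𝕂 e) := by
    ext1 z
    simp [mul_assoc]
  have := h3.add_pow_eq_zero_of_add_le_succ_of_pow_eq_zero (k := 2 * N) h1 h2 (by omega)
  rw [adL, sub_eq_add_neg]
  exact this

section Triple
variable [CharZero 𝕂] {e h f : Matrix (Fin N) (Fin N) 𝕂}

lemma g_vanish (hhe : h * e - e * h = (2 : 𝕂) • e)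
    (hhf : h * f - f * h = (-2 : 𝕂) • f)
    (hef : e * f - f * e = h)
    (a : ℕ) (ha : N ≤ a) {z : Matrix (Fin N) (Fin N) 𝕂} (hz : z ∈ gSpace h (-(2 * a : 𝕂))) : z = 0 := by
  refine weight_vanish (adL e) (adL f) (adL h) (adL_comm _ _ _ _ hhe) (adL_comm _ _ _ _ hhf)
    (by simpa using adL_comm e f h 1 (by simpa using hef)) (2 * N)
    (ad_nilp (nilp two_ne_zero hhe)) (ad_nilp (nilp (by simp) hhf)) (2 * a) (by omega) z ?_
  rw [mem_g'.mp hz]; push_cast; rfl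

lemma exists_L (hhe : h * e - e * h = (2 : 𝕂) • e)
    (hhf : h * f - f * h = (-2 : 𝕂) • f)
    (hef : e * f - f * e = h)
    (d : ℕ) (hd : 0 < d) : ∃ L : Matrix (Fin N) (Fin N) 𝕂 →ₗ[𝕂] Matrix (Fin N) (Fin N) 𝕂, ∀ z ∈ gSpace h (2 - 2 * d : 𝕂),
    L z ∈ gSpace h (-(2 * d) : 𝕂) ∧ (z + (L z * e - e * L z)) * f = f * (z + (L z * e - e * L z)) := by
  have hF : ∀ c : 𝕂, ∀ z ∈ gSpace h c, adL f z ∈ gSpace h (c - 2) := fun c z hz => by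
    have := sub_mem (mul_g (mem_g.mpr hhf) hz) (add_comm (-2) c ▸ mul_g hz (mem_g.mpr hhf))
    rw [adL_apply]
    convert this using 1; ring
  have hE : ∀ c : 𝕂, ∀ z ∈ gSpace h c, adL e z ∈ gSpace h (c + 2) := fun c z hz => by
    have := sub_mem (mul_g (mem_g.mpr hhe) hz) (add_comm (2) c ▸ mul_g hz (mem_g.mpr hhe))
    rw [adL_apply]
    convert this using 1; ring
  have hT : ∀ z ∈ gSpace h (-(2 * d) : 𝕂), (adL f * adL e) z ∈ gSpace h (-(2 * d) : 𝕂) :=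
    fun z hz => by
      have := hF _ _ (hE _ _ hz)
      rwa [add_sub_cancel_right] at this
  have hF' : ∀ z ∈ gSpace h (2 - 2 * d : 𝕂), adL f z ∈ gSpace h (-(2 * d) : 𝕂) := fun z hz => by
    convert hF _ _ hz using 1; ring
  let T := (adL f * adL e).restrict hT
  have hinj : Function.Injective T := by
    rw [← LinearMap.ker_eq_bot, LinearMap.ker_eq_bot']
    rintro ⟨v, hv⟩ h0
    have h0' : adL f (adL e v) = 0 := congrArg Subtype.val h0
    apply Subtype.ext
    refine inj_FE (adL e) (adL f) (adL h) (adL_comm _ _ _ _ hhf)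
      (by simpa using adL_comm e f h 1 (by simpa using hef)) (2 * N)
      (ad_nilp (nilp (by simp) hhf)) (2 * d) (by omega) v ?_ h0'
    rw [mem_g'.mp hv]; push_cast; rfl
  let T' := LinearEquiv.ofInjectiveEndo T hinj
  obtain ⟨L, hL⟩ := LinearMap.exists_extend
    ((gSpace h (-(2 * d) : 𝕂)).subtype ∘ₗ T'.symm.toLinearMap ∘ₗ (adL f).restrict hF')
  refine ⟨L, fun z hz => ?_⟩
  have h1 : L z = (T'.symm ((adL f).restrict hF' ⟨z, hz⟩) : Matrix (Fin N) (Fin N) 𝕂) := LinearMap.congr_fun hL ⟨z, hz⟩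
  refine ⟨h1 ▸ Subtype.property _, ?_⟩
  have h2 : adL f (adL e (L z)) = adL f z := by
    rw [h1]
    exact congrArg Subtype.val (T'.apply_symm_apply ((adL f).restrict hF' ⟨z, hz⟩))
  simp only [adL_apply] at h2
  rw [← sub_eq_zero]
  have : (z + (L z * e - e * L z)) * f - f * (z + (L z * e - e * L z)) =
    (f * (e * L z - L z * e) - (e * L z - L z * e) * f) - (f * z - z * f) := by noncomm_ring
  rw [this, h2, sub_self]

end Triple

lemma poly_const (a : Matrix (Fin N) (Fin N) 𝕂) : IsPolyMap (fun _ => a) :=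
  ⟨fun rc => MvPolynomial.C (a rc.1 rc.2), fun x r c => by simp⟩

lemma poly_id : IsPolyMap (fun x : Matrix (Fin N) (Fin N) 𝕂 => x) :=
  ⟨fun rc => MvPolynomial.X rc, fun x r c => by simp⟩

lemma poly_add {φ ψ : Matrix (Fin N) (Fin N) 𝕂 → Matrix (Fin N) (Fin N) 𝕂}
    (h1 : IsPolyMap φ) (h2 : IsPolyMap ψ) : IsPolyMap (φ + ψ) := by
  obtain ⟨P, hP⟩ := h1
  obtain ⟨Q, hQ⟩ := h2
  exact ⟨fun rc => P rc + Q rc, fun x r c => by simp [hP, hQ]⟩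

lemma poly_mul {φ ψ : Matrix (Fin N) (Fin N) 𝕂 → Matrix (Fin N) (Fin N) 𝕂}
    (h1 : IsPolyMap φ) (h2 : IsPolyMap ψ) : IsPolyMap (φ * ψ) := by
  obtain ⟨P, hP⟩ := h1
  obtain ⟨Q, hQ⟩ := h2
  exact ⟨fun rc => ∑ k, P (rc.1, k) * Q (k, rc.2), fun x r c => by
    simp [hP, hQ, Matrix.mul_apply]⟩

lemma poly_sum {ι : Type*} (s : Finset ι)
    (φ : ι → Matrix (Fin N) (Fin N) 𝕂 → Matrix (Fin N) (Fin N) 𝕂)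
    (h1 : ∀ i ∈ s, IsPolyMap (φ i)) : IsPolyMap (∑ i ∈ s, φ i) :=
  Finset.sum_induction φ IsPolyMap (fun _ _ => poly_add) (poly_const 0) h1

lemma poly_lin (L : Matrix (Fin N) (Fin N) 𝕂 →ₗ[𝕂] Matrix (Fin N) (Fin N) 𝕂)
    {φ : Matrix (Fin N) (Fin N) 𝕂 → Matrix (Fin N) (Fin N) 𝕂}
    (h1 : IsPolyMap φ) : IsPolyMap (fun x => L (φ x)) := by
  obtain ⟨P, hP⟩ := h1
  refine ⟨fun rc => ∑ i, ∑ j, P (i, j) * MvPolynomial.C (L (Matrix.single i j 1) rc.1 rc.2),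
    fun x r c => ?_⟩
  change L (φ x) r c = _
  rw [show L (φ x) = L (∑ i, ∑ j, Matrix.single i j (φ x i j)) from
    congrArg L (Matrix.matrix_eq_sum_single (φ x))]
  have : ∀ i j, Matrix.single i j (φ x i j) = φ x i j • Matrix.single i j (1 : 𝕂) := by
    intro i j; simp
  simp only [map_sum, Matrix.sum_apply]
  refine Finset.sum_congr rfl fun i _ => Finset.sum_congr rfl fun j _ => ?_
  rw [this, map_smul, Matrix.smul_apply, hP, map_mul, MvPolynomial.eval_C, smul_eq_mul]

/-- Homogeneous polynomial maps of weight `w` and degree `n`. -/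
def Hmg (e h : Matrix (Fin N) (Fin N) 𝕂) (w : 𝕂) (n : ℕ)
    (φ : Matrix (Fin N) (Fin N) 𝕂 → Matrix (Fin N) (Fin N) 𝕂) : Prop :=
  IsPolyMap φ ∧ (∀ z ∈ negEvenPart h, φ (e + z) ∈ gSpace h w) ∧
    ∀ t ∈ gSpace h (0 : 𝕂), ∀ lam : 𝕂, φ (e + lam • t) = lam ^ n • φ (e + t)

variable {e h : Matrix (Fin N) (Fin N) 𝕂}

lemma hmg_zero (w : 𝕂) (n : ℕ) : Hmg e h w n 0 :=
  ⟨poly_const 0, fun _ _ => by simp, fun _ _ _ => by simp⟩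

lemma hmg_one : Hmg e h 0 0 1 :=
  ⟨poly_const 1, fun _ _ => by simpa using one_g, fun _ _ _ => by simp⟩

lemma hmg_add {w : 𝕂} {n : ℕ} {φ ψ : Matrix (Fin N) (Fin N) 𝕂 → Matrix (Fin N) (Fin N) 𝕂}
    (h1 : Hmg e h w n φ) (h2 : Hmg e h w n ψ) : Hmg e h w n (φ + ψ) :=
  ⟨poly_add h1.1 h2.1, fun z hz => add_mem (h1.2.1 z hz) (h2.2.1 z hz), fun t ht lam => by
    simp [h1.2.2 t ht lam, h2.2.2 t ht lam]⟩

lemma hmg_mul {w w' : 𝕂} {n n' : ℕ}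
    {φ ψ : Matrix (Fin N) (Fin N) 𝕂 → Matrix (Fin N) (Fin N) 𝕂}
    (h1 : Hmg e h w n φ) (h2 : Hmg e h w' n' ψ) : Hmg e h (w + w') (n + n') (φ * ψ) :=
  ⟨poly_mul h1.1 h2.1, fun z hz => mul_g (h1.2.1 z hz) (h2.2.1 z hz), fun t ht lam => by
    simp [h1.2.2 t ht lam, h2.2.2 t ht lam, pow_add, smul_smul, mul_comm]⟩

lemma hmg_lin {w w' : 𝕂} {n : ℕ}
    (L : Matrix (Fin N) (Fin N) 𝕂 →ₗ[𝕂] Matrix (Fin N) (Fin N) 𝕂)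
    (hL : ∀ z ∈ gSpace h w, L z ∈ gSpace h w')
    {φ : Matrix (Fin N) (Fin N) 𝕂 → Matrix (Fin N) (Fin N) 𝕂}
    (h1 : Hmg e h w n φ) : Hmg e h w' n (fun x => L (φ x)) :=
  ⟨poly_lin L h1.1, fun z hz => hL _ (h1.2.1 z hz), fun t ht lam => by
    simp [h1.2.2 t ht lam]⟩

/-- Graded polynomials in a formal variable, with coefficients polynomial maps. -/
def Gr (e h : Matrix (Fin N) (Fin N) 𝕂) (w : 𝕂)
    (X : Polynomial (Matrix (Fin N) (Fin N) 𝕂 → Matrix (Fin N) (Fin N) 𝕂)) : Prop :=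
  ∀ n : ℕ, Hmg e h (w - 2 * n) n (X.coeff n)

lemma gr_add {w : 𝕂} {X Y : Polynomial (Matrix (Fin N) (Fin N) 𝕂 → Matrix (Fin N) (Fin N) 𝕂)}
    (hX : Gr e h w X) (hY : Gr e h w Y) : Gr e h w (X + Y) := fun n => by
  rw [Polynomial.coeff_add]; exact hmg_add (hX n) (hY n)

lemma gr_zero (w : 𝕂) : Gr e h w 0 := fun n => by
  rw [Polynomial.coeff_zero]; exact hmg_zero _ _

lemma gr_sum {ι : Type*} (s : Finset ι) {w : 𝕂}
    {X : ι → Polynomial (Matrix (Fin N) (Fin N) 𝕂 → Matrix (Fin N) (Fin N) 𝕂)}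
    (hX : ∀ i ∈ s, Gr e h w (X i)) : Gr e h w (∑ i ∈ s, X i) :=
  Finset.sum_induction X (Gr e h w) (fun _ _ => gr_add) (gr_zero w) hX

lemma gr_mul {w w' : 𝕂}
    {X Y : Polynomial (Matrix (Fin N) (Fin N) 𝕂 → Matrix (Fin N) (Fin N) 𝕂)}
    (hX : Gr e h w X) (hY : Gr e h w' Y) : Gr e h (w + w') (X * Y) := fun n => by
  rw [Polynomial.coeff_mul]
  refine Finset.sum_induction _ (Hmg e h (w + w' - 2 * n) n) (fun _ _ => hmg_add) (hmg_zero _ _) ?_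
  rintro ⟨i, j⟩ hij
  rw [Finset.HasAntidiagonal.mem_antidiagonal] at hij
  have := hmg_mul (hX i) (hY j)
  simp only at hij
  subst hij
  convert this using 1
  push_cast; ring

lemma gr_monomial {w : 𝕂} {n : ℕ} {φ : Matrix (Fin N) (Fin N) 𝕂 → Matrix (Fin N) (Fin N) 𝕂}
    (hφ : Hmg e h (w - 2 * n) n φ) : Gr e h w (Polynomial.monomial n φ) := fun m => by
  rw [Polynomial.coeff_monomial]
  split_ifs with hnm
  · subst hnm; exact hφ
  · exact hmg_zero _ _

lemma gr_one : Gr e h 0 1 := by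
  rw [← Polynomial.monomial_zero_one]
  exact gr_monomial (by simpa using hmg_one)

lemma gr_pow {X : Polynomial (Matrix (Fin N) (Fin N) 𝕂 → Matrix (Fin N) (Fin N) 𝕂)}
    (hX : Gr e h 0 X) (n : ℕ) : Gr e h 0 (X ^ n) := by
  induction n with
  | zero => simpa using gr_one
  | succ n ih => rw [pow_succ]; simpa using gr_mul ih hX

/-- Evaluate coefficients at `y` and the formal variable at `1`. -/
noncomputable def ev (y : Matrix (Fin N) (Fin N) 𝕂) :
    Polynomial (Matrix (Fin N) (Fin N) 𝕂 → Matrix (Fin N) (Fin N) 𝕂) →+*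
      Matrix (Fin N) (Fin N) 𝕂 :=
  Polynomial.eval₂RingHom' (Pi.evalRingHom (fun _ => Matrix (Fin N) (Fin N) 𝕂) y) 1
    (fun _ => Commute.one_right _)

lemma ev_monomial (y : Matrix (Fin N) (Fin N) 𝕂) (n : ℕ)
    (φ : Matrix (Fin N) (Fin N) 𝕂 → Matrix (Fin N) (Fin N) 𝕂) :
    ev y (Polynomial.monomial n φ) = φ y := by
  simp [ev, Polynomial.eval₂RingHom']

lemma ev_eq (y : Matrix (Fin N) (Fin N) 𝕂)
    (X : Polynomial (Matrix (Fin N) (Fin N) 𝕂 → Matrix (Fin N) (Fin N) 𝕂)) (m : ℕ)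
    (hm : X.natDegree < m) : ev y X = ∑ n ∈ Finset.range m, X.coeff n y := by
  conv_lhs => rw [X.as_sum_range' m hm]
  rw [map_sum]
  simp only [ev_monomial]

/-- Low-order coefficients of the conjugate. -/
lemma coeff_conj {R : Type*} [Ring R] (X : Polynomial R) (u : R) (d : ℕ) (hd : 0 < d) (K : ℕ)
    (n : ℕ) (hn : n ≤ d) :
    ((1 + Polynomial.monomial d u) * X *
      ∑ i ∈ Finset.range (K + 2), (-Polynomial.monomial d u) ^ i).coeff n =
    X.coeff n + if n = d then u * X.coeff 0 - X.coeff 0 * u else 0 := by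
  set U := Polynomial.monomial d u with hU
  set V' := ∑ i ∈ Finset.range K, (-U) ^ i
  have hUX : ∀ Y : Polynomial R, U * Y = Polynomial.X ^ d * (Polynomial.C u * Y) := fun Y => by
    rw [hU, ← Polynomial.C_mul_X_pow_eq_monomial, ← mul_assoc, Polynomial.X_pow_mul]
  have hXU : U = Polynomial.C u * Polynomial.X ^ d := by
    rw [hU, ← Polynomial.C_mul_X_pow_eq_monomial]
  have hV : ∑ i ∈ Finset.range (K + 2), (-U) ^ i = 1 - U + U * U * V' := by
    rw [add_comm K 2, Finset.sum_range_add]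
    simp only [pow_add, ← Finset.mul_sum, Finset.sum_range_succ, Finset.sum_range_zero]
    noncomm_ring
  have hexp : (1 + U) * X * (1 - U + U * U * V') = X + (U * X - X * U) -
      U * (X * U) + (X + U * X) * (U * (U * V')) := by noncomm_ring
  have hc : ∀ Y Z : Polynomial R, Y * (Polynomial.X ^ d * Z) = Polynomial.X ^ d * (Y * Z) :=
    fun Y Z => by rw [← mul_assoc, ← Polynomial.X_pow_mul, mul_assoc]
  have e3 : X * U = Polynomial.X ^ d * (X * Polynomial.C u) := by
    rw [hXU, ← mul_assoc, Polynomial.X_pow_mul]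
  have e1 : U * (X * U) = Polynomial.X ^ (2 * d) * (Polynomial.C u * (X * Polynomial.C u)) := by
    rw [e3, hUX, hc, two_mul, pow_add, mul_assoc]
  have e2 : (X + U * X) * (U * (U * V')) = Polynomial.X ^ (2 * d) *
      ((X + U * X) * (Polynomial.C u * (Polynomial.C u * V'))) := by
    rw [hUX (U * V'), hUX V', hc, hc, hc, two_mul, pow_add, mul_assoc]
  rw [hV, hexp, e1, e2, hUX X, e3]
  simp only [Polynomial.coeff_add, Polynomial.coeff_sub, Polynomial.coeff_X_pow_mul']
  rw [if_neg (by omega : ¬ 2 * d ≤ n), if_neg (by omega : ¬ 2 * d ≤ n)]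
  by_cases hnd : n = d
  · subst hnd; simp
  · rw [if_neg (by omega), if_neg (by omega)]; simp [hnd]


lemma g_le_neg {h : Matrix (Fin N) (Fin N) 𝕂} (n : ℕ) (hn : 1 ≤ n) :
    gSpace h (2 - 2 * n : 𝕂) ≤ negEvenPart h := by
  have := le_iSup (fun i : {i : ℤ // i ≤ 0} => gSpace h ((2 * i.1 : ℤ) : 𝕂)) ⟨1 - n, by omega⟩
  refine le_trans (le_of_eq ?_) this
  congr 1
  push_cast; ring

/-- The projections onto the weight spaces. -/
noncomputable def proj (h : Matrix (Fin N) (Fin N) 𝕂) (n : ℕ) :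
    Matrix (Fin N) (Fin N) 𝕂 →ₗ[𝕂] Matrix (Fin N) (Fin N) 𝕂 :=
  Polynomial.aeval (adL h)
    (Lagrange.basis (Finset.range (N + 1)) (fun m : ℕ => (2 - 2 * m : 𝕂)) n)

lemma proj_apply [CharZero 𝕂] {h : Matrix (Fin N) (Fin N) 𝕂} {n m : ℕ} (hn : n ≤ N) (hm : m ≤ N)
    {z : Matrix (Fin N) (Fin N) 𝕂} (hz : z ∈ gSpace h (2 - 2 * m : 𝕂)) :
    proj h n z = if n = m then z else 0 := by
  have hv : Set.InjOn (fun m : ℕ => (2 - 2 * m : 𝕂)) (Finset.range (N + 1)) := by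
    intro a _ b _ hab
    simpa using hab
  by_cases hz0 : z = 0
  · simp [hz0]
  have := Module.End.aeval_apply_of_hasEigenvector (f := adL h)
    (p := Lagrange.basis (Finset.range (N + 1)) (fun m : ℕ => (2 - 2 * m : 𝕂)) n)
    (μ := (2 - 2 * m : 𝕂)) (x := z) ⟨Module.End.mem_eigenspace_iff.mpr (mem_g'.mp hz), hz0⟩
  rw [proj, this]
  split_ifs with hnm
  · subst hnm
    rw [Lagrange.eval_basis_self hv (by simp; omega), one_smul]
  · rw [Lagrange.eval_basis_of_ne (v := fun m : ℕ => (2 - 2 * m : 𝕂)) hnm (by simp; omega),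
      zero_smul]

/-- The invariant of the iteration. -/
def Inv (e h f : Matrix (Fin N) (Fin N) 𝕂) (d : ℕ)
    (X : Polynomial (Matrix (Fin N) (Fin N) 𝕂 → Matrix (Fin N) (Fin N) 𝕂)) : Prop :=
  Gr e h 2 X ∧ (∀ z ∈ negEvenPart h, X.coeff 0 (e + z) = e) ∧
  (∀ n, 1 ≤ n → n ≤ d → ∀ z ∈ negEvenPart h,
    X.coeff n (e + z) * f = f * X.coeff n (e + z)) ∧
  ∀ z ∈ negEvenPart h, ∃ g : (Matrix (Fin N) (Fin N) 𝕂)ˣ,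
        ev (e + z) X = (g : Matrix (Fin N) (Fin N) 𝕂) * (e + z) *
          ((g⁻¹ : (Matrix (Fin N) (Fin N) 𝕂)ˣ) : Matrix (Fin N) (Fin N) 𝕂)

section Triple2
variable [CharZero 𝕂] {e h f : Matrix (Fin N) (Fin N) 𝕂}

lemma g_vanish' (hhe : h * e - e * h = (2 : 𝕂) • e)
    (hhf : h * f - f * h = (-2 : 𝕂) • f)
    (hef : e * f - f * e = h)
    (n : ℕ) (hn : N < n) {z : Matrix (Fin N) (Fin N) 𝕂}
    (hz : z ∈ gSpace h (2 - 2 * n : 𝕂)) : z = 0 := by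
  refine g_vanish hhe hhf hef (n - 1) (by omega) ?_
  convert hz using 2
  rw [Nat.cast_sub (by omega)]; push_cast; ring

lemma neg_ind (hhe : h * e - e * h = (2 : 𝕂) • e)
    (hhf : h * f - f * h = (-2 : 𝕂) • f)
    (hef : e * f - f * e = h)
    {P : Matrix (Fin N) (Fin N) 𝕂 → Prop} {z : Matrix (Fin N) (Fin N) 𝕂}
    (hz : z ∈ negEvenPart h)
    (h1 : ∀ n, 1 ≤ n → n ≤ N → ∀ z ∈ gSpace h (2 - 2 * n : 𝕂), P z) (h0 : P 0)
    (hadd : ∀ x y, P x → P y → P (x + y)) : P z := by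
  refine Submodule.iSup_induction _ (motive := P) hz ?_ h0 hadd
  rintro ⟨i, hi⟩ x hx
  obtain ⟨n, hn⟩ : ∃ n : ℕ, i = 1 - n := ⟨(1 - i).toNat, by omega⟩
  have hx' : x ∈ gSpace h (2 - 2 * n : 𝕂) := by
    convert hx using 2
    subst hn; push_cast; ring
  by_cases hnN : n ≤ N
  · exact h1 n (by omega) hnN x hx'
  · rw [g_vanish' hhe hhf hef n (by omega) hx']; exact h0

lemma base (hhe : h * e - e * h = (2 : 𝕂) • e)
    (hhf : h * f - f * h = (-2 : 𝕂) • f)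
    (hef : e * f - f * e = h)
    : ∃ X, Inv e h f 0 X := by
  have he : e ∈ gSpace h (2 - 2 * (0 : ℕ) : 𝕂) := by
    rw [mem_g, hhe]; simp
  have hpe : ∀ n, 1 ≤ n → n ≤ N → ∀ z, proj h n (e + z) = proj h n z := fun n h1 hn z => by
    rw [map_add, proj_apply hn (Nat.zero_le _) he, if_neg (by omega), zero_add]
  refine ⟨Polynomial.monomial 0 (fun _ => e) +
    ∑ n ∈ Finset.Icc 1 N, Polynomial.monomial n (fun x => proj h n x), ?_, ?_, ?_, ?_⟩
  · refine gr_add (gr_monomial ⟨poly_const e, fun _ _ => he, fun _ _ _ => by simp⟩)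
      (gr_sum _ fun n hn => ?_)
    rw [Finset.mem_Icc] at hn
    refine gr_monomial ⟨poly_lin _ poly_id, fun z hz => ?_, fun t ht lam => ?_⟩
    · change proj h n (e + z) ∈ _
      rw [hpe n hn.1 hn.2]
      refine neg_ind hhe hhf hef (P := fun z => proj h n z ∈ gSpace h (2 - 2 * n : 𝕂)) hz ?_
        (by simp) (fun x y hx hy => by rw [map_add]; exact add_mem hx hy)
      intro m _ hm z hz
      rw [proj_apply hn.2 hm hz]
      split_ifs with h
      · subst h; exact hz
      · exact zero_mem _
    · simp only [hpe n hn.1 hn.2, map_smul]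
      rw [proj_apply (m := 1) hn.2 (by omega) (by simpa using ht)]
      split_ifs with h
      · subst h; simp
      · simp
  · intro z hz
    have : ∀ n ∈ Finset.Icc 1 N, (Polynomial.monomial n
        (fun x : Matrix (Fin N) (Fin N) 𝕂 => proj h n x)).coeff 0 = 0 := fun n hn => by
      rw [Polynomial.coeff_monomial, if_neg (by simp at hn; omega)]
    rw [Polynomial.coeff_add, Polynomial.finsetSum_coeff, Finset.sum_eq_zero this]
    simp
  · intro n h1 h2; omega
  · intro z hz
    refine ⟨1, ?_⟩
    simp only [map_add, map_sum, ev_monomial, inv_one, Units.val_one, one_mul, mul_one]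
    rw [add_right_inj]
    have : ∀ n ∈ Finset.Icc 1 N, proj h n e + proj h n z = proj h n z := fun n hn => by
      rw [Finset.mem_Icc] at hn
      rw [← map_add, hpe n hn.1 hn.2]
    rw [Finset.sum_congr rfl this]
    refine neg_ind hhe hhf hef (P := fun z => ∑ n ∈ Finset.Icc 1 N, proj h n z = z) hz ?_
        (by simp) (fun x y hx hy => by simp only [map_add, Finset.sum_add_distrib, hx, hy])
    intro m hm1 hm z hz
    rw [Finset.sum_congr rfl (g := fun n => if n = m then z else 0)
      (fun n hn => proj_apply (Finset.mem_Icc.mp hn).2 hm hz)]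
    simp [hm1, hm]

lemma step (hhe : h * e - e * h = (2 : 𝕂) • e)
    (hhf : h * f - f * h = (-2 : 𝕂) • f)
    (hef : e * f - f * e = h)
    (d : ℕ) (X : Polynomial (Matrix (Fin N) (Fin N) 𝕂 → Matrix (Fin N) (Fin N) 𝕂))
    (hX : Inv e h f d X) : ∃ X', Inv e h f (d + 1) X' := by
  obtain ⟨hG, h0, hf, hc⟩ := hX
  obtain ⟨L, hL⟩ := exists_L hhe hhf hef (d + 1) (Nat.succ_pos d)
  set u : Matrix (Fin N) (Fin N) 𝕂 → Matrix (Fin N) (Fin N) 𝕂 :=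
    fun x => L (X.coeff (d + 1) x) with hu
  have hu1 : Hmg e h (0 - 2 * (d + 1 : ℕ)) (d + 1) u :=
    hmg_lin L (fun z hz => by simpa using (hL z hz).1) (hG (d + 1))
  set U := Polynomial.monomial (d + 1) u with hU
  have hGU : Gr e h 0 U := gr_monomial hu1
  have hGU' : Gr e h 0 (-U) := by
    rw [hU, ← Polynomial.monomial_neg]
    have h1 := hmg_lin (w' := (0 - 2 * ((d + 1 : ℕ) : 𝕂)))
      (-LinearMap.id : Matrix (Fin N) (Fin N) 𝕂 →ₗ[𝕂] Matrix (Fin N) (Fin N) 𝕂)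
      (fun z hz => by rw [LinearMap.neg_apply]; exact neg_mem hz) hu1
    exact gr_monomial h1
  have hcoeff := fun n hn => coeff_conj X u (d + 1) (Nat.succ_pos d) N n hn
  rw [← hU] at hcoeff
  refine ⟨(1 + U) * X * ∑ i ∈ Finset.range (N + 2), (-U) ^ i, ?_, ?_, ?_, ?_⟩
  · have := gr_mul (gr_mul (gr_add gr_one hGU) hG)
      (gr_sum (Finset.range (N + 2)) fun i _ => gr_pow hGU' i)
    simpa using this
  · intro z hz
    rw [hcoeff 0 (by omega), if_neg (by omega), add_zero, h0 z hz]
  · intro n hn1 hn z hz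
    rw [hcoeff n hn]
    split_ifs with hnd
    · subst hnd
      have := (hL _ ((hG (d + 1)).2.1 z hz)).2
      simpa [h0 z hz, hu] using this
    · rw [add_zero]; exact hf n hn1 (by omega) z hz
  · intro z hz
    obtain ⟨g, hg⟩ := hc z hz
    have hnil : (-(u (e + z))) ^ (N + 2) = 0 := by
      have h1 := pow_g (neg_mem (hu1.2.1 z hz)) (N + 2)
      refine g_vanish hhe hhf hef ((N + 2) * (d + 1)) (by nlinarith) ?_
      convert h1 using 2
      push_cast; ring
    have hV1 : (1 + u (e + z)) * ∑ i ∈ Finset.range (N + 2), (-(u (e + z))) ^ i = 1 := by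
      have := mul_neg_geom_sum (-(u (e + z))) (N + 2)
      rwa [sub_neg_eq_add, hnil, sub_zero] at this
    have hV2 : (∑ i ∈ Finset.range (N + 2), (-(u (e + z))) ^ i) * (1 + u (e + z)) = 1 := by
      have := geom_sum_mul_neg (-(u (e + z))) (N + 2)
      rwa [sub_neg_eq_add, hnil, sub_zero] at this
    refine ⟨⟨_, _, hV1, hV2⟩ * g, ?_⟩
    rw [map_mul, map_mul, map_add, map_one, map_sum, hg]
    simp only [map_pow, map_neg, hU, ev_monomial, mul_inv_rev, Units.val_mul, Units.inv_mk,
      mul_assoc]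

lemma all_steps (hhe : h * e - e * h = (2 : 𝕂) • e)
    (hhf : h * f - f * h = (-2 : 𝕂) • f)
    (hef : e * f - f * e = h)
    (d : ℕ) : ∃ X, Inv e h f d X := by
  induction d with
  | zero => exact base hhe hhf hef
  | succ d ih =>
    obtain ⟨X, hX⟩ := ih
    exact step hhe hhf hef d X hX

end Triple2
end Mat

end KatsyloProof

theorem katsylo_contraction_map_exists {𝕂 : Type*} [Field 𝕂] [IsAlgClosed 𝕂] [CharZero 𝕂]
    {N : ℕ} (e h f : Matrix (Fin N) (Fin N) 𝕂)
    (hhe : h * e - e * h = (2 : 𝕂) • e)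
    (hhf : h * f - f * h = (-2 : 𝕂) • f)
    (hef : e * f - f * e = h) :
    ∃ (ε : Matrix (Fin N) (Fin N) 𝕂 → Matrix (Fin N) (Fin N) 𝕂)
      (P : ℤ → Matrix (Fin N) (Fin N) 𝕂 → Matrix (Fin N) (Fin N) 𝕂),
      -- `ε` is a polynomial map
      IsPolyMap ε ∧
      -- `ε` maps `e + ⊕_{i≤0} g(2i,h)` into `e + (g^f ∩ ⊕_{i≤0} g(2i,h))`
      (∀ z ∈ negEvenPart h,
        ε (e + z) - e ∈ negEvenPart h ∧ (ε (e + z) - e) * f = f * (ε (e + z) - e)) ∧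
      -- (i) `ε (e+z)` is conjugate to `e+z`
      (∀ z ∈ negEvenPart h, ∃ g : (Matrix (Fin N) (Fin N) 𝕂)ˣ,
        ε (e + z) = (g : Matrix (Fin N) (Fin N) 𝕂) * (e + z) *
          ((g⁻¹ : (Matrix (Fin N) (Fin N) 𝕂)ˣ) : Matrix (Fin N) (Fin N) 𝕂)) ∧
      -- (ii) on `e + g(0,h)`, `ε` decomposes as `e + Σ_{j ≤ 0} P_j` with `P_j` valued in
      -- `g(2j, h)` and either zero or homogeneous of degree `−j+1`
      (∀ j : ℤ, j ≤ 0 → ∀ t ∈ gSpace h (0 : 𝕂), P j t ∈ gSpace h ((2 * j : ℤ) : 𝕂)) ∧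
      (∀ t ∈ gSpace h (0 : 𝕂),
        ε (e + t) = e + ∑ j ∈ Finset.Icc (-(N : ℤ)) 0, P j t) ∧
      (∀ j : ℤ, j ≤ 0 →
        (∀ t ∈ gSpace h (0 : 𝕂), P j t = 0) ∨
        (∀ t ∈ gSpace h (0 : 𝕂), ∀ lam : 𝕂,
          P j (lam • t) = lam ^ (1 - j).toNat • P j t)) := by
  obtain ⟨X, hG, h0, hf, hc⟩ := KatsyloProof.all_steps hhe hhf hef N
  have hvan : ∀ z ∈ negEvenPart h, ∀ n, N < n → X.coeff n (e + z) = 0 := fun z hz n hn =>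
    KatsyloProof.g_vanish' hhe hhf hef n hn ((hG n).2.1 z hz)
  have hsum : ∀ z ∈ negEvenPart h,
      KatsyloProof.ev (e + z) X = e + ∑ n ∈ Finset.Icc 1 N, X.coeff n (e + z) := by
    intro z hz
    rw [KatsyloProof.ev_eq (e + z) X (X.natDegree + N + 1) (by omega), Finset.sum_range_succ',
      h0 z hz, add_comm]
    congr 1
    rw [Finset.sum_subset (s₁ := Finset.Icc 1 N) (s₂ := Finset.Ico 1 (X.natDegree + N + 1))
      (by intro n; simp only [Finset.mem_Icc, Finset.mem_Ico]; omega)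
      (by
        intro n h1 h2
        simp only [Finset.mem_Icc, Finset.mem_Ico] at h1 h2
        exact hvan z hz n (by omega)), Finset.sum_Ico_eq_sum_range]
    simp [add_comm]
  have ht0 : ∀ t ∈ gSpace h (0 : 𝕂), t ∈ negEvenPart h := fun t ht =>
    KatsyloProof.g_le_neg 1 le_rfl (by simpa using ht)
  refine ⟨fun y => KatsyloProof.ev y X, fun j t => X.coeff (1 - j).toNat (e + t),
    ?_, ?_, hc, ?_, ?_, ?_⟩
  · have h1 := KatsyloProof.poly_sum (Finset.range (X.natDegree + 1)) (fun n => X.coeff n)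
      (fun n _ => (hG n).1)
    convert h1 using 1
    funext y
    rw [KatsyloProof.ev_eq y X _ (Nat.lt_succ_self _), Finset.sum_apply]
  · intro z hz
    simp only [hsum z hz, add_sub_cancel_left]
    refine ⟨Submodule.sum_mem _ fun n hn => ?_, ?_⟩
    · exact KatsyloProof.g_le_neg n (Finset.mem_Icc.mp hn).1 ((hG n).2.1 z hz)
    · rw [Finset.sum_mul, Finset.mul_sum]
      exact Finset.sum_congr rfl fun n hn =>
        hf n (Finset.mem_Icc.mp hn).1 (Finset.mem_Icc.mp hn).2 z hz
  · intro j hj t ht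
    obtain ⟨n, rfl⟩ : ∃ n : ℕ, j = 1 - n := ⟨(1 - j).toNat, by omega⟩
    have := (hG n).2.1 t (ht0 t ht)
    simp only [sub_sub_cancel, Int.toNat_natCast]
    convert this using 2
    push_cast; ring
  · intro t ht
    simp only [hsum t (ht0 t ht)]
    congr 1
    rw [Finset.sum_subset (s₁ := Finset.Icc 1 N) (s₂ := Finset.Icc 1 (N + 1))
      (by intro n; simp only [Finset.mem_Icc]; omega)
      (by
        intro n h1 h2
        simp only [Finset.mem_Icc] at h1 h2
        exact hvan t (ht0 t ht) n (by omega))]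
    refine Finset.sum_bij' (fun n _ => (1 - n : ℤ)) (fun j _ => (1 - j).toNat) ?_ ?_ ?_ ?_ ?_
    · intro n hn; simp only [Finset.mem_Icc] at hn ⊢; omega
    · intro n hn; simp only [Finset.mem_Icc] at hn ⊢; omega
    · intro n hn; simp
    · intro n hn; simp only [Finset.mem_Icc] at hn ⊢; omega
    · intro n hn; simp
  · intro j hj
    right
    intro t ht lam
    exact (hG _).2.2 t ht lam
end
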